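/- arXiv:0807.1967 — 6 statements merged into one kernel-verified Lean document; each statement's English description precedes it below -/
import Mathlib

section
/- Let D ⊆ ℝ[X₁,…,Xₙ]\{0} be a multiplicatively closed set with 1 ∈ D, let S ⊆ ℝ[X₁,…,Xₙ] be finite with K_S ≠ ∅, and assume there exist p ∈ D and an integer k ≥ 1 such that p ≥ 1 on K_S and k·p − (X₁²+⋯+Xₙ²) ≥ 0 on K_S. Then every f ∈ ℝ[X₁,…,Xₙ] that is nonnegative on K_S \ ⋃_{d∈D} Z(d) belongs to the closure of T_S^E in the finest locally convex topology on E = D⁻¹ℝ[X₁,…,Xₙ]; equivalently, L(f/1) ≥ 0 for every linear functional L on E with L(T_S^E) ⊆ [0,∞). -/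
/-!
Let `L` be a linear functional on `E = D⁻¹ℝ[X]` that is nonnegative on the preordering generated by
the `gᵢ`. The idea is to represent `L` by a measure on a compactification of `K_S` and to show that
the zero sets of the elements of `D`, being units of `E`, are null sets for this measure.

*Weak Positivstellensatz* (`exists_point_of_neg_one_notMem`). If `-1` is not in the preordering
generated by finitely many polynomials, the inequalities have a common real solution. The
coefficients and variables generate a countable ring with a proper preordering, which maps to a
countable real closed field `R` (`exists_realClosed`). As the hyperreals are real closed and
countably saturated, `R` embeds into them (`exists_ordered_embedding`), compatibly with the real
coefficients. This gives a hyperreal solution, and almost every component of it is a real one.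

*Bounded fractions* (`nonneg_of_bounded`). If `|c| < p ^ j` on `K_S`, the Positivstellensatz gives
an identity `t - y² t = 1 + s` for `y = c / p ^ j`, with `s` and `t` in the preordering of `E`. Hence
the moments `L (y ^ (2 k))` are bounded in `k`, and since they are convex in `k` this forces
`L (y²) ≤ L 1`, so `L y ≤ L 1`. Consequently `L` is nonnegative on every fraction `a / p ^ j` that
is nonnegative and bounded on `K_S`.

*Measure* (`exists_measure_of_nonneg`). The growth condition on `p` makes the image of `K_S` under
`x ↦ (1 / p x, x / p x)` bounded. Let `K` be its closure; by the Riesz–Markov theorem and polynomial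
approximation, `L` is integration against a measure `ν` on `K` for polynomials in `1 / p`, `Xᵢ / p`.
Replacing `L` by `L (p ^ (2 j) · )` and `f` by `f / p ^ (2 j)`, one may assume `f` to be of this form.

*Null sets* (`measure_closedBall_le`, `measure_eq_zero_of_density`). If `w` becomes a unit in `E`
with inverse `v`, the Cauchy–Schwarz inequality gives `(∫ h)² ≤ L (v ^ (2 N)) * ∫ h² w ^ (2 N)`. For
`h` a bump function at a zero `y` of `w` this yields `ν (B(y, r)) ≤ c * r ^ N`, for every `N`. When
`N` exceeds the dimension, a covering argument shows that a set consisting of such points is a null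
set, even if the `w` depend on the point. Applied to `1 / p`, whose zeros are the points at infinity
of `K`, and to the elements of `D`, this shows that `f ≥ 0` holds `ν`-almost everywhere.
-/

open MvPolynomial MeasureTheory

noncomputable section

/-- The Euclidean (weak) topology on a real vector space; for finite-dimensional
spaces this is the usual Euclidean topology. -/
def weakTop (V : Type*) [AddCommGroup V] [Module ℝ V] : TopologicalSpace V :=
  ⨅ L : V →ₗ[ℝ] ℝ, TopologicalSpace.induced L inferInstance

/-- The topology of finitely open sets: `O` is open iff its intersection with every
finite-dimensional subspace `U` is open in the Euclidean topology of `U`. -/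
def finTop (E : Type*) [AddCommGroup E] [Module ℝ E] : TopologicalSpace E where
  IsOpen O := ∀ U : Submodule ℝ E, FiniteDimensional ℝ U →
    @IsOpen _ (weakTop U) ((Subtype.val : U → E) ⁻¹' O)
  isOpen_univ := by
    intro U _
    letI := weakTop U
    rw [Set.preimage_univ]
    exact isOpen_univ
  isOpen_inter := by
    intro s t hs ht U hU
    letI := weakTop U
    rw [Set.preimage_inter]
    exact (hs U hU).inter (ht U hU)
  isOpen_sUnion := by
    intro s hs U hU
    letI := weakTop U
    rw [Set.preimage_sUnion]
    exact isOpen_biUnion fun t ht => hs t ht U hU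

/-- The closure of a convex cone in the finest locally convex topology, via the dual
characterization: `x` lies in the closure iff `L x ≥ 0` for every linear functional `L`
nonnegative on the cone. -/
def dualClosure {E : Type*} [AddCommGroup E] [Module ℝ E] (C : Set E) : Set E :=
  {x | ∀ L : E →ₗ[ℝ] ℝ, (∀ c ∈ C, 0 ≤ L c) → 0 ≤ L x}

/-- The preordering generated by `g 1, …, g m` in a commutative ring: all finite sums
of elements `σ • g₁^ν₁ ⋯ g_m^ν_m` with `σ` a sum of squares and `ν ∈ {0,1}^m`. -/
def genPreordering {E : Type*} [CommRing E] {m : ℕ} (g : Fin m → E) : Set E :=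
  {x | ∃ σ : (Fin m → Bool) → E, (∀ ν, IsSumSq (σ ν)) ∧
    x = ∑ ν : Fin m → Bool, σ ν * ∏ j, (if ν j then g j else 1)}

/-- The basic closed semialgebraic set determined by `g 1, …, g m`. -/
def KS {n m : ℕ} (g : Fin m → MvPolynomial (Fin n) ℝ) : Set (Fin n → ℝ) :=
  {x | ∀ i, 0 ≤ eval x (g i)}

/-- The real zero set of a polynomial. -/
def Zset {n : ℕ} (d : MvPolynomial (Fin n) ℝ) : Set (Fin n → ℝ) :=
  {x | eval x d = 0}

/-- `Pos^E(𝒳)`: elements of the localization having a representation `f/d` with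
`f·d ≥ 0 pointwise on 𝒳`. -/
def PosE {n : ℕ} (D : Submonoid (MvPolynomial (Fin n) ℝ)) (X : Set (Fin n → ℝ)) :
    Set (Localization D) :=
  {R | ∃ (f : MvPolynomial (Fin n) ℝ) (d : D), R = Localization.mk f d ∧
    ∀ x ∈ X, 0 ≤ eval x f * eval x (d : MvPolynomial (Fin n) ℝ)}


/-! ### Maximal preorderings and maximal real subfields -/

namespace PosStell

/-- A maximal proper preordering is an ordering of the ring: every element has a sign, and the
support `P ∩ -P` is a prime ideal. Enlarging `P` by an element `b ∉ P` gives `-1 = s + b t`, and two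
such identities multiply to one inside `P`. -/
theorem exists_maximal_preordering {A : Type*} [CommRing A] (T : Subsemiring A)
    (hsq : ∀ a : A, a * a ∈ T) (hneg : (-1 : A) ∉ T) :
    ∃ P : Subsemiring A, T ≤ P ∧ (-1 : A) ∉ P ∧ (∀ a, a ∈ P ∨ -a ∈ P) ∧
      (∀ a b, a * b ∈ P → -(a * b) ∈ P → (a ∈ P ∧ -a ∈ P) ∨ (b ∈ P ∧ -b ∈ P)) := by
  obtain ⟨P, hTP, hP⟩ := zorn_le_nonempty₀ {P : Subsemiring A | T ≤ P ∧ (-1 : A) ∉ P}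
    (by
      intro c hc hchain y hy
      refine ⟨sSup c, ⟨(hc hy).1.trans (le_sSup hy), ?_⟩, fun z hz => le_sSup hz⟩
      rw [Subsemiring.mem_sSup_of_directedOn ⟨y, hy⟩ hchain.directedOn]
      rintro ⟨s, hs, h⟩
      exact (hc hs).2 h) T ⟨le_rfl, hneg⟩
  refine ⟨P, hTP, hP.prop.2, ?_⟩
  have hsqP : ∀ a : A, a * a ∈ P := fun a => hTP (hsq a)
  -- enlarging `P` by an element not in `P` makes `-1` representable
  have key : ∀ b : A, b ∉ P → ∃ s ∈ P, ∃ t ∈ P, (-1 : A) = s + b * t := by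
    intro b hb
    by_contra hcon
    let Q : Subsemiring A :=
      { carrier := {x | ∃ s ∈ P, ∃ t ∈ P, x = s + b * t}
        zero_mem' := ⟨0, P.zero_mem, 0, P.zero_mem, by ring⟩
        one_mem' := ⟨1, P.one_mem, 0, P.zero_mem, by ring⟩
        add_mem' := by
          rintro _ _ ⟨s, hs, t, ht, rfl⟩ ⟨s', hs', t', ht', rfl⟩
          exact ⟨s + s', P.add_mem hs hs', t + t', P.add_mem ht ht', by ring⟩
        mul_mem' := by
          rintro _ _ ⟨s, hs, t, ht, rfl⟩ ⟨s', hs', t', ht', rfl⟩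
          exact ⟨s * s' + (b * b) * (t * t'),
            P.add_mem (P.mul_mem hs hs') (P.mul_mem (hsqP b) (P.mul_mem ht ht')),
            s * t' + t * s', P.add_mem (P.mul_mem hs ht') (P.mul_mem ht hs'), by ring⟩ }
    have hPQ : P ≤ Q := fun x hx => ⟨x, hx, 0, P.zero_mem, by ring⟩
    have hQ : Q ≤ P := hP.le_of_ge ⟨hTP.trans hPQ, hcon⟩ hPQ
    exact hb (hQ ⟨0, P.zero_mem, 1, P.one_mem, by ring⟩)
  refine ⟨fun a => ?_, fun a b hab hab' => ?_⟩
  swap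
  · have main : ∀ a b : A, a * b ∈ P → -(a * b) ∈ P → a ∈ P ∨ b ∈ P := by
      intro a b _ hab'
      by_contra hcon
      push Not at hcon
      obtain ⟨s, hs, t, ht, h1⟩ := key a hcon.1
      obtain ⟨s', hs', t', ht', h2⟩ := key b hcon.2
      apply hP.prop.2
      have : (-1 : A) = s + s' + s * s' + -(a * b) * (t * t') := by
        linear_combination (1 + s') * h1 - a * t * h2
      rw [this]
      exact P.add_mem (P.add_mem (P.add_mem hs hs') (P.mul_mem hs hs'))
        (P.mul_mem hab' (P.mul_mem ht ht'))
    have h1 := main a b hab hab'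
    have h2 := main (-a) b (by simpa using hab') (by simpa using hab)
    have h3 := main a (-b) (by simpa using hab') (by simpa using hab)
    have h4 := main (-a) (-b) (by simpa using hab) (by simpa using hab')
    tauto
  by_contra hcon
  push Not at hcon
  obtain ⟨s, hs, t, ht, h1⟩ := key a hcon.1
  obtain ⟨s', hs', t', ht', h2⟩ := key (-a) hcon.2
  apply hP.prop.2
  have : (-1 : A) = s + s' + s * s' + a * a * (t * t') := by
    linear_combination (1 + s') * h1 - (a * t) * h2
  rw [this]
  exact P.add_mem (P.add_mem (P.add_mem hs hs') (P.mul_mem hs hs'))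
    (P.mul_mem (hsqP a) (P.mul_mem ht ht'))

/-- The support `P ∩ -P` of a preordering `P` with `P ∪ -P` the whole ring. -/
def supp {A : Type*} [CommRing A] (P : Subsemiring A) (htot : ∀ a, a ∈ P ∨ -a ∈ P) : Ideal A where
  carrier := {a | a ∈ P ∧ -a ∈ P}
  zero_mem' := ⟨P.zero_mem, by simp⟩
  add_mem' := by
    rintro a b ⟨h1, h2⟩ ⟨h3, h4⟩
    exact ⟨P.add_mem h1 h3, by rw [neg_add]; exact P.add_mem h2 h4⟩
  smul_mem' := by
    rintro c a ⟨h1, h2⟩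
    rcases htot c with h | h
    · exact ⟨P.mul_mem h h1, by rw [smul_eq_mul, ← mul_neg]; exact P.mul_mem h h2⟩
    · refine ⟨?_, ?_⟩
      · have := P.mul_mem h h2; simpa using this
      · have := P.mul_mem h h1; simpa using this

theorem mem_supp {A : Type*} [CommRing A] {P : Subsemiring A} {htot : ∀ a, a ∈ P ∨ -a ∈ P}
    {a : A} : a ∈ supp P htot ↔ a ∈ P ∧ -a ∈ P := Iff.rfl


section RealClosed
open scoped Polynomial

variable {A : Type*} [CommRing A] {Ω : Type*} [Field Ω]

/-- The cone `∑ ρ(P) · K²` attached to a subfield `K` of `Ω`. -/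
def cone (P : Subsemiring A) (ρ : A →+* Ω) (K : Subfield Ω) : AddSubmonoid Ω :=
  AddSubmonoid.closure {w | ∃ p ∈ P, ∃ z ∈ K, w = ρ p * (z * z)}

/-- Over the fraction field of `A` modulo the support of `P` the cone generated by `P` is still
proper, since denominators can be cleared by squares. -/
theorem neg_one_notMem_cone_of_fractions (P : Subsemiring A) (hsq : ∀ a : A, a * a ∈ P)
    (ρ : A →+* Ω) (K : Subfield Ω)
    (hker : ∀ a, ρ a = 0 → -a ∈ P)
    (hker' : ∀ a, -(a * a) ∈ P → ρ a = 0)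
    (hK : ∀ z ∈ K, ∃ a b, ρ b ≠ 0 ∧ z = ρ a / ρ b) : (-1 : Ω) ∉ cone P ρ K := by
  intro h
  have key : ∀ w ∈ cone P ρ K, ∃ p ∈ P, ∃ b, ρ b ≠ 0 ∧ ρ b * ρ b * w = ρ p := by
    intro w hw
    induction hw using AddSubmonoid.closure_induction with
    | mem w hw =>
      obtain ⟨p, hp, z, hz, rfl⟩ := hw
      obtain ⟨a, b, hb, rfl⟩ := hK z hz
      refine ⟨p * (a * a), P.mul_mem hp (hsq a), b, hb, ?_⟩
      simp only [map_mul]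
      field_simp
    | zero => exact ⟨0, P.zero_mem, 1, by simp, by simp⟩
    | add x y _ _ hx hy =>
      obtain ⟨p, hp, b, hb, h1⟩ := hx
      obtain ⟨q, hq, c, hc, h2⟩ := hy
      refine ⟨c * c * p + b * b * q, P.add_mem (P.mul_mem (hsq c) hp) (P.mul_mem (hsq b) hq),
        b * c, by simp [hb, hc], ?_⟩
      simp only [map_mul, map_add, ← h1, ← h2]
      ring
  obtain ⟨p, hp, b, hb, h1⟩ := key _ h
  apply hb
  apply hker'
  have h2 : -(b * b + p) ∈ P := hker _ (by rw [map_add, map_mul, ← h1]; ring)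
  have := P.add_mem h2 hp
  simpa using this

theorem cone_sSup (P : Subsemiring A) (ρ : A →+* Ω) {c : Set (Subfield Ω)} (hc : c.Nonempty)
    (hdir : DirectedOn (· ≤ ·) c) {w : Ω} (hw : w ∈ cone P ρ (sSup c)) :
    ∃ K ∈ c, w ∈ cone P ρ K := by
  have mono : ∀ K K' : Subfield Ω, K ≤ K' → cone P ρ K ≤ cone P ρ K' := by
    intro K K' h
    apply AddSubmonoid.closure_mono
    rintro _ ⟨p, hp, z, hz, rfl⟩
    exact ⟨p, hp, z, h hz, rfl⟩
  induction hw using AddSubmonoid.closure_induction with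
  | mem w hw =>
    obtain ⟨p, hp, z, hz, rfl⟩ := hw
    rw [Subfield.mem_sSup_of_directedOn hc hdir] at hz
    obtain ⟨K, hK, hz⟩ := hz
    exact ⟨K, hK, AddSubmonoid.subset_closure ⟨p, hp, z, hz, rfl⟩⟩
  | zero => exact hc.imp fun K hK => ⟨hK, zero_mem _⟩
  | add x y _ _ hx hy =>
    obtain ⟨K, hK, hx⟩ := hx
    obtain ⟨K', hK', hy⟩ := hy
    obtain ⟨K'', h, h1, h2⟩ := hdir K hK K' hK'
    exact ⟨K'', h, add_mem (mono _ _ h1 hx) (mono _ _ h2 hy)⟩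

theorem exists_maximal_subfield (P : Subsemiring A) (ρ : A →+* Ω) (K₀ : Subfield Ω)
    (h : (-1 : Ω) ∉ cone P ρ K₀) :
    ∃ K : Subfield Ω, K₀ ≤ K ∧ (-1 : Ω) ∉ cone P ρ K ∧
      ∀ K' : Subfield Ω, K < K' → (-1 : Ω) ∈ cone P ρ K' := by
  obtain ⟨K, hK0, hK⟩ := zorn_le_nonempty₀ {K : Subfield Ω | (-1 : Ω) ∉ cone P ρ K}
    (by
      intro c hc hchain y hy
      refine ⟨sSup c, ?_, fun z hz => le_sSup hz⟩
      intro hw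
      obtain ⟨K, hK, h⟩ := cone_sSup P ρ ⟨y, hy⟩ hchain.directedOn hw
      exact hc hK h) K₀ h
  refine ⟨K, hK0, hK.prop, fun K' h => ?_⟩
  by_contra hcon
  exact absurd (hK.le_of_ge hcon h.le) (not_le_of_gt h)

/-- Over a maximal `K`, adjoining a new element `α` makes `-1` a value at `α` of
`∑ ρ(P) · K[X]²`. -/
theorem exists_poly_of_maximal (P : Subsemiring A) (K : Subfield Ω) (ρ : A →+* K)
    (hmax : ∀ K' : Subfield Ω, K < K' → (-1 : Ω) ∈ cone P (K.subtype.comp ρ) K')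
    (α : Ω) (hα : α ∉ K) (hint : IsIntegral K α) :
    ∃ w ∈ AddSubmonoid.closure {w : K[X] | ∃ p ∈ P, ∃ u : K[X], w = Polynomial.C (ρ p) * (u * u)},
      Polynomial.aeval α w = -1 := by
  set K' := (IntermediateField.adjoin K {α}).toSubfield with hK'
  have hmem : ∀ z ∈ K', ∃ u : K[X], Polynomial.aeval α u = z := by
    intro z hz
    have hz' : z ∈ (IntermediateField.adjoin K {α}).toSubalgebra := hz
    rw [IntermediateField.adjoin_simple_toSubalgebra_of_isAlgebraic hint.isAlgebraic,
      Algebra.adjoin_singleton_eq_range_aeval] at hz'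
    exact hz'
  have hlt : K < K' := by
    refine lt_of_le_of_ne ?_ ?_
    · intro z hz
      exact (IntermediateField.adjoin K {α}).algebraMap_mem ⟨z, hz⟩
    · intro h
      apply hα
      rw [h]
      exact IntermediateField.mem_adjoin_simple_self K α
  have h1 := hmax K' hlt
  have key : ∀ w ∈ cone P (K.subtype.comp ρ) K', ∃ v ∈ AddSubmonoid.closure
      {w : K[X] | ∃ p ∈ P, ∃ u : K[X], w = Polynomial.C (ρ p) * (u * u)}, Polynomial.aeval α v = w := by
    intro w hw
    induction hw using AddSubmonoid.closure_induction with
    | mem w hw =>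
      obtain ⟨p, hp, z, hz, rfl⟩ := hw
      obtain ⟨u, rfl⟩ := hmem z hz
      refine ⟨_, AddSubmonoid.subset_closure ⟨p, hp, u, rfl⟩, ?_⟩
      simp [Polynomial.aeval_C]
      left
      rfl
    | zero => exact ⟨0, zero_mem _, by simp⟩
    | add x y _ _ hx hy =>
      obtain ⟨p, hp, rfl⟩ := hx
      obtain ⟨q, hq, rfl⟩ := hy
      exact ⟨p + q, add_mem hp hq, by simp⟩
  exact key _ h1

end RealClosed

end PosStell

/-! ### Fields ordered by squares and the intermediate value property -/

namespace PosStell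
open scoped Polynomial

/-- A field in which every element or its negative is a square and `-1` is not a sum of two squares
is ordered by its squares. -/
theorem exists_order_of_squares (R : Type*) [Field R]
    (htot : ∀ a : R, IsSquare a ∨ IsSquare (-a)) (hneg : ∀ x y : R, x * x + y * y ≠ -1) :
    ∃ (_ : LinearOrder R), IsStrictOrderedRing R ∧ ∀ x : R, 0 ≤ x ↔ IsSquare x := by
  classical
  have hz : ∀ x y z : R, z * z = -(x * x + y * y) → z = 0 := by
    intro x y z h
    by_contra hz
    apply hneg (x / z) (y / z)
    field_simp
    linear_combination h
  let C : RingCone R :=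
    { carrier := {x | IsSquare x}
      zero_mem' := ⟨0, by simp⟩
      one_mem' := ⟨1, by simp⟩
      mul_mem' := fun h1 h2 => IsSquare.mul h1 h2
      add_mem' := by
        rintro _ _ ⟨x, rfl⟩ ⟨y, rfl⟩
        rcases htot (x * x + y * y) with h | ⟨z, h⟩
        · exact h
        · have := hz x y z h.symm
          refine ⟨0, ?_⟩
          rw [this] at h
          linear_combination -h
      eq_zero_of_mem_of_neg_mem' := by
        rintro _ ⟨y, rfl⟩ ⟨z, h⟩
        have := hz y 0 z (by rw [← h]; ring)
        rw [this] at h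
        linear_combination -h }
  have hmem : ∀ x, x ∈ C ↔ IsSquare x := fun x => Iff.rfl
  have : HasMemOrNegMem C := ⟨fun a => htot a⟩
  let lo : LinearOrder R := LinearOrder.mkOfAddGroupCone C
  have : IsOrderedRing R := IsOrderedRing.mkOfCone C
  refine ⟨lo, inferInstance, fun x => ?_⟩
  have : 0 ≤ x ↔ x - 0 ∈ C := Iff.rfl
  rw [this, sub_zero, hmem]

/-- The intermediate value property for polynomials; for ordered fields it is equivalent to being
real closed. -/
def IVP (R : Type*) [Field R] [LinearOrder R] : Prop :=
  ∀ (p : R[X]) (a b : R), a ≤ b → p.eval a * p.eval b ≤ 0 → ∃ c, a ≤ c ∧ c ≤ b ∧ p.eval c = 0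

/-- A polynomial `q` changing sign between `a` and `b` does not divide `1 + ∑ uᵢ²`. After reducing
the `uᵢ` modulo `q`, the cofactor of `q` has smaller degree and also changes sign, so induction on
the degree applies. -/
theorem not_dvd_one_add_sumSq {K : Type*} [Field K] [LinearOrder K] [IsStrictOrderedRing K]
    (a b : K) : ∀ (n : ℕ) (q : K[X]), q.natDegree ≤ n → q.eval a * q.eval b < 0 →
    ∀ w : K[X], IsSumSq w → ¬ q ∣ 1 + w := by
  intro n
  induction n with
  | zero =>
    intro q hq hlt
    rw [Polynomial.eq_C_of_natDegree_le_zero hq] at hlt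
    simp only [Polynomial.eval_C] at hlt
    nlinarith [mul_self_nonneg (q.coeff 0)]
  | succ n ih =>
    intro q hq hlt w hw hdvd
    have hq0 : q ≠ 0 := by rintro rfl; simp at hlt
    -- reduce every summand modulo `q`
    have hred : ∀ w : K[X], IsSumSq w → ∃ v : K[X], IsSumSq v ∧ q ∣ w - v ∧
        v.degree < q.degree + q.degree := by
      intro w hw
      induction hw with
      | zero =>
        refine ⟨0, IsSumSq.zero, by simp, ?_⟩
        rw [Polynomial.degree_zero, Polynomial.degree_eq_natDegree hq0]
        exact_mod_cast WithBot.bot_lt_coe _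
      | sq_add a _ ih =>
        obtain ⟨v, hv, hdv, hdeg⟩ := ih
        refine ⟨(a % q) * (a % q) + v, IsSumSq.sq_add _ hv, ?_, ?_⟩
        · have h1 : q ∣ a - a % q := by
            refine ⟨a / q, ?_⟩
            linear_combination -(EuclideanDomain.div_add_mod a q)
          obtain ⟨c, hc⟩ := h1
          obtain ⟨d, hd⟩ := hdv
          exact ⟨c * (a + a % q) + d, by linear_combination (a + a % q) * hc + hd⟩
        · refine lt_of_le_of_lt (Polynomial.degree_add_le _ _) (max_lt ?_ hdeg)
          rw [Polynomial.degree_mul]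
          have := Polynomial.degree_mod_lt a hq0
          rcases eq_or_ne (a % q) 0 with h0 | h0
          · rw [h0, Polynomial.degree_zero, Polynomial.degree_eq_natDegree hq0]
            exact_mod_cast WithBot.bot_lt_coe _
          · rw [Polynomial.degree_eq_natDegree hq0, Polynomial.degree_eq_natDegree h0] at *
            norm_cast at *
            omega
    obtain ⟨v, hv, hdv, hdeg⟩ := hred w hw
    have hdvd' : q ∣ 1 + v := by
      have := dvd_sub hdvd hdv
      convert this using 1
      ring
    obtain ⟨h, hh⟩ := hdvd'
    have hnn : ∀ v : K[X], IsSumSq v → ∀ x, 0 ≤ v.eval x := by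
      intro v hv x
      induction hv with
      | zero => simp
      | sq_add a _ ih =>
        rw [Polynomial.eval_add, Polynomial.eval_mul]
        nlinarith [mul_self_nonneg (a.eval x)]
    have ev : ∀ x, 0 < q.eval x * h.eval x := by
      intro x
      rw [← Polynomial.eval_mul, ← hh, Polynomial.eval_add, Polynomial.eval_one]
      linarith [hnn v hv x]
    have hh0 : h ≠ 0 := by rintro rfl; simpa using ev a
    have hqd : 0 < q.natDegree := by
      rw [Nat.pos_iff_ne_zero]
      intro h0
      rw [Polynomial.eq_C_of_natDegree_eq_zero h0] at hlt
      simp only [Polynomial.eval_C] at hlt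
      nlinarith [mul_self_nonneg (q.coeff 0)]
    have hdh : h.natDegree ≤ n := by
      have h1 : (1 + v).degree < q.degree + q.degree := by
        refine lt_of_le_of_lt (Polynomial.degree_add_le _ _) (max_lt ?_ hdeg)
        rw [Polynomial.degree_one, Polynomial.degree_eq_natDegree hq0]
        norm_cast
        omega
      rw [hh, Polynomial.degree_mul, Polynomial.degree_eq_natDegree hq0,
        Polynomial.degree_eq_natDegree hh0] at h1
      norm_cast at h1
      omega
    refine ih h hdh ?_ v hv (Dvd.intro_left q hh.symm)
    have h1 := mul_pos (ev a) (ev b)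
    by_contra hcon
    push Not at hcon
    nlinarith [mul_nonneg hcon (neg_pos.mpr hlt).le]

/-- A field that cannot be enlarged inside its algebraic closure without making `-1` a sum of
squares has the intermediate value property: an irreducible factor changing sign must be linear,
as otherwise it divides some `1 + ∑ uᵢ²`. -/
theorem ivp_of_maximal {K : Type*} [Field K] [LinearOrder K] [IsStrictOrderedRing K]
    {Ω : Type*} [Field Ω] [IsAlgClosed Ω] [Algebra K Ω] [Algebra.IsIntegral K Ω]
    (H : ∀ α : Ω, α ∉ (algebraMap K Ω).range →
      ∃ w : K[X], IsSumSq w ∧ Polynomial.aeval α w = -1) : IVP K := by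
  have main : ∀ (n : ℕ) (p : K[X]) (a b : K), p.natDegree ≤ n → a ≤ b →
      p.eval a * p.eval b < 0 → ∃ c, a ≤ c ∧ c ≤ b ∧ p.eval c = 0 := by
    intro n
    induction n with
    | zero =>
      intro q a b hq hab hlt
      rw [Polynomial.eq_C_of_natDegree_le_zero hq] at hlt
      simp only [Polynomial.eval_C] at hlt
      nlinarith [mul_self_nonneg (q.coeff 0)]
    | succ n ih =>
      intro q a b hq hab hlt
      by_cases hq1 : q.natDegree ≤ n
      · exact ih q a b hq1 hab hlt
      have hdeg : q.degree ≠ 0 := by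
        intro h
        have := Polynomial.natDegree_eq_zero_iff_degree_le_zero.2 h.le
        omega
      obtain ⟨α, hα⟩ := IsAlgClosed.exists_aeval_eq_zero Ω q hdeg
      have hint : IsIntegral K α := Algebra.IsIntegral.isIntegral α
      obtain ⟨v, hv⟩ := minpoly.dvd K α hα
      set m := minpoly K α with hm
      have hq0 : q ≠ 0 := by rintro rfl; simp at hlt
      have hv0 : v ≠ 0 := by rintro rfl; simp [hq0] at hv
      have hm0 : m ≠ 0 := minpoly.ne_zero hint
      have hmd : 0 < m.natDegree := minpoly.natDegree_pos hint
      have hvn : v.natDegree ≤ n := by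
        have := congrArg Polynomial.natDegree hv
        rw [Polynomial.natDegree_mul hm0 hv0] at this
        omega
      have hev : ∀ x, q.eval x = m.eval x * v.eval x := by
        intro x; rw [hv, Polynomial.eval_mul]
      have hcase : m.eval a * m.eval b < 0 ∨ 0 < m.eval a * m.eval b := by
        rcases lt_trichotomy (m.eval a * m.eval b) 0 with h | h | h
        · exact Or.inl h
        · exfalso
          rw [hev, hev] at hlt
          have : m.eval a * v.eval a * (m.eval b * v.eval b) =
            (m.eval a * m.eval b) * (v.eval a * v.eval b) := by ring
          rw [this, h] at hlt
          simp at hlt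
        · exact Or.inr h
      rcases hcase with h | h
      · by_cases hr : α ∈ (algebraMap K Ω).range
        · obtain ⟨c, hc⟩ := hr
          have hmc : m = Polynomial.X - Polynomial.C c := by
            rw [hm, ← hc, minpoly.eq_X_sub_C]
          rw [hmc] at h
          simp only [Polynomial.eval_sub, Polynomial.eval_X, Polynomial.eval_C] at h
          refine ⟨c, ?_, ?_, ?_⟩
          · by_contra hcon
            push Not at hcon
            nlinarith
          · by_contra hcon
            push Not at hcon
            nlinarith
          · rw [hev, hmc]; simp
        · obtain ⟨w, hw, hw1⟩ := H α hr
          exact absurd (minpoly.dvd K α (by simp [hw1]))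
            (not_dvd_one_add_sumSq a b _ m le_rfl h w hw)
      · have : v.eval a * v.eval b < 0 := by
          rw [hev, hev] at hlt
          by_contra hcon
          push Not at hcon
          nlinarith [mul_nonneg h.le hcon]
        obtain ⟨c, h1, h2, h3⟩ := ih v a b hvn hab this
        exact ⟨c, h1, h2, by rw [hev, h3, mul_zero]⟩
  intro p a b hab h
  rcases h.lt_or_eq with h | h
  · exact main _ p a b le_rfl hab h
  · rcases mul_eq_zero.mp h with h | h
    · exact ⟨a, le_rfl, hab, h⟩
    · exact ⟨b, hab, le_rfl, h⟩

end PosStell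

/-! ### Real closed fields over a preordered ring -/

namespace PosStell
open scoped Polynomial

/-- If neither `a` nor `-a` were a square in a maximal `K`, adjoining their square roots would give
`-1 = s + a t = u - a v` with `s, t, u, v` in the cone over `K`, and the two identities multiply
to `-1` being in the cone. -/
theorem isSquare_or_neg_of_maximal {A : Type*} [CommRing A] {Ω : Type*} [Field Ω] [IsAlgClosed Ω]
    (P : Subsemiring A) (K : Subfield Ω) (ρ : A →+* K) [Algebra.IsIntegral K Ω]
    (hneg : (-1 : K) ∉ AddSubmonoid.closure {w : K | ∃ p ∈ P, ∃ z : K, w = ρ p * (z * z)})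
    (hmax : ∀ K' : Subfield Ω, K < K' → (-1 : Ω) ∈ cone P (K.subtype.comp ρ) K') (a : K) :
    IsSquare a ∨ IsSquare (-a) := by
  set S : Set K := {w : K | ∃ p ∈ P, ∃ z : K, w = ρ p * (z * z)} with hS
  have hmul : ∀ x ∈ AddSubmonoid.closure S, ∀ y ∈ AddSubmonoid.closure S,
      x * y ∈ AddSubmonoid.closure S := by
    intro x hx y hy
    induction hx using AddSubmonoid.closure_induction with
    | zero => simp
    | add x x' _ _ h h' => rw [add_mul]; exact add_mem h h'
    | mem x hx =>
      induction hy using AddSubmonoid.closure_induction with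
      | zero => simp
      | add x x' _ _ h h' => rw [mul_add]; exact add_mem h h'
      | mem y hy =>
        obtain ⟨p, hp, z, rfl⟩ := hx
        obtain ⟨q, hq, t, rfl⟩ := hy
        exact AddSubmonoid.subset_closure ⟨p * q, P.mul_mem hp hq, z * t, by rw [map_mul]; ring⟩
  have hsq : ∀ z : K, z * z ∈ AddSubmonoid.closure S := fun z =>
    AddSubmonoid.subset_closure ⟨1, P.one_mem, z, by simp⟩
  have key : ∀ a : K, ¬ IsSquare a → ∃ s ∈ AddSubmonoid.closure S,
      ∃ t ∈ AddSubmonoid.closure S, (-1 : K) = s + a * t := by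
    intro a ha
    obtain ⟨r, hr⟩ := IsAlgClosed.exists_pow_nat_eq (a : Ω) (n := 2) (by norm_num)
    have hrK : r ∉ K := by
      intro h
      apply ha
      refine ⟨⟨r, h⟩, ?_⟩
      ext
      simp [← hr, sq]
    obtain ⟨w, hw, hw1⟩ := exists_poly_of_maximal P K ρ hmax r hrK
      (Algebra.IsIntegral.isIntegral r)
    have lin : ∀ u : K[X], ∃ x y : K, Polynomial.aeval r u = (x : Ω) + y * r := by
      intro u
      induction u using Polynomial.induction_on' with
      | add p q hp hq =>
        obtain ⟨x, y, h1⟩ := hp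
        obtain ⟨x', y', h2⟩ := hq
        exact ⟨x + x', y + y', by rw [map_add, h1, h2]; push_cast; ring⟩
      | monomial n c =>
        induction n with
        | zero => exact ⟨c, 0, by simp; rfl⟩
        | succ n ih =>
          obtain ⟨x, y, h1⟩ := ih
          refine ⟨a * y, x, ?_⟩
          rw [← Polynomial.monomial_mul_X, map_mul, h1, Polynomial.aeval_X]
          push_cast
          rw [← hr]
          ring
    have comp : ∀ w ∈ AddSubmonoid.closure
        {w : K[X] | ∃ p ∈ P, ∃ u : K[X], w = Polynomial.C (ρ p) * (u * u)},
        ∃ s ∈ AddSubmonoid.closure S, ∃ t ∈ AddSubmonoid.closure S, ∃ m : K,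
          Polynomial.aeval r w = ((s + a * t : K) : Ω) + m * r := by
      intro w hw
      induction hw using AddSubmonoid.closure_induction with
      | zero => exact ⟨0, zero_mem _, 0, zero_mem _, 0, by simp⟩
      | add x y _ _ hx hy =>
        obtain ⟨s, hs, t, ht, m, h1⟩ := hx
        obtain ⟨s', hs', t', ht', m', h2⟩ := hy
        exact ⟨s + s', add_mem hs hs', t + t', add_mem ht ht', m + m', by
          rw [map_add, h1, h2]; push_cast; ring⟩
      | mem w hw =>
        obtain ⟨p, hp, u, rfl⟩ := hw
        obtain ⟨x, y, h1⟩ := lin u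
        refine ⟨ρ p * (x * x), AddSubmonoid.subset_closure ⟨p, hp, x, rfl⟩,
          ρ p * (y * y), AddSubmonoid.subset_closure ⟨p, hp, y, rfl⟩, ρ p * (x * y + x * y), ?_⟩
        rw [map_mul, map_mul, h1, Polynomial.aeval_C]
        change (ρ p : Ω) * _ = _
        push_cast
        rw [← hr]
        ring
    obtain ⟨s, hs, t, ht, m, h1⟩ := comp w hw
    rw [hw1] at h1
    refine ⟨s, hs, t, ht, ?_⟩
    by_cases hm : m = 0
    · rw [hm] at h1
      ext
      rw [show ((0 : K) : Ω) = 0 from rfl, zero_mul, add_zero] at h1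
      rw [← h1]; rfl
    · exfalso
      apply hrK
      have hm' : (m : Ω) ≠ 0 := by simpa using hm
      have : r = (((-1 - (s + a * t)) / m : K) : Ω) := by
        push_cast at h1 ⊢
        field_simp
        linear_combination -h1
      rw [this]
      exact SetLike.coe_mem _
  by_contra hcon
  push Not at hcon
  obtain ⟨s, hs, t, ht, h1⟩ := key a hcon.1
  obtain ⟨s', hs', t', ht', h2⟩ := key (-a) hcon.2
  apply hneg
  have : (-1 : K) = s + s' + s * s' + a * a * (t * t') := by
    linear_combination (1 + s') * h1 - (a * t) * h2
  rw [this]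
  exact add_mem (add_mem (add_mem hs hs') (hmul _ hs _ hs'))
    (hmul _ (hsq a) _ (hmul _ ht _ ht'))

/-- A countable ring with a proper preordering `T` maps to a countable real closed field in which
`T` becomes nonnegative. -/
theorem exists_realClosed {A : Type} [CommRing A] [Countable A] (T : Subsemiring A)
    (hsq : ∀ a : A, a * a ∈ T) (hneg : (-1 : A) ∉ T) :
    ∃ (R : Type) (_ : Field R) (_ : LinearOrder R), IsStrictOrderedRing R ∧ IVP R ∧ Countable R ∧
      ∃ ρ : A →+* R, ∀ a ∈ T, 0 ≤ ρ a := by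
  obtain ⟨P, hTP, hP1, htot, hprime⟩ := exists_maximal_preordering T hsq hneg
  have hsqP : ∀ a : A, a * a ∈ P := fun a => hTP (hsq a)
  let I : Ideal A := supp P htot
  have hI : I.IsPrime := by
    refine ⟨?_, ?_⟩
    · rw [Ideal.ne_top_iff_one]
      exact fun h => hP1 h.2
    · intro a b hab
      exact hprime a b hab.1 hab.2
  let F := FractionRing (A ⧸ I)
  let Ω := AlgebraicClosure F
  have hcF : Countable F := by
    have : Countable (A ⧸ I) := Quotient.countable
    exact (IsLocalization.mk'_surjective (nonZeroDivisors (A ⧸ I)) (S := F)).countable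
  have hcΩ : Countable Ω := by
    have := Algebra.IsAlgebraic.cardinalMk_le_max F Ω
    rw [← Cardinal.mk_le_aleph0_iff]
    exact this.trans (max_le (Cardinal.mk_le_aleph0_iff.2 hcF) le_rfl)
  let ρ₀ : A →+* F := (algebraMap (A ⧸ I) F).comp (Ideal.Quotient.mk I)
  let ρ : A →+* Ω := (algebraMap F Ω).comp ρ₀
  have hρ0 : ∀ a, ρ a = 0 ↔ a ∈ I := by
    intro a
    rw [← Ideal.Quotient.eq_zero_iff_mem]
    simp only [ρ, ρ₀, RingHom.comp_apply]
    rw [map_eq_zero_iff _ (FaithfulSMul.algebraMap_injective F Ω),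
      map_eq_zero_iff _ (IsFractionRing.injective (A ⧸ I) F)]
  have hbase : (-1 : Ω) ∉ cone P ρ (algebraMap F Ω).fieldRange := by
    apply neg_one_notMem_cone_of_fractions P hsqP
    · intro a ha
      exact ((hρ0 a).1 ha).2
    · intro a ha
      rw [hρ0]
      exact (hprime a a (hsqP a) ha).elim id id
    · rintro _ ⟨z, rfl⟩
      obtain ⟨x, y, hy, rfl⟩ := IsFractionRing.div_surjective (A := A ⧸ I) z
      obtain ⟨a, rfl⟩ := Ideal.Quotient.mk_surjective x
      obtain ⟨b, rfl⟩ := Ideal.Quotient.mk_surjective y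
      refine ⟨a, b, ?_, ?_⟩
      · intro h
        rw [hρ0, ← Ideal.Quotient.eq_zero_iff_mem] at h
        exact nonZeroDivisors.ne_zero hy h
      · simp [ρ, ρ₀]
  obtain ⟨K, hK0, hK1, hmax⟩ := exists_maximal_subfield P ρ _ hbase
  have hρK : ∀ a, ρ a ∈ K := fun a => hK0 ⟨ρ₀ a, rfl⟩
  let ρK : A →+* K := ρ.codRestrict K hρK
  have hcomp : K.subtype.comp ρK = ρ := by ext; rfl
  have hint : Algebra.IsIntegral K Ω := by
    let i : F →+* K := (algebraMap F Ω).codRestrict K (fun x => hK0 ⟨x, rfl⟩)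
    refine ⟨fun α => ?_⟩
    have h1 : IsIntegral F α := Algebra.IsIntegral.isIntegral α
    obtain ⟨q, hq, h2⟩ := h1
    refine ⟨q.map i, hq.map i, ?_⟩
    rw [Polynomial.eval₂_map]
    exact h2
  have hnegK : (-1 : K) ∉ AddSubmonoid.closure {w : K | ∃ p ∈ P, ∃ z : K, w = ρK p * (z * z)} := by
    intro h
    apply hK1
    have : ∀ w ∈ AddSubmonoid.closure {w : K | ∃ p ∈ P, ∃ z : K, w = ρK p * (z * z)},
        (w : Ω) ∈ cone P ρ K := by
      intro w hw
      induction hw using AddSubmonoid.closure_induction with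
      | zero => exact zero_mem _
      | add x y _ _ hx hy => exact add_mem hx hy
      | mem w hw =>
        obtain ⟨p, hp, z, rfl⟩ := hw
        exact AddSubmonoid.subset_closure ⟨p, hp, z, z.2, rfl⟩
    exact this _ h
  have hdich := isSquare_or_neg_of_maximal P K ρK hnegK (by rw [hcomp]; exact hmax)
  obtain ⟨lo, hso, hnn⟩ := exists_order_of_squares K hdich (by
    intro x y h
    apply hnegK
    rw [← h]
    exact add_mem (AddSubmonoid.subset_closure ⟨1, P.one_mem, x, by simp⟩)
      (AddSubmonoid.subset_closure ⟨1, P.one_mem, y, by simp⟩))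
  have hρnn : ∀ p ∈ P, 0 ≤ ρK p := by
    intro p hp
    by_contra hcon
    push Not at hcon
    obtain ⟨b, hb⟩ := (hnn (-ρK p)).1 (by linarith)
    apply hnegK
    have hb0 : b ≠ 0 := by
      rintro rfl
      simp only [mul_zero, neg_eq_zero] at hb
      linarith
    refine AddSubmonoid.subset_closure ⟨p, hp, b⁻¹, ?_⟩
    have : ρK p = -(b * b) := by rw [← hb, neg_neg]
    rw [this]
    field_simp
  refine ⟨K, inferInstance, lo, hso, ?_, inferInstance, ρK, fun a ha => hρnn a (hTP ha)⟩
  apply ivp_of_maximal (Ω := Ω)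
  intro α hα
  have hα' : α ∉ K := fun h => hα ⟨⟨α, h⟩, rfl⟩
  obtain ⟨w, hw, hw1⟩ := exists_poly_of_maximal P K ρK (by rw [hcomp]; exact hmax) α hα'
    (Algebra.IsIntegral.isIntegral α)
  refine ⟨w, ?_, hw1⟩
  clear hw1
  induction hw using AddSubmonoid.closure_induction with
  | zero => exact IsSumSq.zero
  | add x y _ _ hx hy => exact IsSumSq.add hx hy
  | mem w hw =>
    obtain ⟨p, hp, u, rfl⟩ := hw
    obtain ⟨b, hb⟩ := (hnn _).1 (hρnn p hp)
    rw [hb]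
    have : Polynomial.C (b * b) * (u * u) = (Polynomial.C b * u) * (Polynomial.C b * u) := by
      rw [map_mul]; ring
    rw [this]
    exact IsSumSq.mul_self _

end PosStell

/-! ### Signs of polynomials and cuts -/

namespace PosStell
open scoped Polynomial

section IVP
variable {R : Type*} [Field R] [LinearOrder R] [IsStrictOrderedRing R]

theorem IVP.mul_pos_of_no_root (hR : IVP R) {p : R[X]} {a b : R} (hab : a ≤ b)
    (h : ∀ c, a ≤ c → c ≤ b → p.eval c ≠ 0) : 0 < p.eval a * p.eval b := by
  by_contra hcon
  push Not at hcon
  obtain ⟨c, h1, h2, h3⟩ := hR p a b hab hcon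
  exact h c h1 h2 h3

theorem IVP.rolle (hR : IVP R) {p : R[X]} (hp : p ≠ 0) {x y : R} (hxy : x < y)
    (hx : p.eval x = 0) (hy : p.eval y = 0) :
    ∃ z, x < z ∧ z < y ∧ p.derivative.eval z = 0 := by
  classical
  -- replace `y` by the first root after `x`
  obtain ⟨y', hy', hmin⟩ := Finset.exists_min_image (p.roots.toFinset.filter (x < ·)) id
    ⟨y, by simp [hp, hy, hxy]⟩
  simp only [Finset.mem_filter, Multiset.mem_toFinset, Polynomial.mem_roots hp,
    Polynomial.IsRoot.def, id, and_imp] at hy' hmin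
  suffices ∃ z, x < z ∧ z < y' ∧ p.derivative.eval z = 0 by
    obtain ⟨z, h1, h2, h3⟩ := this
    exact ⟨z, h1, h2.trans_le (hmin y hy hxy), h3⟩
  obtain ⟨hy0, hxy'⟩ := hy'
  obtain ⟨q, hq, hqx⟩ := Polynomial.exists_eq_pow_rootMultiplicity_mul_and_not_dvd p hp x
  set m := p.rootMultiplicity x with hm
  have hm0 : m ≠ 0 := by
    have := (Polynomial.rootMultiplicity_pos hp).2 hx
    omega
  have hq0 : q ≠ 0 := by rintro rfl; simp at hqx
  obtain ⟨h, hh, hhy⟩ := Polynomial.exists_eq_pow_rootMultiplicity_mul_and_not_dvd q hq0 y'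
  set l := q.rootMultiplicity y' with hl
  rw [Polynomial.dvd_iff_isRoot, Polynomial.IsRoot.def] at hqx hhy
  have hqy : q.eval y' = 0 := by
    rw [hq] at hy0
    simp only [Polynomial.eval_mul, Polynomial.eval_pow, Polynomial.eval_sub, Polynomial.eval_X,
      Polynomial.eval_C] at hy0
    exact (mul_eq_zero.mp hy0).resolve_left (pow_ne_zero _ (sub_ne_zero.2 hxy'.ne'))
  have hl0 : l ≠ 0 := by
    have := (Polynomial.rootMultiplicity_pos hq0).2 hqy
    omega
  have hhx : h.eval x ≠ 0 := by
    intro h0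
    apply hqx
    rw [hh, Polynomial.eval_mul, h0, mul_zero]
  have hpos : 0 < h.eval x * h.eval y' := by
    apply hR.mul_pos_of_no_root hxy'.le
    intro c h1 h2 h3
    rcases h1.eq_or_lt with h1 | h1
    · exact hhx (h1 ▸ h3)
    rcases h2.eq_or_lt with h2 | h2
    · exact hhy (h2 ▸ h3)
    have : p.eval c = 0 := by rw [hq, hh, Polynomial.eval_mul, Polynomial.eval_mul, h3]; simp
    exact absurd (hmin c this h1) (not_le.2 h2)
  obtain ⟨m', hm'⟩ := Nat.exists_eq_succ_of_ne_zero hm0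
  obtain ⟨l', hl'⟩ := Nat.exists_eq_succ_of_ne_zero hl0
  set X : R[X] := Polynomial.X
  set B : R[X] := (m : R[X]) * (X - Polynomial.C y') * h + (l : R[X]) * (X - Polynomial.C x) * h
    + (X - Polynomial.C x) * (X - Polynomial.C y') * h.derivative with hB
  have hder : p.derivative = (X - Polynomial.C x) ^ m' * (X - Polynomial.C y') ^ l' * B := by
    rw [hq, hh, hB, hm', hl']
    simp only [Polynomial.derivative_mul, Polynomial.derivative_X_sub_C_pow, Nat.succ_eq_add_one,
      Nat.add_sub_cancel, X]
    push_cast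
    simp only [map_add, map_one, map_natCast]
    ring
  have hBx : B.eval x = m * (x - y') * h.eval x := by simp [hB, X]
  have hBy : B.eval y' = l * (y' - x) * h.eval y' := by simp [hB, X]
  have hmpos : (0 : R) < m := by exact_mod_cast Nat.pos_of_ne_zero hm0
  have hlpos : (0 : R) < l := by exact_mod_cast Nat.pos_of_ne_zero hl0
  have hneg : B.eval x * B.eval y' < 0 := by
    rw [hBx, hBy]
    have h1 : 0 < (m : R) * l * (y' - x) * (y' - x) * (h.eval x * h.eval y') := by
      have : 0 < y' - x := sub_pos.2 hxy'
      positivity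
    nlinarith
  obtain ⟨z, h1, h2, h3⟩ := hR B x y' hxy'.le hneg.le
  refine ⟨z, lt_of_le_of_ne h1 ?_, lt_of_le_of_ne h2 ?_, ?_⟩
  · rintro rfl; simp [h3] at hneg
  · rintro rfl; simp [h3] at hneg
  · rw [hder, Polynomial.eval_mul, h3, mul_zero]

/-- If the derivative of `q` has no zero in `(a, b)` and `q` has a zero `α` there, then the sign
of `q` at other points of `[a, b]` tells on which side of `α` they lie. -/
theorem IVP.sign_of_root (hR : IVP R) {q : R[X]} (hq : q ≠ 0) {a b α : R} (haα : a < α)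
    (hαb : α < b) (hα : q.eval α = 0) (hqa : q.eval a ≠ 0) (hqb : q.eval b ≠ 0)
    (hder : ∀ z, a < z → z < b → q.derivative.eval z ≠ 0) :
    (∀ c, a ≤ c → c < α → 0 < q.eval c * q.eval a) ∧
    (∀ c, α < c → c ≤ b → q.eval c * q.eval a < 0) := by
  obtain ⟨h, hh⟩ := Polynomial.dvd_iff_isRoot.2 (show q.IsRoot α from hα)
  have hev : ∀ x, q.eval x = (x - α) * h.eval x := by intro x; rw [hh]; simp
  have hhα : h.eval α ≠ 0 := by
    have := hder α haα hαb
    rw [hh] at this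
    simpa [Polynomial.derivative_mul] using this
  have hno : ∀ c, a ≤ c → c ≤ b → h.eval c ≠ 0 := by
    intro c h1 h2 h3
    have hqc : q.eval c = 0 := by rw [hev, h3, mul_zero]
    have h1' : a < c := lt_of_le_of_ne h1 (by rintro rfl; exact hqa hqc)
    have h2' : c < b := lt_of_le_of_ne h2 (by rintro rfl; exact hqb hqc)
    rcases lt_trichotomy c α with h | h | h
    · obtain ⟨z, e1, e2, e3⟩ := hR.rolle hq h hqc hα
      exact hder z (h1'.trans e1) (e2.trans hαb) e3
    · exact hhα (h ▸ h3)
    · obtain ⟨z, e1, e2, e3⟩ := hR.rolle hq h hα hqc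
      exact hder z (haα.trans e1) (e2.trans h2') e3
  have hsign : ∀ c, a ≤ c → c ≤ b → 0 < h.eval a * h.eval c := by
    intro c h1 h2
    exact hR.mul_pos_of_no_root h1 fun d e1 e2 => hno d e1 (e2.trans h2)
  refine ⟨fun c h1 h2 => ?_, fun c h1 h2 => ?_⟩
  · rw [hev, hev]
    have e1 : 0 < α - c := sub_pos.2 h2
    have e2 : 0 < α - a := sub_pos.2 haα
    have := mul_pos (mul_pos e1 e2) (hsign c h1 (h2.le.trans hαb.le))
    nlinarith
  · rw [hev, hev]
    have e1 : 0 < c - α := sub_pos.2 h1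
    have e2 : 0 < α - a := sub_pos.2 haα
    have := mul_pos (mul_pos e1 e2) (hsign c (haα.le.trans h1.le) h2)
    nlinarith

end IVP

section Extension
variable {K R₁ R₂ : Type*} [Field K] [Field R₁] [LinearOrder R₁] [IsStrictOrderedRing R₁]
  [Field R₂] [LinearOrder R₂] [IsStrictOrderedRing R₂]

/-- `α` and `β` realize the same cut over `K`; then polynomials over `K` all of whose roots lie
in `K` have the same sign at `α` and `β`. -/
theorem pos_iff_of_cut (h₁ : IVP R₁) (h₂ : IVP R₂) (i₁ : K →+* R₁) (i₂ : K →+* R₂)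
    (hpos : ∀ a, 0 < i₁ a ↔ 0 < i₂ a) (α : R₁) (β : R₂)
    (hlt : ∀ c, i₁ c < α ↔ i₂ c < β) (hgt : ∀ c, α < i₁ c ↔ β < i₂ c) :
    ∀ (n : ℕ) (u : K[X]), u.natDegree ≤ n →
      (∀ x, u.eval₂ i₁ x = 0 → u ≠ 0 → x ∈ i₁.range) →
      (∀ x, u.eval₂ i₂ x = 0 → u ≠ 0 → x ∈ i₂.range) →
      (0 < u.eval₂ i₁ α ↔ 0 < u.eval₂ i₂ β) ∧ (u.eval₂ i₁ α < 0 ↔ u.eval₂ i₂ β < 0) := by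
  have hneg : ∀ a, i₁ a < 0 ↔ i₂ a < 0 := by
    intro a
    have := hpos (-a)
    simpa using this
  intro n
  induction n with
  | zero =>
    intro u hu _ _
    rw [Polynomial.eq_C_of_natDegree_le_zero hu]
    simp [hpos, hneg]
  | succ n ih =>
    intro u hu hr1 hr2
    by_cases hu0 : u = 0
    · simp [hu0]
    by_cases hroot : ∃ c, u.eval c = 0
    · obtain ⟨c, hc⟩ := hroot
      obtain ⟨v, hv⟩ := Polynomial.dvd_iff_isRoot.2 (show u.IsRoot c from hc)
      have hv0 : v ≠ 0 := by rintro rfl; simp [hu0] at hv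
      have hdeg : v.natDegree ≤ n := by
        have := congrArg Polynomial.natDegree hv
        rw [Polynomial.natDegree_mul (Polynomial.X_sub_C_ne_zero c) hv0,
          Polynomial.natDegree_X_sub_C] at this
        omega
      have e1 : ∀ x, u.eval₂ i₁ x = (x - i₁ c) * v.eval₂ i₁ x := by
        intro x; rw [hv]; simp [Polynomial.eval₂_mul]
      have e2 : ∀ x, u.eval₂ i₂ x = (x - i₂ c) * v.eval₂ i₂ x := by
        intro x; rw [hv]; simp [Polynomial.eval₂_mul]
      obtain ⟨ih1, ih2⟩ := ih v hdeg (fun x hx _ => hr1 x (by rw [e1, hx, mul_zero]) hu0)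
        (fun x hx _ => hr2 x (by rw [e2, hx, mul_zero]) hu0)
      rw [e1, e2]
      simp only [mul_pos_iff, mul_neg_iff, sub_pos, sub_neg, hlt, hgt, ih1, ih2, and_self]
    · push Not at hroot
      have c1 : 0 < (u.map i₁).eval α * (u.map i₁).eval (i₁ 0) := by
        have hno : ∀ x, (u.map i₁).eval x ≠ 0 := by
          intro x hx
          rw [Polynomial.eval_map] at hx
          obtain ⟨c, rfl⟩ := hr1 x hx hu0
          rw [Polynomial.eval₂_at_apply, map_eq_zero] at hx
          exact hroot c hx
        rcases le_total α (i₁ 0) with h | h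
        · exact h₁.mul_pos_of_no_root h fun c _ _ => hno c
        · rw [mul_comm]; exact h₁.mul_pos_of_no_root h fun c _ _ => hno c
      have c2 : 0 < (u.map i₂).eval β * (u.map i₂).eval (i₂ 0) := by
        have hno : ∀ x, (u.map i₂).eval x ≠ 0 := by
          intro x hx
          rw [Polynomial.eval_map] at hx
          obtain ⟨c, rfl⟩ := hr2 x hx hu0
          rw [Polynomial.eval₂_at_apply, map_eq_zero] at hx
          exact hroot c hx
        rcases le_total β (i₂ 0) with h | h
        · exact h₂.mul_pos_of_no_root h fun c _ _ => hno c
        · rw [mul_comm]; exact h₂.mul_pos_of_no_root h fun c _ _ => hno c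
      rw [Polynomial.eval_map, Polynomial.eval_map, Polynomial.eval₂_at_apply] at c1 c2
      have hp := hpos (u.eval 0)
      have hn := hneg (u.eval 0)
      rw [mul_pos_iff] at c1 c2
      constructor
      · constructor
        · intro h
          rcases c1 with ⟨_, h'⟩ | ⟨h', _⟩
          · rcases c2 with ⟨h2, _⟩ | ⟨_, h2⟩
            · exact h2
            · exact absurd (hp.1 h') h2.not_gt
          · exact absurd h h'.not_gt
        · intro h
          rcases c2 with ⟨_, h'⟩ | ⟨h', _⟩
          · rcases c1 with ⟨h2, _⟩ | ⟨_, h2⟩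
            · exact h2
            · exact absurd (hp.2 h') h2.not_gt
          · exact absurd h h'.not_gt
      · constructor
        · intro h
          rcases c1 with ⟨h', _⟩ | ⟨_, h'⟩
          · exact absurd h h'.not_gt
          · rcases c2 with ⟨_, h2⟩ | ⟨h2, _⟩
            · exact absurd (hn.1 h') h2.not_gt
            · exact h2
        · intro h
          rcases c2 with ⟨h', _⟩ | ⟨_, h'⟩
          · exact absurd h h'.not_gt
          · rcases c1 with ⟨_, h2⟩ | ⟨h2, _⟩
            · exact absurd (hn.2 h') h2.not_gt
            · exact h2

end Extension
end PosStell

/-! ### Matching roots of polynomials -/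

namespace PosStell
open scoped Polynomial

/-- A Cauchy type bound for the roots of a polynomial; squares are used in place of absolute
values so that the bound is a rational expression in the coefficients. -/
theorem abs_root_lt {R : Type*} [Field R] [LinearOrder R] [IsStrictOrderedRing R] {q : R[X]}
    (hq : q ≠ 0) {x : R} (hx : q.eval x = 0) :
    |x| < 2 + ∑ i ∈ Finset.range q.natDegree, (1 + (q.coeff i / q.leadingCoeff) ^ 2) := by
  have hS : ∀ i, |q.coeff i / q.leadingCoeff| ≤ 1 + (q.coeff i / q.leadingCoeff) ^ 2 := by
    intro i
    rw [← sq_abs]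
    nlinarith [sq_nonneg (|q.coeff i / q.leadingCoeff| - 1), abs_nonneg (q.coeff i / q.leadingCoeff)]
  have hS0 : 0 ≤ ∑ i ∈ Finset.range q.natDegree, (1 + (q.coeff i / q.leadingCoeff) ^ 2) :=
    Finset.sum_nonneg fun i _ => by positivity
  by_cases h1 : |x| ≤ 1
  · linarith
  push Not at h1
  have hlc : q.leadingCoeff ≠ 0 := by simpa using hq
  have hsum : x ^ q.natDegree = -∑ i ∈ Finset.range q.natDegree, q.coeff i / q.leadingCoeff * x ^ i := by
    rw [Polynomial.eval_eq_sum_range, Finset.sum_range_succ] at hx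
    have : ∑ i ∈ Finset.range q.natDegree, q.coeff i / q.leadingCoeff * x ^ i
        = (∑ i ∈ Finset.range q.natDegree, q.coeff i * x ^ i) / q.leadingCoeff := by
      rw [Finset.sum_div]
      exact Finset.sum_congr rfl fun i _ => by ring
    rw [this, eq_neg_iff_add_eq_zero]
    field_simp
    rw [Polynomial.coeff_natDegree] at hx
    linear_combination hx
  have hd : q.natDegree ≠ 0 := by
    intro h0
    rw [h0] at hsum
    simp at hsum
  obtain ⟨d, hd⟩ := Nat.exists_eq_succ_of_ne_zero hd
  have hle : |x| ^ q.natDegree ≤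
      (∑ i ∈ Finset.range q.natDegree, (1 + (q.coeff i / q.leadingCoeff) ^ 2)) * |x| ^ d := by
    rw [← abs_pow, hsum, abs_neg, Finset.sum_mul]
    refine (Finset.abs_sum_le_sum_abs _ _).trans (Finset.sum_le_sum fun i hi => ?_)
    rw [abs_mul, abs_pow]
    have : i ≤ d := by have := Finset.mem_range.1 hi; omega
    exact mul_le_mul (hS i) (pow_le_pow_right₀ h1.le this) (by positivity) (by positivity)
  rw [hd, pow_succ', ← hd] at hle
  have := le_of_mul_le_mul_right hle (by positivity)
  linarith

section Extension
variable {K R₁ R₂ : Type*} [Field K] [Field R₁] [LinearOrder R₁] [IsStrictOrderedRing R₁]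
  [Field R₂] [LinearOrder R₂] [IsStrictOrderedRing R₂]

/-- One algebraic extension step: a root `α` of a polynomial `q` of minimal degree without
all its `R₁`-roots in `K` is matched by some `β` in `R₂`. -/
theorem exists_same_sign_of_root (h₁ : IVP R₁) (h₂ : IVP R₂) (i₁ : K →+* R₁) (i₂ : K →+* R₂)
    (hpos : ∀ a, 0 < i₁ a ↔ 0 < i₂ a) (q : K[X]) (hq : q ≠ 0)
    (hr1 : ∀ u : K[X], u ≠ 0 → u.natDegree < q.natDegree →
      ∀ x, u.eval₂ i₁ x = 0 → x ∈ i₁.range)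
    (hr2 : ∀ u : K[X], u ≠ 0 → u.natDegree < q.natDegree →
      ∀ x, u.eval₂ i₂ x = 0 → x ∈ i₂.range)
    (α : R₁) (hα : q.eval₂ i₁ α = 0) (hαK : α ∉ i₁.range) :
    ∃ β : R₂, ∀ u : K[X], 0 < u.eval₂ i₁ α ↔ 0 < u.eval₂ i₂ β := by
  classical
  have hlt : ∀ a b, i₁ a < i₁ b ↔ i₂ a < i₂ b := by
    intro a b
    simpa using hpos (b - a)
  have hqK : ∀ c, q.eval c ≠ 0 := by
    intro c hc
    obtain ⟨v, hv⟩ := Polynomial.dvd_iff_isRoot.2 (show q.IsRoot c from hc)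
    have hv0 : v ≠ 0 := by rintro rfl; simp [hq] at hv
    have hdeg : v.natDegree < q.natDegree := by
      have := congrArg Polynomial.natDegree hv
      rw [Polynomial.natDegree_mul (Polynomial.X_sub_C_ne_zero c) hv0,
        Polynomial.natDegree_X_sub_C] at this
      omega
    have e1 : q.eval₂ i₁ α = (α - i₁ c) * v.eval₂ i₁ α := by
      rw [hv]; simp [Polynomial.eval₂_mul]
    rw [e1] at hα
    rcases mul_eq_zero.mp hα with h | h
    · exact hαK ⟨c, (sub_eq_zero.1 h).symm⟩
    · exact hαK (hr1 v hv0 hdeg α h)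
  have hcz : CharZero K := i₁.charZero
  have hdeg0 : q.natDegree ≠ 0 := by
    intro h0
    rw [Polynomial.eq_C_of_natDegree_eq_zero h0] at hα hq
    simp at hα hq
    exact hq hα
  have hder0 : q.derivative ≠ 0 := by
    intro h0
    exact hdeg0 (Polynomial.derivative_eq_zero.1 h0)
  have hderdeg : q.derivative.natDegree < q.natDegree := Polynomial.natDegree_derivative_lt hdeg0
  obtain ⟨M, hM⟩ : ∃ M : K, |α| < i₁ M := by
    refine ⟨2 + ∑ i ∈ Finset.range q.natDegree, (1 + (q.coeff i / q.leadingCoeff) ^ 2),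
      (abs_root_lt (q := q.map i₁) (x := α) ?_ ?_).trans_eq ?_⟩
    · exact (Polynomial.map_ne_zero_iff i₁.injective).2 hq
    · rwa [Polynomial.eval_map]
    · simp [map_ofNat i₁ 2]
  rw [abs_lt] at hM
  -- `(a, b)` is an interval around `α`, with endpoints from `K`, free of zeros in `K` of the
  -- derivative of `q`
  set S := q.derivative.roots.toFinset with hS
  obtain ⟨a, haS, hamax⟩ := Finset.exists_max_image (insert (-M) (S.filter (i₁ · < α))) i₁
    ⟨_, Finset.mem_insert_self _ _⟩
  obtain ⟨b, hbS, hbmin⟩ := Finset.exists_min_image (insert M (S.filter (α < i₁ ·))) i₁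
    ⟨_, Finset.mem_insert_self _ _⟩
  have haα : i₁ a < α := by
    rcases Finset.mem_insert.1 haS with rfl | h
    · simpa using hM.1
    · exact (Finset.mem_filter.1 h).2
  have hαb : α < i₁ b := by
    rcases Finset.mem_insert.1 hbS with rfl | h
    · exact hM.2
    · exact (Finset.mem_filter.1 h).2
  have hnoK : ∀ c, i₁ a < i₁ c → i₁ c < i₁ b → q.derivative.eval c ≠ 0 := by
    intro c h1 h2 h3
    have hc : c ∈ S := by simp [hS, hder0, h3]
    rcases lt_trichotomy (i₁ c) α with h | h | h
    · exact absurd (hamax c (by simp [hc, h])) (not_le.2 h1)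
    · exact hαK ⟨c, h⟩
    · exact absurd (hbmin c (by simp [hc, h])) (not_le.2 h2)
  have hab : i₁ a < i₁ b := haα.trans hαb
  have hab2 : i₂ a < i₂ b := (hlt a b).1 hab
  have hno1 : ∀ z, i₁ a < z → z < i₁ b → (q.map i₁).derivative.eval z ≠ 0 := by
    intro z e1 e2 e3
    rw [Polynomial.derivative_map, Polynomial.eval_map] at e3
    obtain ⟨c, rfl⟩ := hr1 _ hder0 hderdeg z e3
    rw [Polynomial.eval₂_at_apply, map_eq_zero] at e3
    exact hnoK c e1 e2 e3
  have hno2 : ∀ z, i₂ a < z → z < i₂ b → (q.map i₂).derivative.eval z ≠ 0 := by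
    intro z e1 e2 e3
    rw [Polynomial.derivative_map, Polynomial.eval_map] at e3
    obtain ⟨c, rfl⟩ := hr2 _ hder0 hderdeg z e3
    rw [Polynomial.eval₂_at_apply, map_eq_zero] at e3
    exact hnoK c ((hlt _ _).2 e1) ((hlt _ _).2 e2) e3
  have hm1 : q.map i₁ ≠ 0 := (Polynomial.map_ne_zero_iff i₁.injective).2 hq
  have hm2 : q.map i₂ ≠ 0 := (Polynomial.map_ne_zero_iff i₂.injective).2 hq
  have ev1 : ∀ c, (q.map i₁).eval (i₁ c) = i₁ (q.eval c) := fun c => by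
    rw [Polynomial.eval_map, Polynomial.eval₂_at_apply]
  have ev2 : ∀ c, (q.map i₂).eval (i₂ c) = i₂ (q.eval c) := fun c => by
    rw [Polynomial.eval_map, Polynomial.eval₂_at_apply]
  have ne1 : ∀ c, (q.map i₁).eval (i₁ c) ≠ 0 := fun c => by
    rw [ev1, Ne, map_eq_zero]; exact hqK c
  have ne2 : ∀ c, (q.map i₂).eval (i₂ c) ≠ 0 := fun c => by
    rw [ev2, Ne, map_eq_zero]; exact hqK c
  obtain ⟨s1, s2⟩ := h₁.sign_of_root hm1 haα hαb (by rwa [Polynomial.eval_map]) (ne1 a) (ne1 b) hno1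
  have hab' : (q.map i₂).eval (i₂ a) * (q.map i₂).eval (i₂ b) < 0 := by
    have := s2 (i₁ b) hαb le_rfl
    rw [ev1, ev1, ← map_mul, ← map_zero i₁, hlt, map_zero, mul_comm, map_mul, ← ev2, ← ev2] at this
    exact this
  obtain ⟨β, hβ1, hβ2, hβ0⟩ := h₂ _ _ _ hab2.le hab'.le
  have hβK : ∀ c, i₂ c ≠ β := by
    rintro c rfl
    exact ne2 c hβ0
  have haβ : i₂ a < β := lt_of_le_of_ne hβ1 (hβK a)
  have hβb : β < i₂ b := lt_of_le_of_ne hβ2 (hβK b).symm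
  obtain ⟨t1, t2⟩ := h₂.sign_of_root hm2 haβ hβb hβ0 (ne2 a) (ne2 b) hno2
  have key : ∀ c, i₁ c < α ↔ i₂ c < β := by
    intro c
    rcases lt_or_ge (i₁ c) (i₁ a) with h | h
    · exact ⟨fun _ => ((hlt _ _).1 h).trans haβ, fun _ => h.trans haα⟩
    rcases lt_or_ge (i₁ b) (i₁ c) with h' | h'
    · exact ⟨fun h'' => absurd (h''.trans (hαb.trans h')) (lt_irrefl _),
        fun h'' => absurd (h''.trans (hβb.trans ((hlt _ _).1 h'))) (lt_irrefl _)⟩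
    have k1 : i₂ a ≤ i₂ c := by
      by_contra hcon
      exact absurd ((hlt _ _).2 (not_le.1 hcon)) (not_lt.2 h)
    have k2 : i₂ c ≤ i₂ b := by
      by_contra hcon
      exact absurd ((hlt _ _).2 (not_le.1 hcon)) (not_lt.2 h')
    constructor
    · intro hc
      have := s1 _ h hc
      rw [ev1, ev1, ← map_mul, hpos, map_mul, ← ev2, ← ev2] at this
      by_contra hcon
      have hcon' : β < i₂ c := lt_of_le_of_ne (not_lt.1 hcon) (hβK c).symm
      exact absurd this (t2 _ hcon' k2).not_gt
    · intro hc
      have := t1 _ k1 hc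
      rw [ev2, ev2, ← map_mul, ← hpos, map_mul, ← ev1, ← ev1] at this
      by_contra hcon
      have hcon' : α < i₁ c := lt_of_le_of_ne (not_lt.1 hcon) (fun e => hαK ⟨c, e.symm⟩)
      exact absurd this (s2 _ hcon' h').not_gt
  have key' : ∀ c, α < i₁ c ↔ β < i₂ c := by
    intro c
    have h1 : α ≠ i₁ c := fun e => hαK ⟨c, e.symm⟩
    rw [← not_iff_not, not_lt, not_lt, h1.symm.le_iff_lt, (hβK c).le_iff_lt, key]
  refine ⟨β, fun u => ?_⟩
  -- only the remainder modulo `q` matters, and its degree is smaller than that of `q`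
  have hqβ : q.eval₂ i₂ β = 0 := by rwa [Polynomial.eval_map] at hβ0
  have hdm := EuclideanDomain.mod_add_div u q
  have hmod1 : u.eval₂ i₁ α = (u % q).eval₂ i₁ α := by
    conv_lhs => rw [← hdm]
    rw [Polynomial.eval₂_add, Polynomial.eval₂_mul, hα, zero_mul, add_zero]
  have hmod2 : u.eval₂ i₂ β = (u % q).eval₂ i₂ β := by
    conv_lhs => rw [← hdm]
    rw [Polynomial.eval₂_add, Polynomial.eval₂_mul, hqβ, zero_mul, add_zero]
  rw [hmod1, hmod2]
  have hdl : (u % q).natDegree < q.natDegree := Polynomial.natDegree_mod_lt u hdeg0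
  exact (pos_iff_of_cut h₁ h₂ i₁ i₂ hpos α β key key' _ (u % q) le_rfl
    (fun x hx hu => hr1 _ hu hdl x hx) (fun x hx hu => hr2 _ hu hdl x hx)).1

end Extension
end PosStell

/-! ### Embedding ordered fields -/

namespace PosStell
open scoped Polynomial

section Embedding
variable {R₁ R₂ : Type*} [Field R₁] [LinearOrder R₁] [IsStrictOrderedRing R₁]
  [Field R₂] [LinearOrder R₂] [IsStrictOrderedRing R₂]

/-- A subring of `R₁ × R₂` is sign compatible if the two components of each of its elements are
simultaneously positive: it is then the graph of an order isomorphism between subrings of `R₁`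
and `R₂`. -/
def SignCompat (G : Subring (R₁ × R₂)) : Prop := ∀ x ∈ G, 0 < x.1 ↔ 0 < x.2

theorem SignCompat.fst_eq_zero {G : Subring (R₁ × R₂)} (hG : SignCompat G) {x : R₁ × R₂}
    (hx : x ∈ G) : x.1 = 0 ↔ x.2 = 0 := by
  have h1 := hG x hx
  have h2 := hG (-x) (G.neg_mem hx)
  simp only [Prod.fst_neg, Prod.snd_neg, neg_pos] at h2
  constructor
  · intro h
    rw [h] at h1 h2
    exact le_antisymm (not_lt.1 fun h' => lt_irrefl _ (h1.2 h'))
      (not_lt.1 fun h' => lt_irrefl _ (h2.2 h'))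
  · intro h
    rw [h] at h1 h2
    exact le_antisymm (not_lt.1 fun h' => lt_irrefl _ (h1.1 h'))
      (not_lt.1 fun h' => lt_irrefl _ (h2.1 h'))

theorem exists_maximal_signCompat (G₀ : Subring (R₁ × R₂)) (h₀ : SignCompat G₀) :
    ∃ G : Subring (R₁ × R₂), G₀ ≤ G ∧ SignCompat G ∧ ∀ G', G ≤ G' → SignCompat G' → G' ≤ G := by
  obtain ⟨G, hle, hG⟩ := zorn_le_nonempty₀ {G : Subring (R₁ × R₂) | SignCompat G} (by
    intro c hc hchain y hy
    refine ⟨sSup c, ?_, fun z hz => le_sSup hz⟩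
    intro x hx
    obtain ⟨G, hGc, hxG⟩ := (Subring.mem_sSup_of_directedOn ⟨y, hy⟩ hchain.directedOn).1 hx
    exact hc hGc x hxG) G₀ h₀
  exact ⟨G, hle, hG.prop, fun G' h1 h2 => hG.le_of_ge h2 h1⟩

/-- First projection of a subring of `R₁ × R₂`. -/
def proj₁ (G : Subring (R₁ × R₂)) : G →+* R₁ := (RingHom.fst R₁ R₂).comp G.subtype

/-- Second projection of a subring of `R₁ × R₂`. -/
def proj₂ (G : Subring (R₁ × R₂)) : G →+* R₂ := (RingHom.snd R₁ R₂).comp G.subtype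

/-- A pair `(α, β)` at which all polynomials over a maximal `G` have the same sign belongs to
`G`. -/
theorem mem_of_maximal {G : Subring (R₁ × R₂)}
    (hmax : ∀ G', G ≤ G' → SignCompat G' → G' ≤ G) (α : R₁) (β : R₂)
    (h : ∀ u : G[X], 0 < u.eval₂ (proj₁ G) α ↔ 0 < u.eval₂ (proj₂ G) β) : (α, β) ∈ G := by
  let φ : G[X] →+* R₁ × R₂ := Polynomial.eval₂RingHom G.subtype (α, β)
  refine hmax φ.range ?_ ?_ ⟨Polynomial.X, by simp [φ]⟩
  · intro x hx
    exact ⟨Polynomial.C ⟨x, hx⟩, by simp [φ]⟩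
  · rintro _ ⟨u, rfl⟩
    have h1 : (φ u).1 = u.eval₂ (proj₁ G) α := Polynomial.hom_eval₂ u G.subtype (RingHom.fst R₁ R₂) (α, β)
    have h2 : (φ u).2 = u.eval₂ (proj₂ G) β := Polynomial.hom_eval₂ u G.subtype (RingHom.snd R₁ R₂) (α, β)
    rw [h1, h2]
    exact h u

theorem inv_mem_of_maximal {G : Subring (R₁ × R₂)} (hG : SignCompat G)
    (hmax : ∀ G', G ≤ G' → SignCompat G' → G' ≤ G) {e : R₁ × R₂} (he : e ∈ G) (he1 : e.1 ≠ 0) :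
    (e.1⁻¹, e.2⁻¹) ∈ G := by
  have he2 : e.2 ≠ 0 := fun h => he1 ((hG.fst_eq_zero he).2 h)
  let G' : Subring (R₁ × R₂) :=
    { carrier := {x | ∃ N : ℕ, x * e ^ N ∈ G}
      mul_mem' := by
        rintro x y ⟨N, hN⟩ ⟨M, hM⟩
        refine ⟨N + M, ?_⟩
        have := G.mul_mem hN hM
        rwa [show x * e ^ N * (y * e ^ M) = x * y * e ^ (N + M) by ring] at this
      one_mem' := ⟨0, by simp [G.one_mem]⟩
      add_mem' := by
        rintro x y ⟨N, hN⟩ ⟨M, hM⟩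
        refine ⟨N + M, ?_⟩
        have := G.add_mem (G.mul_mem hN (G.pow_mem he M)) (G.mul_mem hM (G.pow_mem he N))
        rwa [show x * e ^ N * e ^ M + y * e ^ M * e ^ N = (x + y) * e ^ (N + M) by ring] at this
      zero_mem' := ⟨0, by simp [G.zero_mem]⟩
      neg_mem' := by
        rintro x ⟨N, hN⟩
        exact ⟨N, by rw [neg_mul]; exact G.neg_mem hN⟩ }
  refine hmax G' (fun x hx => ⟨0, by simpa using hx⟩) ?_ ⟨1, ?_⟩
  · rintro x ⟨N, hN⟩
    have := hG _ (G.mul_mem hN (G.pow_mem he N))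
    simp only [Prod.fst_mul, Prod.snd_mul, Prod.pow_fst, Prod.pow_snd, mul_assoc, ← pow_add] at this
    rwa [mul_pos_iff_of_pos_right (Even.pow_pos ⟨N, rfl⟩ he1),
      mul_pos_iff_of_pos_right (Even.pow_pos ⟨N, rfl⟩ he2)] at this
  · have : ((e.1⁻¹, e.2⁻¹) : R₁ × R₂) * e ^ 1 = 1 := by
      ext <;> simp [he1, he2]
    rw [this]
    exact G.one_mem

theorem isField_of_maximal {G : Subring (R₁ × R₂)} (hG : SignCompat G)
    (hmax : ∀ G', G ≤ G' → SignCompat G' → G' ≤ G) : IsField G where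
  exists_pair_ne := ⟨0, 1, by
    intro h
    have := congrArg (proj₁ G) h
    simp at this⟩
  mul_comm := mul_comm
  mul_inv_cancel := by
    rintro ⟨e, he⟩ hne
    have he1 : e.1 ≠ 0 := by
      intro h
      apply hne
      exact Subtype.ext (Prod.ext h ((hG.fst_eq_zero he).1 h))
    have he2 : e.2 ≠ 0 := fun h => he1 ((hG.fst_eq_zero he).2 h)
    exact ⟨⟨_, inv_mem_of_maximal hG hmax he he1⟩, Subtype.ext (Prod.ext (by simp [he1]) (by simp [he2]))⟩

/-- A maximal sign compatible graph is relatively algebraically closed on both sides. -/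
theorem roots_mem_of_maximal (h₁ : IVP R₁) (h₂ : IVP R₂) {G : Subring (R₁ × R₂)}
    (hG : SignCompat G) (hmax : ∀ G', G ≤ G' → SignCompat G' → G' ≤ G) (n : ℕ) :
    ∀ u : G[X], u ≠ 0 → u.natDegree = n →
      (∀ x, u.eval₂ (proj₁ G) x = 0 → x ∈ (proj₁ G).range) ∧
      (∀ x, u.eval₂ (proj₂ G) x = 0 → x ∈ (proj₂ G).range) := by
  induction n using Nat.strong_induction_on with
  | _ n ih =>
  intro u hu hn
  let _ : Field G := (isField_of_maximal hG hmax).toField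
  have hpos : ∀ a : G, 0 < proj₁ G a ↔ 0 < proj₂ G a := fun a => hG a.1 a.2
  refine ⟨fun α hα => ?_, fun β hβ => ?_⟩
  · by_contra hcon
    obtain ⟨β, hβ⟩ := exists_same_sign_of_root h₁ h₂ (proj₁ G) (proj₂ G) hpos u hu
      (fun v hv hvn => (ih _ (hn ▸ hvn) v hv rfl).1)
      (fun v hv hvn => (ih _ (hn ▸ hvn) v hv rfl).2) α hα hcon
    exact hcon ⟨⟨_, mem_of_maximal hmax α β hβ⟩, rfl⟩
  · by_contra hcon
    obtain ⟨α, hα⟩ := exists_same_sign_of_root h₂ h₁ (proj₂ G) (proj₁ G) (fun a => (hpos a).symm) u hu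
      (fun v hv hvn => (ih _ (hn ▸ hvn) v hv rfl).2)
      (fun v hv hvn => (ih _ (hn ▸ hvn) v hv rfl).1) β hβ hcon
    exact hcon ⟨⟨_, mem_of_maximal hmax α β fun v => (hα v).symm⟩, rfl⟩

/-- Countable gaps are filled: a countable set lying below a countable set can be separated
from it strictly. -/
def CountablySaturated (R : Type*) [LinearOrder R] : Prop :=
  ∀ A B : Set R, A.Countable → B.Countable → (∀ a ∈ A, ∀ b ∈ B, a < b) →
    ∃ y, (∀ a ∈ A, a < y) ∧ ∀ b ∈ B, y < b

/-- A countable ordered field with the intermediate value property embeds into every countably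
saturated one, extending a prescribed sign compatible graph. -/
theorem exists_ordered_embedding [Countable R₁] (h₁ : IVP R₁) (h₂ : IVP R₂)
    (hsat : CountablySaturated R₂) (G₀ : Subring (R₁ × R₂)) (h₀ : SignCompat G₀) :
    ∃ φ : R₁ →+* R₂, (∀ x ∈ G₀, φ x.1 = x.2) ∧ ∀ x, 0 ≤ x → 0 ≤ φ x := by
  obtain ⟨G, hle, hG, hmax⟩ := exists_maximal_signCompat G₀ h₀
  have hpos : ∀ a : G, 0 < proj₁ G a ↔ 0 < proj₂ G a := fun a => hG a.1 a.2
  have hinj : Function.Injective (proj₁ G) := by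
    rw [injective_iff_map_eq_zero]
    rintro ⟨a, ha⟩ h
    exact Subtype.ext (Prod.ext h ((hG.fst_eq_zero ha).1 h))
  have hcount : Countable G := hinj.countable
  have hlt : ∀ a b : G, proj₁ G a < proj₁ G b ↔ proj₂ G a < proj₂ G b := by
    intro a b
    simpa using hpos (b - a)
  have hsurj : Function.Surjective (proj₁ G) := by
    intro x
    by_contra hcon
    push Not at hcon
    obtain ⟨y, hy1, hy2⟩ := hsat (proj₂ G '' {c | proj₁ G c < x}) (proj₂ G '' {c | x < proj₁ G c})
      ((Set.to_countable _).image _) ((Set.to_countable _).image _) (by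
        rintro _ ⟨a, ha, rfl⟩ _ ⟨b, hb, rfl⟩
        exact (hlt a b).1 (lt_trans ha hb))
    simp only [Set.mem_image, Set.mem_ofPred_eq, forall_exists_index, and_imp,
      forall_apply_eq_imp_iff₂] at hy1 hy2
    have hcut : ∀ c, proj₁ G c < x ↔ proj₂ G c < y := by
      intro c
      refine ⟨hy1 c, fun h => ?_⟩
      by_contra hc
      exact lt_asymm h (hy2 c (lt_of_le_of_ne (not_lt.1 hc) (hcon c).symm))
    have hcut' : ∀ c, x < proj₁ G c ↔ y < proj₂ G c := by
      intro c
      refine ⟨hy2 c, fun h => ?_⟩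
      by_contra hc
      exact lt_asymm h (hy1 c (lt_of_le_of_ne (not_lt.1 hc) (hcon c)))
    have hmem : (x, y) ∈ G := by
      apply mem_of_maximal hmax
      intro u
      let _ : Field G := (isField_of_maximal hG hmax).toField
      exact (pos_iff_of_cut h₁ h₂ (proj₁ G) (proj₂ G) hpos x y hcut hcut' _ u le_rfl
        (fun z hz hu => (roots_mem_of_maximal h₁ h₂ hG hmax _ u hu rfl).1 z hz)
        (fun z hz hu => (roots_mem_of_maximal h₁ h₂ hG hmax _ u hu rfl).2 z hz)).1
    exact hcon ⟨_, hmem⟩ rfl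
  let e : G ≃+* R₁ := RingEquiv.ofBijective (proj₁ G) ⟨hinj, hsurj⟩
  have he : ∀ a : G, e.symm (proj₁ G a) = a := fun a => e.symm_apply_apply a
  refine ⟨(proj₂ G).comp (e.symm : R₁ →+* G), ?_, ?_⟩
  · intro x hx
    have := he ⟨x, hle hx⟩
    change proj₂ G (e.symm x.1) = x.2
    change e.symm x.1 = _ at this
    rw [this]
    rfl
  · intro x hx
    obtain ⟨a, rfl⟩ := hsurj x
    change 0 ≤ proj₂ G (e.symm (proj₁ G a))
    rw [he]
    rcases hx.eq_or_lt with h | h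
    · exact ((hG.fst_eq_zero a.2).1 h.symm).ge
    · exact ((hpos a).1 h).le

end Embedding
end PosStell

/-! ### Hyperreal numbers -/

namespace PosStell
open scoped Polynomial
open Filter

/-- The class of a real sequence in the hyperreals, as a ring homomorphism. -/
def seqHom : (ℕ → ℝ) →+* Hyperreal := Germ.coeRingHom (hyperfilter ℕ : Filter ℕ)

theorem seqHom_surjective : Function.Surjective seqHom := Quot.exists_rep

theorem seqHom_lt {f g : ℕ → ℝ} : seqHom f < seqHom g ↔ ∀ᶠ j in hyperfilter ℕ, f j < g j :=
  Hyperreal.ofSeq_lt_ofSeq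

theorem seqHom_le {f g : ℕ → ℝ} : seqHom f ≤ seqHom g ↔ ∀ᶠ j in hyperfilter ℕ, f j ≤ g j :=
  Hyperreal.ofSeq_le_ofSeq

theorem seqHom_eq {f g : ℕ → ℝ} : seqHom f = seqHom g ↔ ∀ᶠ j in hyperfilter ℕ, f j = g j :=
  Germ.coe_eq

/-- The intermediate value theorem is applied in each component of the representing sequences. -/
theorem ivp_hyperreal : IVP Hyperreal := by
  intro p a b hab hp
  obtain ⟨P, rfl⟩ := Polynomial.map_surjective seqHom seqHom_surjective p
  obtain ⟨a, rfl⟩ := seqHom_surjective a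
  obtain ⟨b, rfl⟩ := seqHom_surjective b
  simp only [Polynomial.eval_map, Polynomial.eval₂_at_apply] at hp ⊢
  have hev : ∀ (c : ℕ → ℝ) j, P.eval c j = (P.map (Pi.evalRingHom (fun _ => ℝ) j)).eval (c j) := by
    intro c j
    rw [Polynomial.eval_map]
    exact (Polynomial.eval₂_at_apply (Pi.evalRingHom (fun _ => ℝ) j) c).symm
  rw [← map_mul, ← map_zero seqHom, seqHom_le] at hp
  rw [seqHom_le] at hab
  have hex : ∀ j, ∃ c, a j ≤ b j → (P.eval a * P.eval b) j ≤ 0 →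
      a j ≤ c ∧ c ≤ b j ∧ (P.map (Pi.evalRingHom (fun _ => ℝ) j)).eval c = 0 := by
    intro j
    by_cases h : a j ≤ b j ∧ (P.eval a * P.eval b) j ≤ 0
    · have h0 : (0 : ℝ) ∈ Set.uIcc ((P.map (Pi.evalRingHom (fun _ => ℝ) j)).eval (a j))
          ((P.map (Pi.evalRingHom (fun _ => ℝ) j)).eval (b j)) := by
        have h2 := h.2
        rw [Pi.mul_apply, hev, hev] at h2
        rw [Set.mem_uIcc]
        rcases mul_nonpos_iff.1 h2 with h | h
        · exact Or.inr ⟨h.2, h.1⟩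
        · exact Or.inl h
      obtain ⟨c, hc, hc0⟩ := intermediate_value_uIcc
        (Polynomial.continuous (P.map (Pi.evalRingHom (fun _ => ℝ) j))).continuousOn h0
      rw [Set.uIcc_of_le h.1] at hc
      exact ⟨c, fun _ _ => ⟨hc.1, hc.2, hc0⟩⟩
    · exact ⟨0, fun h1 h2 => absurd ⟨h1, h2⟩ h⟩
  choose c hc using hex
  refine ⟨seqHom c, ?_, ?_, ?_⟩
  · rw [seqHom_le]
    filter_upwards [hab, hp] with j h1 h2 using (hc j h1 h2).1
  · rw [seqHom_le]
    filter_upwards [hab, hp] with j h1 h2 using (hc j h1 h2).2.1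
  · rw [Polynomial.eval₂_at_apply, ← map_zero seqHom, seqHom_eq]
    filter_upwards [hab, hp] with j h1 h2
    rw [hev]
    exact (hc j h1 h2).2.2

/-- Diagonal argument: the `j`-th component of the separating element separates the `j`-th
components of as many of the first members of the two sets as possible. -/
theorem countablySaturated_hyperreal : CountablySaturated Hyperreal := by
  classical
  intro A B hA hB hAB
  obtain ⟨ι, hι⟩ := Set.countable_iff_exists_injOn.1 hA
  obtain ⟨κ, hκ⟩ := Set.countable_iff_exists_injOn.1 hB
  choose rep hrep using seqHom_surjective
  have hfinA : ∀ N, {a ∈ A | ι a < N}.Finite := fun N =>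
    Set.Finite.of_finite_image ((Set.finite_lt_nat N).subset (by rintro _ ⟨a, ha, rfl⟩; exact ha.2))
      (hι.mono fun a ha => ha.1)
  have hfinB : ∀ N, {a ∈ B | κ a < N}.Finite := fun N =>
    Set.Finite.of_finite_image ((Set.finite_lt_nat N).subset (by rintro _ ⟨a, ha, rfl⟩; exact ha.2))
      (hκ.mono fun a ha => ha.1)
  let P : ℕ → ℕ → Prop := fun j N =>
    ∀ a ∈ {a ∈ A | ι a < N}, ∀ b ∈ {b ∈ B | κ b < N}, rep a j < rep b j
  have hP : ∀ N, ∀ᶠ j in hyperfilter ℕ, P j N := by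
    intro N
    refine (eventually_all_finite (hfinA N)).2 fun a ha =>
      (eventually_all_finite (hfinB N)).2 fun b hb => ?_
    rw [← seqHom_lt, hrep, hrep]
    exact hAB a ha.1 b hb.1
  have hP0 : ∀ j, P j 0 := fun j a ha => absurd ha.2 (Nat.not_lt_zero _)
  -- the `j`-th term separates as many of the first conditions as it consistently can
  have hex : ∀ j, ∃ y : ℝ, (∀ a ∈ A, ι a < Nat.findGreatest (P j) j → rep a j < y) ∧
      ∀ b ∈ B, κ b < Nat.findGreatest (P j) j → y < rep b j := by
    intro j
    have hPj : P j (Nat.findGreatest (P j) j) := Nat.findGreatest_spec (Nat.zero_le j) (hP0 j)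
    obtain ⟨y, hy1, hy2⟩ := Order.exists_between_finsets
      ((hfinA (Nat.findGreatest (P j) j)).toFinset.image fun a => rep a j)
      ((hfinB (Nat.findGreatest (P j) j)).toFinset.image fun a => rep a j) (by
        intro x hx z hz
        obtain ⟨a, ha, rfl⟩ := Finset.mem_image.1 hx
        obtain ⟨b, hb, rfl⟩ := Finset.mem_image.1 hz
        exact hPj a ((Set.Finite.mem_toFinset _).1 ha) b ((Set.Finite.mem_toFinset _).1 hb))
    refine ⟨y, fun a ha h => hy1 _ (Finset.mem_image_of_mem (fun a => rep a j)
        ((Set.Finite.mem_toFinset _).2 ⟨ha, h⟩)),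
      fun a ha h => hy2 _ (Finset.mem_image_of_mem (fun a => rep a j)
        ((Set.Finite.mem_toFinset _).2 ⟨ha, h⟩))⟩
  choose y hy using hex
  have hbig : ∀ N, ∀ᶠ j in hyperfilter ℕ, N < Nat.findGreatest (P j) j := by
    intro N
    have h1 : ∀ᶠ j in hyperfilter ℕ, N + 1 ≤ j :=
      Nat.hyperfilter_le_atTop (eventually_ge_atTop (N + 1))
    filter_upwards [h1, hP (N + 1)] with j h1 h2
    exact Nat.le_findGreatest h1 h2
  refine ⟨seqHom y, fun a ha => ?_, fun b hb => ?_⟩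
  · rw [← hrep a, seqHom_lt]
    filter_upwards [hbig (ι a)] with j hj using (hy j).1 a ha hj
  · rw [← hrep b, seqHom_lt]
    filter_upwards [hbig (κ b)] with j hj using (hy j).2 b hb hj

end PosStell

/-! ### The weak Positivstellensatz -/

namespace PosStell
open Filter

/-- The preordering generated by a set `S`: the smallest subsemiring containing `S` and all
squares. -/
def preord {A : Type*} [CommRing A] (S : Set A) : Subsemiring A :=
  Subsemiring.closure (Set.range (fun a => a * a) ∪ S)

theorem mul_self_mem_preord {A : Type*} [CommRing A] (S : Set A) (a : A) : a * a ∈ preord S :=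
  Subsemiring.subset_closure (Or.inl ⟨a, rfl⟩)

theorem mem_preord_of_mem {A : Type*} [CommRing A] {S : Set A} {a : A} (ha : a ∈ S) :
    a ∈ preord S :=
  Subsemiring.subset_closure (Or.inr ha)

/-- A polynomial ring over `ℤ` with one variable for each coordinate and one for each
coefficient of a member of `S`; it is countable when `S` is. -/
abbrev CoeffRing {n : ℕ} (S : Set (MvPolynomial (Fin n) ℝ)) : Type :=
  MvPolynomial (Fin n ⊕ (S × (Fin n →₀ ℕ))) ℤ

/-- Weak Positivstellensatz: a finite system of polynomial inequalities without real solution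
is refuted by an identity `-1 = t` with `t` in the generated preordering. -/
theorem exists_point_of_neg_one_notMem {n : ℕ} (S : Set (MvPolynomial (Fin n) ℝ)) (hS : S.Finite)
    (hneg : (-1 : MvPolynomial (Fin n) ℝ) ∉ preord S) : ∃ x : Fin n → ℝ, ∀ s ∈ S, 0 ≤ eval x s := by
  have hcS : Countable S := hS.countable
  have hcA : Countable (CoeffRing S) := AddMonoidAlgebra.coeffEquiv.injective.countable
  let χ : CoeffRing S →+* MvPolynomial (Fin n) ℝ := MvPolynomial.eval₂Hom (Int.castRingHom _)
    (Sum.elim (fun i => X i) fun c => C (coeff c.2 c.1.1))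
  have hχl : ∀ i, χ (X (Sum.inl i)) = X i := by intro i; simp [χ, MvPolynomial.eval₂Hom_X']
  have hχr : ∀ c, χ (X (Sum.inr c)) = C (coeff c.2 c.1.1) := by intro c; simp [χ, MvPolynomial.eval₂Hom_X']
  have hSχ : ∀ s ∈ S, s ∈ χ.range := by
    intro s hs
    rw [s.as_sum]
    refine Subring.sum_mem _ fun v _ => ?_
    rw [monomial_eq]
    refine Subring.mul_mem _ ⟨X (Sum.inr (⟨s, hs⟩, v)), hχr _⟩ ?_
    exact Subring.prod_mem _ fun i _ =>
      Subring.pow_mem _ (RingHom.mem_range.2 ⟨X (Sum.inl i), hχl i⟩) _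
  obtain ⟨R, _, _, _, hR, _, ρ, hρ⟩ := exists_realClosed ((preord S).comap χ)
    (fun a => by
      rw [Subsemiring.mem_comap, map_mul]
      exact mul_self_mem_preord S (χ a))
    (by rw [Subsemiring.mem_comap, map_neg, map_one]; exact hneg)
  have hnn : ∀ (a : CoeffRing S) (r : ℝ), χ a = C r → 0 ≤ r → 0 ≤ ρ a := by
    intro a r h hr
    apply hρ
    rw [Subsemiring.mem_comap, h, ← Real.mul_self_sqrt hr, C_mul]
    exact mul_self_mem_preord S _
  -- since `ℝ` is archimedean, a positive constant `r` satisfies `N * r - 1 ≥ 0` for some `N`,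
  -- so its image is not infinitesimal and in particular not zero
  have hpos : ∀ (a : CoeffRing S) (r : ℝ), χ a = C r → (0 < ρ a ↔ 0 < r) := by
    intro a r h
    constructor
    · intro ha
      by_contra hr
      have := hnn (-a) (-r) (by rw [map_neg, h, C_neg]) (by linarith)
      rw [map_neg] at this
      linarith
    · intro hr
      obtain ⟨N, hN⟩ := exists_nat_ge (1 / r)
      have h1 : 1 ≤ N * r := by rwa [div_le_iff₀ hr] at hN
      have := hnn (N * a - 1) (N * r - 1) (by simp [h]) (by linarith)
      rw [map_sub, map_mul, map_natCast, map_one] at this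
      by_contra hcon
      have h2 : (N : R) * ρ a ≤ 0 := mul_nonpos_of_nonneg_of_nonpos (Nat.cast_nonneg N) (not_lt.1 hcon)
      linarith
  -- elements of the coefficient ring that represent real constants are matched with the classes
  -- of constant sequences
  let G₀ : Subring (R × Hyperreal) :=
    { carrier := {x | ∃ (a : CoeffRing S) (r : ℝ), χ a = C r ∧ x = (ρ a, seqHom fun _ => r)}
      mul_mem' := by
        rintro _ _ ⟨a, r, h, rfl⟩ ⟨b, t, h', rfl⟩
        exact ⟨a * b, r * t, by rw [map_mul, h, h', C_mul], by
          rw [map_mul, Prod.mk_mul_mk, ← map_mul]; rfl⟩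
      one_mem' := ⟨1, 1, by simp, by
        rw [map_one]
        exact Prod.ext rfl (map_one seqHom).symm⟩
      add_mem' := by
        rintro _ _ ⟨a, r, h, rfl⟩ ⟨b, t, h', rfl⟩
        exact ⟨a + b, r + t, by rw [map_add, h, h', C_add], by
          rw [map_add, Prod.mk_add_mk, ← map_add]; rfl⟩
      zero_mem' := ⟨0, 0, by simp, by
        rw [map_zero]
        exact Prod.ext rfl (map_zero seqHom).symm⟩
      neg_mem' := by
        rintro _ ⟨a, r, h, rfl⟩
        exact ⟨-a, -r, by rw [map_neg, h, C_neg], by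
          rw [map_neg, Prod.neg_mk, ← map_neg]; rfl⟩ }
  have hG₀ : SignCompat G₀ := by
    rintro _ ⟨a, r, h, rfl⟩
    change 0 < ρ a ↔ 0 < seqHom fun _ => r
    rw [hpos a r h, ← map_zero seqHom, seqHom_lt]
    simp
  obtain ⟨φ, hφ, hφ0⟩ := exists_ordered_embedding hR ivp_hyperreal countablySaturated_hyperreal G₀ hG₀
  choose y hy using fun i => seqHom_surjective (φ (ρ (X (Sum.inl i))))
  let E : CoeffRing S →+* (ℕ → ℝ) := RingHom.pi fun j => (eval fun i => y i j).comp χ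
  have hkey : φ.comp ρ = seqHom.comp E := by
    apply MvPolynomial.ringHom_ext
    · intro z
      simp
    · rintro (i | c)
      · simp only [RingHom.comp_apply, ← hy]
        congr 1
        funext j
        change _ = eval _ (χ _)
        rw [hχl, eval_X]
      · have := hφ _ (show (_, _) ∈ G₀ from ⟨X (Sum.inr c), _, hχr c, rfl⟩)
        simp only [RingHom.comp_apply]
        refine this.trans (congrArg seqHom ?_)
        funext j
        change _ = eval _ (χ _)
        rw [hχr, eval_C]
  have hev : ∀ s ∈ S, ∀ᶠ j in hyperfilter ℕ, 0 ≤ eval (fun i => y i j) s := by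
    intro s hs
    obtain ⟨a, rfl⟩ := hSχ s hs
    have h1 : 0 ≤ φ (ρ a) := hφ0 _ (hρ a (Subsemiring.mem_comap.2 (mem_preord_of_mem hs)))
    have h2 : φ (ρ a) = seqHom (E a) := RingHom.congr_fun hkey a
    rw [h2, ← map_zero seqHom, seqHom_le] at h1
    exact h1
  obtain ⟨j, hj⟩ := ((eventually_all_finite hS).2 hev).exists
  exact ⟨_, hj⟩

end PosStell

/-! ### Positive functionals -/

namespace PosStell

section Functional
variable {E : Type*} [CommRing E]

/-- Products of squares and generators are, up to a square factor, square free products of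
generators. -/
theorem exists_form_of_mem_closure {m : ℕ} (g : Fin m → E) {x : E}
    (hx : x ∈ Submonoid.closure (Set.range (fun a : E => a * a) ∪ Set.range g)) :
    ∃ (a : E) (ν : Fin m → Bool), x = a * a * ∏ j, (if ν j then g j else 1) := by
  induction hx using Submonoid.closure_induction with
  | mem x hx =>
    rcases hx with ⟨a, rfl⟩ | ⟨i, rfl⟩
    · exact ⟨a, fun _ => false, by simp⟩
    · refine ⟨1, fun j => decide (j = i), ?_⟩
      simp
  | one => exact ⟨1, fun _ => false, by simp⟩
  | mul x y _ _ hx hy =>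
    obtain ⟨a, ν, rfl⟩ := hx
    obtain ⟨b, μ, rfl⟩ := hy
    refine ⟨a * b * ∏ j, (if ν j && μ j then g j else 1), fun j => xor (ν j) (μ j), ?_⟩
    have : (∏ j, (if ν j then g j else 1)) * ∏ j, (if μ j then g j else 1)
        = (∏ j, (if ν j && μ j then g j else 1)) * (∏ j, (if ν j && μ j then g j else 1))
          * ∏ j, (if xor (ν j) (μ j) then g j else 1) := by
      simp only [← Finset.prod_mul_distrib]
      refine Finset.prod_congr rfl fun j _ => ?_
      cases ν j <;> cases μ j <;> simp
    linear_combination (a * a * (b * b)) * this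

/-- Nonnegativity on `genPreordering g` is nonnegativity on the subsemiring generated by the squares
and `g`. -/
theorem nonneg_on_preord [Module ℝ E] {m : ℕ} (g : Fin m → E) (L : E →ₗ[ℝ] ℝ)
    (hL : ∀ c ∈ genPreordering g, 0 ≤ L c) : ∀ c ∈ preord (Set.range g), 0 ≤ L c := by
  intro c hc
  rw [preord, Subsemiring.mem_closure_iff] at hc
  induction hc using AddSubmonoid.closure_induction with
  | mem x hx =>
    obtain ⟨a, ν, rfl⟩ := exists_form_of_mem_closure g hx
    apply hL
    refine ⟨Pi.single ν (a * a), fun μ => ?_, ?_⟩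
    · rcases eq_or_ne μ ν with rfl | h
      · rw [Pi.single_eq_same]
        exact IsSumSq.mul_self a
      · rw [Pi.single_eq_of_ne h]
        exact IsSumSq.zero
    · rw [Finset.sum_eq_single ν]
      · rw [Pi.single_eq_same]
      · intro μ _ h
        rw [Pi.single_eq_of_ne h, zero_mul]
      · simp
  | zero => simp
  | add x y _ _ hx hy => rw [map_add]; exact add_nonneg hx hy

theorem exists_of_mem_preord_insert {S : Set E} {h x : E} (hx : x ∈ preord (insert h S)) :
    ∃ s ∈ preord S, ∃ t ∈ preord S, x = s + h * t := by
  let P : Subsemiring E :=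
    { carrier := {x | ∃ s ∈ preord S, ∃ t ∈ preord S, x = s + h * t}
      mul_mem' := by
        rintro _ _ ⟨s, hs, t, ht, rfl⟩ ⟨s', hs', t', ht', rfl⟩
        exact ⟨s * s' + h * h * (t * t'), add_mem (mul_mem hs hs')
          (mul_mem (mul_self_mem_preord S h) (mul_mem ht ht')), s * t' + t * s',
          add_mem (mul_mem hs ht') (mul_mem ht hs'), by ring⟩
      one_mem' := ⟨1, one_mem _, 0, zero_mem _, by simp⟩
      add_mem' := by
        rintro _ _ ⟨s, hs, t, ht, rfl⟩ ⟨s', hs', t', ht', rfl⟩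
        exact ⟨s + s', add_mem hs hs', t + t', add_mem ht ht', by ring⟩
      zero_mem' := ⟨0, zero_mem _, 0, zero_mem _, by simp⟩ }
  have : preord (insert h S) ≤ P := by
    refine Subsemiring.closure_le.2 ?_
    rintro _ (⟨a, rfl⟩ | hy)
    · exact ⟨_, mul_self_mem_preord S a, 0, zero_mem _, by simp⟩
    · rcases hy with rfl | hy
      · exact ⟨0, zero_mem _, 1, one_mem _, by simp⟩
      · exact ⟨_, mem_preord_of_mem hy, 0, zero_mem _, by simp⟩
  exact this hx

theorem map_mem_preord {A : Type*} [CommRing A] (φ : A →+* E) {S : Set A} {x : A}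
    (hx : x ∈ preord S) : φ x ∈ preord (φ '' S) := by
  have : preord S ≤ (preord (φ '' S)).comap φ := by
    refine Subsemiring.closure_le.2 ?_
    rintro _ (⟨a, rfl⟩ | hy)
    · change φ (a * a) ∈ preord (φ '' S)
      rw [map_mul]
      exact mul_self_mem_preord _ _
    · exact mem_preord_of_mem ⟨_, hy, rfl⟩
  exact this hx

variable [Algebra ℝ E]

/-- If `t - y² t = 1 + s` with `s, t` in a preordering then `1 - y²` is nonnegative under all
positive functionals: the moments `L (y ^ (2 k))` are convex in `k` and bounded by `L t`. -/
theorem map_sq_le_of_identity (T : Subsemiring E) (hsq : ∀ a, a * a ∈ T) (L : E →ₗ[ℝ] ℝ)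
    (hL : ∀ c ∈ T, 0 ≤ L c) {y s t : E} (hs : s ∈ T) (ht : t ∈ T)
    (h : t - y * y * t = 1 + s) : L (y * y) ≤ L 1 := by
  set b : ℕ → ℝ := fun k => L ((y * y) ^ k) with hb
  have hyT : ∀ k, (y * y) ^ k ∈ T := fun k => pow_mem (hsq y) k
  have hdec : ∀ k, L ((y * y) ^ k * t) ≤ L t := by
    intro k
    induction k with
    | zero => simp
    | succ k ih =>
      have e : (y * y) ^ k * t = (y * y) ^ (k + 1) * t + ((y * y) ^ k + (y * y) ^ k * s) := by
        linear_combination (y * y) ^ k * h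
      have := hL _ (add_mem (hyT k) (mul_mem (hyT k) hs))
      rw [e, map_add] at ih
      linarith
  have hbd : ∀ k, b k ≤ L t := by
    intro k
    have e : (y * y) ^ k * t = (y * y) ^ k + ((y * y) ^ (k + 1) * t + (y * y) ^ k * s) := by
      linear_combination (y * y) ^ k * h
    have h1 := hL _ (add_mem (mul_mem (hyT (k + 1)) ht) (mul_mem (hyT k) hs))
    have h2 := hdec k
    rw [e, map_add] at h2
    simp only [hb]
    linarith
  have hconv : ∀ k, b (k + 1) - b k ≤ b (k + 2) - b (k + 1) := by
    intro k
    have h1 := hL _ (mul_mem (hyT k) (hsq (1 - y * y)))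
    have e : (y * y) ^ k * ((1 - y * y) * (1 - y * y))
        = (y * y) ^ (k + 2) - (y * y) ^ (k + 1) - ((y * y) ^ (k + 1) - (y * y) ^ k) := by ring
    rw [e, map_sub, map_sub, map_sub] at h1
    simp only [hb]
    linarith
  have hd : ∀ k, b 1 - b 0 ≤ b (k + 1) - b k := by
    intro k
    induction k with
    | zero => simp
    | succ k ih => exact ih.trans (hconv k)
  have hlin : ∀ k : ℕ, b 0 + k * (b 1 - b 0) ≤ b k := by
    intro k
    induction k with
    | zero => simp
    | succ k ih =>
      have := hd k
      push_cast
      linarith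
  have hfin : b 1 - b 0 ≤ 0 := by
    by_contra hcon
    push Not at hcon
    obtain ⟨k, hk⟩ := exists_nat_gt ((L t - b 0) / (b 1 - b 0))
    rw [div_lt_iff₀ hcon] at hk
    have h1 := hlin k
    have h2 := hbd k
    linarith
  simpa [hb] using hfin

/-- The Cauchy–Schwarz inequality for a positive functional. -/
theorem map_mul_sq_le (T : Subsemiring E) (hsq : ∀ a, a * a ∈ T) (L : E →ₗ[ℝ] ℝ)
    (hL : ∀ c ∈ T, 0 ≤ L c) (a b : E) : L (a * b) ^ 2 ≤ L (a * a) * L (b * b) := by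
  have h : ∀ t : ℝ, 0 ≤ L (b * b) * (t * t) + (2 * L (a * b)) * t + L (a * a) := by
    intro t
    have h1 := hL _ (hsq (a + t • b))
    have e : (a + t • b) * (a + t • b) = a * a + (2 * t) • (a * b) + (t * t) • (b * b) := by
      simp only [Algebra.smul_def, map_mul, map_ofNat]
      ring
    rw [e, map_add, map_add, map_smul, map_smul, smul_eq_mul, smul_eq_mul] at h1
    linarith
  have := discrim_le_zero h
  rw [discrim] at this
  nlinarith

/-- A positive functional is nonnegative on `a / p ^ j` whenever this fraction is nonnegative and
bounded on `K_S`. -/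
theorem nonneg_of_bounded {n m : ℕ} (g : Fin m → MvPolynomial (Fin n) ℝ)
    (ι : MvPolynomial (Fin n) ℝ →ₐ[ℝ] E) (L : E →ₗ[ℝ] ℝ)
    (hL : ∀ c ∈ preord (Set.range fun i => ι (g i)), 0 ≤ L c)
    (p : MvPolynomial (Fin n) ℝ) (hp1 : ∀ x ∈ KS g, 1 ≤ eval x p) (q : E) (hq : q * ι p = 1)
    (a : MvPolynomial (Fin n) ℝ) (j : ℕ) (M : ℝ)
    (ha : ∀ x ∈ KS g, 0 ≤ eval x a ∧ eval x a ≤ M * eval x p ^ j) (hM : 0 ≤ M) :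
    0 ≤ L (ι a * q ^ j) := by
  have himg : (ι : MvPolynomial (Fin n) ℝ →+* E) '' Set.range g = Set.range fun i => ι (g i) := by
    rw [← Set.range_comp]; rfl
  have hqp : q ^ j * ι p ^ j = 1 := by rw [← mul_pow, hq, one_pow]
  -- the strict bound, refuted by the weak Positivstellensatz when it fails
  have key : ∀ c : MvPolynomial (Fin n) ℝ, (∀ x ∈ KS g, |eval x c| < eval x p ^ j) →
      L (ι c * q ^ j) ≤ L 1 := by
    intro c hc
    have hneg : (-1 : MvPolynomial (Fin n) ℝ) ∈ preord (insert (c * c - p ^ j * p ^ j) (Set.range g)) := by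
      by_contra hcon
      obtain ⟨x, hx⟩ := exists_point_of_neg_one_notMem _ ((Set.finite_range g).insert _) hcon
      have h1 := hx _ (Set.mem_insert _ _)
      have h2 := hc x fun i => hx _ (Set.mem_insert_of_mem _ ⟨i, rfl⟩)
      simp only [map_sub, map_mul, map_pow] at h1
      have h3 := abs_lt.1 h2
      nlinarith
    obtain ⟨s, hs, t, ht, e⟩ := exists_of_mem_preord_insert hneg
    have hs' := map_mem_preord (ι : MvPolynomial (Fin n) ℝ →+* E) hs
    have ht' := map_mem_preord (ι : MvPolynomial (Fin n) ℝ →+* E) ht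
    rw [himg, RingHom.coe_coe] at hs' ht'
    have e' : (-1 : E) = ι s + (ι c * ι c - ι p ^ j * ι p ^ j) * ι t := by
      have := congrArg ι e
      simpa using this
    have h1 : L (ι c * q ^ j * (ι c * q ^ j)) ≤ L 1 := by
      refine map_sq_le_of_identity (preord (Set.range fun i => ι (g i))) (mul_self_mem_preord _) L hL
        hs' (t := ι p ^ j * ι p ^ j * ι t) (mul_mem (mul_self_mem_preord _ _) ht') ?_
      linear_combination e' - ι c * ι c * ι t * (q ^ j * ι p ^ j + 1) * hqp
    have h2 := hL _ (mul_self_mem_preord _ (1 - ι c * q ^ j))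
    have e2 : (1 - ι c * q ^ j) * (1 - ι c * q ^ j)
        = 1 + ι c * q ^ j * (ι c * q ^ j) - (ι c * q ^ j + ι c * q ^ j) := by ring
    rw [e2, map_sub, map_add, map_add] at h2
    linarith
  have h1 : 0 ≤ L 1 := hL 1 (one_mem _)
  have hδ : ∀ δ > 0, -(L (ι a * q ^ j)) ≤ δ * L 1 := by
    intro δ hδ
    have hMδ : 0 < M + δ := by linarith
    have := key (C (M + δ)⁻¹ * (C M * p ^ j - a)) (by
      intro x hx
      have hp := hp1 x hx
      have hpj : 0 < eval x p ^ j := pow_pos (by linarith) j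
      obtain ⟨a1, a2⟩ := ha x hx
      simp only [map_mul, map_sub, map_pow, eval_C]
      rw [abs_mul, abs_of_pos (inv_pos.2 hMδ), abs_of_nonneg (by linarith), inv_mul_lt_iff₀ hMδ]
      nlinarith)
    have e : ι (C (M + δ)⁻¹ * (C M * p ^ j - a)) * q ^ j
        = (M + δ)⁻¹ • (M • (1 : E) - ι a * q ^ j) := by
      have hC : ∀ r : ℝ, ι (C r) = algebraMap ℝ E r := fun r => ι.commutes r
      simp only [map_mul, map_sub, map_pow, hC, Algebra.smul_def]
      linear_combination (algebraMap ℝ E (M + δ)⁻¹) * algebraMap ℝ E M * hqp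
    rw [e, map_smul, map_sub, map_smul, smul_eq_mul, smul_eq_mul, inv_mul_le_iff₀ hMδ] at this
    linarith
  by_contra hcon
  push Not at hcon
  rcases h1.eq_or_lt with h0 | h0
  · have := hδ 1 one_pos
    rw [← h0] at this
    linarith
  · have := hδ (-(L (ι a * q ^ j)) / (2 * L 1)) (div_pos (by linarith) (by linarith))
    rw [div_mul_eq_mul_div, le_div_iff₀ (by linarith)] at this
    nlinarith

end Functional
end PosStell

/-! ### Representation by measures on compact sets -/

namespace PosStell

section Representation
open CompactlySupported
variable {I : Type*}

/-- Polynomials as continuous functions on a set `K`. -/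
def evalOn (K : Set (I → ℝ)) : MvPolynomial I ℝ →ₐ[ℝ] C(K, ℝ) :=
  aeval fun i => ⟨fun y => y.1 i, (continuous_apply i).comp continuous_subtype_val⟩

@[simp]
theorem evalOn_apply (K : Set (I → ℝ)) (h : MvPolynomial I ℝ) (y : K) :
    evalOn K h y = eval y.1 h := by
  induction h using MvPolynomial.induction_on with
  | C a => simp [evalOn]
  | add p q hp hq => simp only [map_add, ContinuousMap.add_apply, hp, hq]
  | mul_X p i hp =>
    simp only [map_mul, ContinuousMap.mul_apply, hp, eval_X]
    simp [evalOn]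

/-- A functional on polynomials that is nonnegative on polynomials nonnegative on the compact
set `K` is integration against a finite measure on `K`. -/
theorem exists_measure_of_nonneg [Fintype I] {K : Set (I → ℝ)} (hK : IsCompact K)
    (l : MvPolynomial I ℝ →ₗ[ℝ] ℝ) (hl : ∀ h, (∀ y ∈ K, 0 ≤ eval y h) → 0 ≤ l h) :
    ∃ ν : Measure K, IsFiniteMeasure ν ∧ ∀ h, l h = ∫ y, eval y.1 h ∂ν := by
  have : CompactSpace K := isCompact_iff_compactSpace.mp hK
  let φ : MvPolynomial I ℝ →ₗ[ℝ] C(K, ℝ) := (evalOn K).toLinearMap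
  have hφ : ∀ h y, φ h y = eval y.1 h := fun h y => evalOn_apply K h y
  have hker : LinearMap.ker φ ≤ LinearMap.ker l := by
    intro h hh
    rw [LinearMap.mem_ker] at hh ⊢
    have hz : ∀ y ∈ K, eval y h = 0 := fun y hy => by
      rw [← hφ h ⟨y, hy⟩, hh]; rfl
    have h1 : 0 ≤ l h := hl h fun y hy => (hz y hy).ge
    have h2 : 0 ≤ l (-h) := hl (-h) fun y hy => by rw [map_neg, hz y hy, neg_zero]
    rw [map_neg] at h2
    linarith
  let f : C(K, ℝ) →ₗ.[ℝ] ℝ :=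
    { domain := LinearMap.range φ
      toFun := (Submodule.liftQ _ l hker).comp φ.quotKerEquivRange.symm.toLinearMap }
  have hf : ∀ h (hm : φ h ∈ LinearMap.range φ), f ⟨φ h, hm⟩ = l h := by
    intro h hm
    change Submodule.liftQ _ l hker (φ.quotKerEquivRange.symm ⟨φ h, hm⟩) = l h
    rw [LinearMap.quotKerEquivRange_symm_apply_image]
    simp
  obtain ⟨G, hG, hGpos⟩ := riesz_extension (PointedCone.positive ℝ C(K, ℝ)) f
    (by
      rintro ⟨_, h, rfl⟩ hx
      refine (hf h ⟨h, rfl⟩).symm ▸ hl h fun y hy => ?_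
      have : 0 ≤ φ h ⟨y, hy⟩ :=
        ((PointedCone.mem_positive ℝ C(K, ℝ)).1 hx : (0 : C(K, ℝ)) ≤ φ h) ⟨y, hy⟩
      rwa [hφ] at this)
    (by
      intro y
      refine ⟨⟨φ (C ‖y‖), ⟨_, rfl⟩⟩, (PointedCone.mem_positive ℝ C(K, ℝ)).2 ?_⟩
      intro x
      have h1 : φ (C ‖y‖) x = ‖y‖ := by rw [hφ, eval_C]
      have h2 := y.norm_coe_le_norm x
      rw [Real.norm_eq_abs] at h2
      change 0 ≤ φ (C ‖y‖) x + y x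
      rw [h1]
      linarith [neg_abs_le (y x)])
  let Λ : C_c(K, ℝ) →ₚ[ℝ] ℝ := PositiveLinearMap.mk₀
    { toFun := fun u => G u.toContinuousMap
      map_add' := fun u v => G.map_add u.toContinuousMap v.toContinuousMap
      map_smul' := fun c u => G.map_smul c u.toContinuousMap }
    (fun u hu => hGpos _ ((PointedCone.mem_positive ℝ C(K, ℝ)).2 fun y => hu y))
  refine ⟨RealRMK.rieszMeasure Λ, inferInstance, fun h => ?_⟩
  have h1 := RealRMK.integral_rieszMeasure Λ
    (CompactlySupportedContinuousMap.continuousMapEquiv (φ h))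
  have h2 : Λ (CompactlySupportedContinuousMap.continuousMapEquiv (φ h)) = l h := by
    change G (φ h) = l h
    rw [← hf h ⟨h, rfl⟩]
    exact hG ⟨φ h, ⟨h, rfl⟩⟩
  rw [← h2, ← h1]
  refine integral_congr_ae (Filter.Eventually.of_forall fun y => ?_)
  exact hφ h y

end Representation
end PosStell

/-! ### Density of the measure at zeros of units -/

namespace PosStell

section Density
variable {I : Type*} [Fintype I] {K : Set (I → ℝ)}

theorem exists_lipschitz_at (hK : IsCompact K) {y : I → ℝ} (h : MvPolynomial I ℝ) :
    ∃ Λ : ℝ, 0 ≤ Λ ∧ ∀ z ∈ K, |eval z h - eval y h| ≤ Λ * dist z y := by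
  induction h using MvPolynomial.induction_on with
  | C a => exact ⟨0, le_rfl, fun z _ => by simp⟩
  | add p q hp hq =>
    obtain ⟨Λ, h0, h1⟩ := hp
    obtain ⟨Λ', h0', h1'⟩ := hq
    refine ⟨Λ + Λ', add_nonneg h0 h0', fun z hz => ?_⟩
    have := abs_add_le (eval z p - eval y p) (eval z q - eval y q)
    rw [map_add, map_add, add_mul, add_sub_add_comm]
    linarith [h1 z hz, h1' z hz]
  | mul_X p i hp =>
    obtain ⟨Λ, h0, h1⟩ := hp
    obtain ⟨R, hR⟩ := hK.isBounded.exists_norm_le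
    have hR' : ∀ z ∈ K, |z i| ≤ max R 0 := fun z hz =>
      ((norm_le_pi_norm z i).trans (hR z hz)).trans (le_max_left _ _)
    refine ⟨Λ * max R 0 + |eval y p|, by positivity, fun z hz => ?_⟩
    have e : eval z (p * X i) - eval y (p * X i)
        = (eval z p - eval y p) * z i + eval y p * (z i - y i) := by
      simp only [map_mul, eval_X]; ring
    have hd : |z i - y i| ≤ dist z y := by
      rw [← Real.dist_eq]; exact dist_le_pi_dist z y i
    rw [e]
    refine (abs_add_le _ _).trans ?_
    rw [abs_mul, abs_mul, add_mul]
    refine add_le_add ?_ (mul_le_mul_of_nonneg_left hd (abs_nonneg _))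
    calc _ ≤ (Λ * dist z y) * max R 0 :=
          mul_le_mul (h1 z hz) (hR' z hz) (abs_nonneg _) (by positivity)
      _ = _ := by ring

/-- A quadratic inequality between integrals passes from polynomials to continuous functions, by
the Stone–Weierstrass theorem. -/
theorem sq_integral_le_of_poly [CompactSpace K] (ν : Measure K) [IsFiniteMeasure ν]
    (w : MvPolynomial I ℝ) (c : ℝ)
    (hw : ∀ h : MvPolynomial I ℝ,
      (∫ y, eval y.1 h ∂ν) ^ 2 ≤ c * ∫ y, eval y.1 (h * h * w) ∂ν)
    (u : C(K, ℝ)) : (∫ y, u y ∂ν) ^ 2 ≤ c * ∫ y, u y * u y * eval y.1 w ∂ν := by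
  have hint : ∀ u : C(K, ℝ), Integrable (fun y => u y) ν := fun u =>
    u.continuous.integrable_of_hasCompactSupport (HasCompactSupport.of_compactSpace _)
  have hcont : Continuous fun u : C(K, ℝ) => ∫ y, u y ∂ν := by
    have : LipschitzWith (ν.real Set.univ).toNNReal fun u : C(K, ℝ) => ∫ y, u y ∂ν := by
      refine LipschitzWith.of_dist_le_mul fun u v => ?_
      rw [Real.dist_eq, ← integral_sub (hint u) (hint v), Real.coe_toNNReal _ measureReal_nonneg,
        mul_comm, ← Real.norm_eq_abs]
      refine norm_integral_le_of_norm_le_const (μ := ν) (Filter.Eventually.of_forall fun y => ?_)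
      rw [← dist_eq_norm]
      exact ContinuousMap.dist_apply_le_dist y
    exact this.continuous
  have hclosed : IsClosed {u : C(K, ℝ) |
      (∫ y, u y ∂ν) ^ 2 ≤ c * ∫ y, (u * u * evalOn K w) y ∂ν} := by
    refine isClosed_le (hcont.pow 2) (continuous_const.mul (hcont.comp ?_))
    fun_prop
  have htop : (evalOn K).range.topologicalClosure = ⊤ := by
    refine ContinuousMap.subalgebra_topologicalClosure_eq_top_of_separatesPoints _ ?_
    intro x y hxy
    obtain ⟨i, hi⟩ := Function.ne_iff.1 (Subtype.coe_injective.ne hxy)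
    refine ⟨fun z => evalOn K (X i) z, ⟨evalOn K (X i), ⟨X i, rfl⟩, rfl⟩, ?_⟩
    simpa using hi
  have hsub : ((evalOn K).range : Set C(K, ℝ)) ⊆ {u : C(K, ℝ) |
      (∫ y, u y ∂ν) ^ 2 ≤ c * ∫ y, (u * u * evalOn K w) y ∂ν} := by
    rintro _ ⟨h, rfl⟩
    have := hw h
    simpa using this
  have hu : u ∈ (evalOn K).range.topologicalClosure := by rw [htop]; trivial
  have := hclosed.closure_subset_iff.2 hsub hu
  simpa using this

/-- If integration against `ν` is controlled by integration against `w ^ (2 * N)` times `ν`, then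
`ν` has density of order `N` at the zeros of `w`. -/
theorem measure_closedBall_le (hK : IsCompact K) (ν : Measure K) [IsFiniteMeasure ν]
    (w : MvPolynomial I ℝ) (N : ℕ) (c : ℝ) (hc : 0 ≤ c)
    (hw : ∀ h : MvPolynomial I ℝ,
      (∫ y, eval y.1 h ∂ν) ^ 2 ≤ c * ∫ y, eval y.1 (h * h * (w ^ N * w ^ N)) ∂ν)
    (y : K) (hy : eval y.1 w = 0) :
    ∃ A : ℝ, 0 ≤ A ∧ ∀ r, 0 < r → ν.real (Metric.closedBall y r) ≤ A * r ^ N := by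
  have : CompactSpace K := isCompact_iff_compactSpace.mp hK
  obtain ⟨Λ, hΛ0, hΛ⟩ := exists_lipschitz_at hK (y := y.1) w
  refine ⟨Real.sqrt (c * (4 * ((2 * Λ) ^ N * (2 * Λ) ^ N) * ν.real Set.univ)), Real.sqrt_nonneg _,
    fun r hr => ?_⟩
  let u : C(K, ℝ) := ⟨fun z => max 0 (2 - dist z y / r), by fun_prop⟩
  have hint : ∀ u : C(K, ℝ), Integrable (fun y => u y) ν := fun u =>
    u.continuous.integrable_of_hasCompactSupport (HasCompactSupport.of_compactSpace _)
  have hu0 : ∀ z, 0 ≤ u z := fun z => le_max_left _ _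
  have hu2 : ∀ z, u z ≤ 2 := fun z =>
    max_le (by norm_num) (by have : 0 ≤ dist z y / r := by positivity
                             linarith)
  have h1 : ν.real (Metric.closedBall y r) ≤ ∫ z, u z ∂ν := by
    rw [← integral_indicator_one Metric.isClosed_closedBall.measurableSet]
    refine integral_mono ((integrable_const (1 : ℝ)).indicator
      Metric.isClosed_closedBall.measurableSet) (hint u) fun z => ?_
    by_cases hz : z ∈ Metric.closedBall y r
    · rw [Set.indicator_of_mem hz]
      have : dist z y / r ≤ 1 := (div_le_one hr).2 hz
      exact le_max_of_le_right (by simp only [Pi.one_apply]; linarith)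
    · rw [Set.indicator_of_notMem hz]
      exact hu0 z
  have h2 := sq_integral_le_of_poly ν (w ^ N * w ^ N) c hw u
  have h3 : ∫ z, u z * u z * eval z.1 (w ^ N * w ^ N) ∂ν
      ≤ 4 * ((2 * Λ * r) ^ N * (2 * Λ * r) ^ N) * ν.real Set.univ := by
    have hi := hint (u * u * evalOn K (w ^ N * w ^ N))
    have := integral_mono (μ := ν) hi
      (integrable_const (4 * ((2 * Λ * r) ^ N * (2 * Λ * r) ^ N))) fun z => ?_
    · rw [integral_const, smul_eq_mul, mul_comm (ν.real Set.univ)] at this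
      simpa using this
    · change (u * u * evalOn K (w ^ N * w ^ N)) z ≤ 4 * ((2 * Λ * r) ^ N * (2 * Λ * r) ^ N)
      simp only [ContinuousMap.mul_apply, ContinuousMap.pow_apply, evalOn_apply, map_mul, map_pow]
      rcases le_total (2 * r) (dist z y) with hz | hz
      · have : u z = 0 := max_eq_left (by
          have : 2 ≤ dist z y / r := (le_div_iff₀ hr).2 hz
          linarith)
        rw [this]
        have : 0 ≤ 2 * Λ * r := by positivity
        simp only [zero_mul]
        positivity
      · have h4 : |eval z.1 w| ≤ 2 * Λ * r := by
          have := hΛ z.1 z.2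
          rw [hy, sub_zero] at this
          refine this.trans ?_
          calc _ ≤ Λ * (2 * r) := mul_le_mul_of_nonneg_left hz hΛ0
            _ = _ := by ring
        have h5 : eval z.1 w ^ N * eval z.1 w ^ N ≤ (2 * Λ * r) ^ N * (2 * Λ * r) ^ N := by
          rw [← abs_mul_abs_self (eval z.1 w ^ N), abs_pow]
          have := pow_le_pow_left₀ (abs_nonneg _) h4 N
          gcongr
        have h6 : u z * u z ≤ 4 := by nlinarith [hu0 z, hu2 z]
        exact mul_le_mul h6 h5 (mul_self_nonneg _) (by norm_num)
  have hv : 0 ≤ ν.real (Metric.closedBall y r) := measureReal_nonneg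
  rw [← Real.sqrt_sq (pow_nonneg hr.le N), ← Real.sqrt_mul (by positivity)]
  refine Real.le_sqrt_of_sq_le ?_
  calc _ ≤ (∫ z, u z ∂ν) ^ 2 := pow_le_pow_left₀ hv h1 2
    _ ≤ _ := h2
    _ ≤ c * (4 * ((2 * Λ * r) ^ N * (2 * Λ * r) ^ N) * ν.real Set.univ) :=
      mul_le_mul_of_nonneg_left h3 hc
    _ = _ := by rw [mul_pow (2 * Λ) r]; ring

end Density
end PosStell

/-! ### Null sets -/

namespace PosStell

section NullSet
variable {I : Type*} [Fintype I] {K : Set (I → ℝ)}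

/-- A set whose points all have density of order larger than the dimension, with a uniform
constant, is null: cover it with the cells of a grid of mesh `1 / q`. -/
theorem measureReal_eq_zero_of_density (hK : IsCompact K) (ν : Measure K) [IsFiniteMeasure ν]
    (A : Set K) (c : ℝ) (hc : 0 ≤ c)
    (hA : ∀ y ∈ A, ∀ r, 0 < r → ν.real (Metric.closedBall y r) ≤ c * r ^ (Fintype.card I + 1)) :
    ν.real A = 0 := by
  classical
  obtain ⟨R, hR⟩ := hK.isBounded.exists_norm_le
  obtain ⟨M, hM⟩ := exists_nat_ge R
  have hMi : ∀ y ∈ K, ∀ i, |y i| ≤ M := fun y hy i =>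
    ((norm_le_pi_norm y i).trans (hR y hy)).trans hM
  have key : ∀ q : ℕ, ν.real A ≤ ((2 * M + 1) ^ Fintype.card I * c) / ((q : ℝ) + 1) := by
    intro q
    have hq : (0 : ℝ) < (q : ℝ) + 1 := by positivity
    let J : Finset ℤ := Finset.Icc (-((M : ℤ) * (q + 1))) ((M : ℤ) * (q + 1))
    let cell : (I → ℤ) → Set K := fun s => {y | y ∈ A ∧ ∀ i, ⌊((q : ℝ) + 1) * y.1 i⌋ = s i}
    have hcell : ∀ s, ν.real (cell s) ≤ c * (1 / ((q : ℝ) + 1)) ^ (Fintype.card I + 1) := by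
      intro s
      rcases (cell s).eq_empty_or_nonempty with h | ⟨y, hyA, hy⟩
      · rw [h, measureReal_empty]
        positivity
      · refine le_trans (measureReal_mono ?_) (hA y hyA _ (by positivity))
        rintro z ⟨-, hz⟩
        rw [Metric.mem_closedBall, Subtype.dist_eq, dist_pi_le_iff (by positivity)]
        intro i
        have h1 := Int.abs_sub_lt_one_of_floor_eq_floor ((hz i).trans (hy i).symm)
        rw [← mul_sub, abs_mul, abs_of_pos hq] at h1
        rw [Real.dist_eq, le_div_iff₀ hq, mul_comm]
        exact h1.le
    have hcov : A ⊆ ⋃ s ∈ Fintype.piFinset fun _ : I => J, cell s := by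
      intro y hy
      simp only [Set.mem_iUnion]
      refine ⟨fun i => ⌊((q : ℝ) + 1) * y.1 i⌋, ?_, hy, fun i => rfl⟩
      rw [Fintype.mem_piFinset]
      intro i
      have h1 := abs_le.1 (hMi y.1 y.2 i)
      rw [Finset.mem_Icc]
      constructor
      · rw [Int.le_floor]
        push_cast
        nlinarith [h1.1]
      · have : (⌊((q : ℝ) + 1) * y.1 i⌋ : ℝ) ≤ ((M : ℤ) * ((q : ℤ) + 1) : ℤ) := by
          refine (Int.floor_le _).trans ?_
          push_cast
          nlinarith [h1.2]
        exact_mod_cast this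
    have hJ : (J.card : ℝ) ≤ (2 * M + 1) * ((q : ℝ) + 1) := by
      have h1 : ((J.card : ℕ) : ℤ) = 2 * (M * (q + 1)) + 1 := by
        have h0 : (0 : ℤ) ≤ M * (q + 1) := by positivity
        rw [Int.card_Icc, Int.toNat_of_nonneg (by linarith)]
        ring
      have h2 : (J.card : ℝ) = 2 * (M * (q + 1)) + 1 := by exact_mod_cast h1
      rw [h2]
      have : (0 : ℝ) ≤ q := by positivity
      linarith
    calc ν.real A ≤ ν.real (⋃ s ∈ Fintype.piFinset fun _ : I => J, cell s) :=
          measureReal_mono hcov (measure_ne_top ν _)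
      _ ≤ ∑ s ∈ Fintype.piFinset fun _ : I => J, ν.real (cell s) :=
        measureReal_biUnion_finset_le _ _
      _ ≤ ∑ s ∈ Fintype.piFinset fun _ : I => J,
          c * (1 / ((q : ℝ) + 1)) ^ (Fintype.card I + 1) := Finset.sum_le_sum fun s _ => hcell s
      _ = (J.card : ℝ) ^ Fintype.card I * (c * (1 / ((q : ℝ) + 1)) ^ (Fintype.card I + 1)) := by
        rw [Finset.sum_const, Fintype.card_piFinset, Finset.prod_const, Finset.card_univ, nsmul_eq_mul]
        push_cast
        ring
      _ ≤ ((2 * M + 1) * ((q : ℝ) + 1)) ^ Fintype.card I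
          * (c * (1 / ((q : ℝ) + 1)) ^ (Fintype.card I + 1)) := by
        gcongr
      _ = _ := by
        rw [mul_pow, one_div, inv_pow, pow_succ]
        field_simp
  refine le_antisymm ?_ measureReal_nonneg
  have hlim : Filter.Tendsto (fun q : ℕ => ((2 * (M : ℝ) + 1) ^ Fintype.card I * c) / ((q : ℝ) + 1))
      Filter.atTop (nhds 0) := by
    have := tendsto_one_div_add_atTop_nhds_zero_nat (𝕜 := ℝ)
    have h2 := this.const_mul ((2 * (M : ℝ) + 1) ^ Fintype.card I * c)
    simpa [div_eq_mul_inv] using h2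
  exact ge_of_tendsto' hlim key

/-- The constant may depend on the point, as the set is a countable union of sets on which it is
bounded. -/
theorem measure_eq_zero_of_density (hK : IsCompact K) (ν : Measure K) [IsFiniteMeasure ν]
    (A : Set K)
    (hA : ∀ y ∈ A, ∃ c : ℝ, 0 ≤ c ∧
      ∀ r, 0 < r → ν.real (Metric.closedBall y r) ≤ c * r ^ (Fintype.card I + 1)) :
    ν A = 0 := by
  have hsub : A ⊆ ⋃ j : ℕ, {y : K | ∀ r, 0 < r →
      ν.real (Metric.closedBall y r) ≤ j * r ^ (Fintype.card I + 1)} := by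
    intro y hy
    obtain ⟨c, -, hc⟩ := hA y hy
    obtain ⟨j, hj⟩ := exists_nat_ge c
    refine Set.mem_iUnion.2 ⟨j, fun r hr => (hc r hr).trans ?_⟩
    gcongr
  refine measure_mono_null hsub (measure_iUnion_null fun j => ?_)
  exact (measureReal_eq_zero_iff).1
    (measureReal_eq_zero_of_density hK ν _ j (Nat.cast_nonneg j) fun y hy => hy)

end NullSet
end PosStell

/-! ### Compactification -/

namespace PosStell

section Compactification
variable {n m : ℕ} {E : Type*} [CommRing E] [Algebra ℝ E]

/-- The substitution `Y₀ ↦ 1 / p`, `Yᵢ ↦ Xᵢ / p`, where `q` plays the role of `1 / p`. -/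
def subst (ι : MvPolynomial (Fin n) ℝ →ₐ[ℝ] E) (q : E) :
    MvPolynomial (Option (Fin n)) ℝ →ₐ[ℝ] E :=
  aeval fun o => o.elim q fun i => ι (X i) * q

/-- The point map `x ↦ (1 / p x, x / p x)` dual to `subst`. -/
def chart (p : MvPolynomial (Fin n) ℝ) (x : Fin n → ℝ) : Option (Fin n) → ℝ :=
  fun o => o.elim (eval x p)⁻¹ fun i => x i * (eval x p)⁻¹

variable (ι : MvPolynomial (Fin n) ℝ →ₐ[ℝ] E) (q : E) (p : MvPolynomial (Fin n) ℝ)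

@[simp]
theorem subst_X_none : subst ι q (X none) = q := by simp [subst]

@[simp]
theorem subst_X_some (i : Fin n) : subst ι q (X (some i)) = ι (X i) * q := by simp [subst]

@[simp]
theorem chart_none (x : Fin n → ℝ) : chart p x none = (eval x p)⁻¹ := rfl

@[simp]
theorem chart_some (x : Fin n → ℝ) (i : Fin n) : chart p x (some i) = x i * (eval x p)⁻¹ := rfl

variable {q p} in
/-- A polynomial in `1 / p` and `Xᵢ / p` is a polynomial divided by a power of `p`, compatibly in
`E` and as functions. -/
theorem exists_numerator (hq : q * ι p = 1) (h : MvPolynomial (Option (Fin n)) ℝ) :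
    ∃ (j : ℕ) (a : MvPolynomial (Fin n) ℝ), subst ι q h = ι a * q ^ j ∧
      ∀ x, eval x p ≠ 0 → eval x a = eval (chart p x) h * eval x p ^ j := by
  induction h using MvPolynomial.induction_on with
  | C c => exact ⟨0, C c, by simp [← algebraMap_eq], fun x _ => by simp⟩
  | add h₁ h₂ ih₁ ih₂ =>
    obtain ⟨j₁, a₁, e₁, f₁⟩ := ih₁
    obtain ⟨j₂, a₂, e₂, f₂⟩ := ih₂
    refine ⟨j₁ + j₂, a₁ * p ^ j₂ + a₂ * p ^ j₁, ?_, fun x hx => ?_⟩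
    · have h1 : q ^ j₁ * ι p ^ j₁ = 1 := by rw [← mul_pow, hq, one_pow]
      have h2 : q ^ j₂ * ι p ^ j₂ = 1 := by rw [← mul_pow, hq, one_pow]
      rw [map_add, e₁, e₂]
      simp only [map_add, map_mul, map_pow]
      linear_combination (-(ι a₁) * q ^ j₁) * h2 + (-(ι a₂) * q ^ j₂) * h1
    · simp only [map_add, map_mul, map_pow, f₁ x hx, f₂ x hx]
      ring
  | mul_X h o ih =>
    obtain ⟨j, a, e, f⟩ := ih
    cases o with
    | none =>
      refine ⟨j + 1, a, ?_, fun x hx => ?_⟩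
      · rw [map_mul, e, subst_X_none]; ring
      · rw [f x hx, map_mul, eval_X, chart_none]
        field_simp
        ring
    | some i =>
      refine ⟨j + 1, a * X i, ?_, fun x hx => ?_⟩
      · rw [map_mul, e, subst_X_some, map_mul]; ring
      · rw [map_mul, f x hx, map_mul, eval_X, eval_X, chart_some]
        field_simp
        ring

variable {q p} in
/-- Divided by a suitable power of `p`, a polynomial in the `Xᵢ` becomes a polynomial in `1 / p` and
`Xᵢ / p`, compatibly in `E` and as functions. -/
theorem exists_lift (f : MvPolynomial (Fin n) ℝ) :
    ∃ (j : ℕ) (h : MvPolynomial (Option (Fin n)) ℝ), subst ι q h = ι f * q ^ j ∧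
      ∀ x, eval (chart p x) h = eval x f * (eval x p)⁻¹ ^ j := by
  induction f using MvPolynomial.induction_on with
  | C c => exact ⟨0, C c, by simp [← algebraMap_eq], fun x => by simp⟩
  | add f₁ f₂ ih₁ ih₂ =>
    obtain ⟨j₁, h₁, e₁, g₁⟩ := ih₁
    obtain ⟨j₂, h₂, e₂, g₂⟩ := ih₂
    refine ⟨j₁ + j₂, h₁ * X none ^ j₂ + h₂ * X none ^ j₁, ?_, fun x => ?_⟩
    · simp only [map_add, map_mul, map_pow, e₁, e₂, subst_X_none]; ring
    · simp only [map_add, map_mul, map_pow, g₁ x, g₂ x, eval_X, chart_none]; ring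
  | mul_X f i ih =>
    obtain ⟨j, h, e, g⟩ := ih
    refine ⟨j + 1, h * X (some i), ?_, fun x => ?_⟩
    · rw [map_mul, e, subst_X_some, map_mul]; ring
    · rw [map_mul, g x, map_mul, eval_X, eval_X, chart_some]; ring

variable {p} (g : Fin m → MvPolynomial (Fin n) ℝ)

theorem isCompact_closure_chart {k : ℕ} (hk : 1 ≤ k) (hp1 : ∀ x ∈ KS g, 1 ≤ eval x p)
    (hpgrow : ∀ x ∈ KS g, ∑ i, (x i) ^ 2 ≤ (k : ℝ) * eval x p) :
    IsCompact (closure (chart p '' KS g)) := by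
  have hk' : (1 : ℝ) ≤ k := by exact_mod_cast hk
  refine Bornology.IsBounded.isCompact_closure ?_
  rw [isBounded_iff_forall_norm_le]
  refine ⟨k, ?_⟩
  rintro _ ⟨x, hx, rfl⟩
  have hp := hp1 x hx
  have hp0 : 0 < eval x p := by linarith
  have hinv : (eval x p)⁻¹ ≤ 1 := inv_le_one_of_one_le₀ hp
  have hinv0 : 0 < (eval x p)⁻¹ := inv_pos.2 hp0
  rw [pi_norm_le_iff_of_nonneg (by positivity)]
  intro o
  rw [Real.norm_eq_abs]
  cases o with
  | none =>
    rw [chart_none, abs_of_pos hinv0]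
    linarith
  | some i =>
    rw [chart_some]
    have h1 : (x i) ^ 2 ≤ k * eval x p :=
      (Finset.single_le_sum (f := fun i => (x i) ^ 2) (fun _ _ => sq_nonneg _)
        (Finset.mem_univ i)).trans (hpgrow x hx)
    refine abs_le_of_sq_le_sq ?_ (by positivity)
    calc (x i * (eval x p)⁻¹) ^ 2 = (x i) ^ 2 * ((eval x p)⁻¹) ^ 2 := by ring
      _ ≤ (k * eval x p) * ((eval x p)⁻¹) ^ 2 := by gcongr
      _ = k * (eval x p)⁻¹ := by field_simp
      _ ≤ k * k := by gcongr; linarith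
      _ = (k : ℝ) ^ 2 := by ring

theorem isClosed_KS : IsClosed (KS g) := by
  have : KS g = ⋂ i, {x | 0 ≤ eval x (g i)} := by
    ext x
    simp [KS]
  rw [this]
  exact isClosed_iInter fun i => isClosed_le continuous_const (MvPolynomial.continuous_eval _)

/-- The points added by taking the closure of the image of `K_S` lie on the hyperplane at
infinity. -/
theorem exists_of_mem_closure_chart (hp1 : ∀ x ∈ KS g, 1 ≤ eval x p)
    {y : Option (Fin n) → ℝ} (hy : y ∈ closure (chart p '' KS g)) (hy0 : y none ≠ 0) :
    ∃ x ∈ KS g, chart p x = y := by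
  let Ψ : (Option (Fin n) → ℝ) → Fin n → ℝ := fun z i => z (some i) / z none
  have hΨ : ContinuousAt Ψ y := by
    refine continuousAt_pi.2 fun i => ?_
    exact (continuous_apply _).continuousAt.div (continuous_apply _).continuousAt hy0
  have hΨΦ : ∀ x ∈ KS g, Ψ (chart p x) = x := by
    intro x hx
    have : eval x p ≠ 0 := by linarith [hp1 x hx]
    funext i
    change x i * (eval x p)⁻¹ / (eval x p)⁻¹ = x i
    field_simp
  have hx : Ψ y ∈ KS g := by
    rw [← (isClosed_KS g).closure_eq]
    refine closure_mono ?_ (mem_closure_image hΨ hy)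
    rintro _ ⟨_, ⟨x, hx, rfl⟩, rfl⟩
    rw [hΨΦ x hx]
    exact hx
  have hpy : eval (Ψ y) p * y none = 1 := by
    have hc : ContinuousAt (fun z => eval (Ψ z) p * z none) y :=
      ((MvPolynomial.continuous_eval p).continuousAt.comp hΨ).mul
        (continuous_apply _).continuousAt
    have h1 := mem_closure_image hc hy
    have h2 : (fun z => eval (Ψ z) p * z none) '' (chart p '' KS g) ⊆ {1} := by
      rintro _ ⟨_, ⟨x, hx, rfl⟩, rfl⟩
      have : eval x p ≠ 0 := by linarith [hp1 x hx]
      simp [hΨΦ x hx, this]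
    have h3 := closure_mono h2 h1
    rwa [closure_singleton, Set.mem_singleton_iff] at h3
  have hinv : (eval (Ψ y) p)⁻¹ = y none := inv_eq_of_mul_eq_one_right hpy
  refine ⟨Ψ y, hx, funext fun o => ?_⟩
  cases o with
  | none => exact hinv
  | some i =>
    rw [chart_some, hinv]
    exact div_mul_cancel₀ _ hy0

variable {q} in
/-- A functional nonnegative on the preordering is nonnegative on the functions on the closure of
the image of `K_S` which are polynomial in `1 / p` and `Xᵢ / p`. -/
theorem nonneg_of_nonneg_on_chart {k : ℕ} (hk : 1 ≤ k) (hp1 : ∀ x ∈ KS g, 1 ≤ eval x p)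
    (hpgrow : ∀ x ∈ KS g, ∑ i, (x i) ^ 2 ≤ (k : ℝ) * eval x p) (hq : q * ι p = 1)
    (L : E →ₗ[ℝ] ℝ) (hL : ∀ c ∈ preord (Set.range fun i => ι (g i)), 0 ≤ L c)
    (h : MvPolynomial (Option (Fin n)) ℝ)
    (hh : ∀ y ∈ closure (chart p '' KS g), 0 ≤ eval y h) : 0 ≤ L (subst ι q h) := by
  obtain ⟨j, a, e, ha⟩ := exists_numerator ι hq h
  obtain ⟨M, hM⟩ := (isCompact_closure_chart g hk hp1 hpgrow).exists_bound_of_continuousOn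
    (MvPolynomial.continuous_eval h).continuousOn
  rw [e]
  refine nonneg_of_bounded g ι L hL p hp1 q hq a j (max M 0) (fun x hx => ?_) (le_max_right _ _)
  have hp := hp1 x hx
  have hmem := subset_closure (Set.mem_image_of_mem (chart p) hx)
  have h1 := (le_abs_self _).trans (hM _ hmem)
  have h0 := hh _ hmem
  have hpj : 0 ≤ eval x p ^ j := by positivity
  rw [ha x (by linarith)]
  exact ⟨mul_nonneg h0 hpj, mul_le_mul_of_nonneg_right (h1.trans (le_max_left _ _)) hpj⟩

end Compactification
end PosStell

/-! ### Nonnegativity of the functional -/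

namespace PosStell

section Conclusion
variable {n m : ℕ} {E : Type*} [CommRing E] [Algebra ℝ E]

/-- Positivity of a functional on an element `ι f` such that every point of `K_S` with `f < 0` is
a zero of some polynomial becoming invertible in `E`. -/
theorem nonneg_of_negative_on_units (g : Fin m → MvPolynomial (Fin n) ℝ)
    (ι : MvPolynomial (Fin n) ℝ →ₐ[ℝ] E) (L : E →ₗ[ℝ] ℝ)
    (hL : ∀ c ∈ preord (Set.range fun i => ι (g i)), 0 ≤ L c)
    (p : MvPolynomial (Fin n) ℝ) {k : ℕ} (hk : 1 ≤ k) (hp1 : ∀ x ∈ KS g, 1 ≤ eval x p)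
    (hpgrow : ∀ x ∈ KS g, ∑ i, (x i) ^ 2 ≤ (k : ℝ) * eval x p)
    (q : E) (hq : q * ι p = 1) (f : MvPolynomial (Fin n) ℝ)
    (hf : ∀ x ∈ KS g, eval x f < 0 → ∃ d, IsUnit (ι d) ∧ eval x d = 0) :
    0 ≤ L (ι f) := by
  obtain ⟨j, f', hf', hfe⟩ := exists_lift (q := q) (p := p) ι f
  -- multiplying by the square of `ι p ^ j` clears the denominator of the lift of `f`
  let L' : E →ₗ[ℝ] ℝ := L.comp (LinearMap.mulLeft ℝ (ι p ^ j * ι p ^ j))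
  have hL'a : ∀ a, L' a = L (ι p ^ j * ι p ^ j * a) := fun a => rfl
  have hL' : ∀ c ∈ preord (Set.range fun i => ι (g i)), 0 ≤ L' c := fun c hc =>
    hL _ (mul_mem (mul_self_mem_preord _ _) hc)
  have hqj : q ^ j * ι p ^ j = 1 := by rw [← mul_pow, hq, one_pow]
  have hqu : IsUnit q := IsUnit.of_mul_eq_one _ hq
  let θ := subst ι q
  let h₀ : MvPolynomial (Option (Fin n)) ℝ := f' * X none ^ j
  have hLf : L (ι f) = L' (θ h₀) := by
    rw [hL'a]
    congr 1
    change ι f = ι p ^ j * ι p ^ j * subst ι q (f' * X none ^ j)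
    rw [map_mul, map_pow, subst_X_none, hf']
    linear_combination (-(ι f) * (1 + q ^ j * ι p ^ j)) * hqj
  let K := closure (chart p '' KS g)
  have hK : IsCompact K := isCompact_closure_chart g hk hp1 hpgrow
  obtain ⟨ν, hν, hint⟩ := exists_measure_of_nonneg hK (L'.comp θ.toLinearMap) fun h hh =>
    nonneg_of_nonneg_on_chart ι g hk hp1 hpgrow hq L' hL' h hh
  have hint' : ∀ h, L' (θ h) = ∫ y, eval y.1 h ∂ν := hint
  have hdens : ∀ (w : MvPolynomial (Option (Fin n)) ℝ), IsUnit (θ w) → ∀ y : K,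
      eval y.1 w = 0 → ∃ c : ℝ, 0 ≤ c ∧ ∀ r, 0 < r →
        ν.real (Metric.closedBall y r) ≤ c * r ^ (Fintype.card (Option (Fin n)) + 1) := by
    intro w hw y hy
    obtain ⟨v, hv⟩ := hw.exists_right_inv
    let N := Fintype.card (Option (Fin n)) + 1
    have hvN : θ w ^ N * v ^ N = 1 := by rw [← mul_pow, hv, one_pow]
    refine measure_closedBall_le hK ν w N (L' (v ^ N * v ^ N))
      (hL' _ (mul_self_mem_preord _ _)) (fun h => ?_) y hy
    rw [← hint', ← hint']
    have := map_mul_sq_le (preord (Set.range fun i => ι (g i))) (mul_self_mem_preord _) L' hL'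
      (θ h * θ w ^ N) (v ^ N)
    rw [mul_assoc, hvN, mul_one, mul_comm (L' _)] at this
    convert this using 3
    simp only [map_mul, map_pow]
    ring
  rw [hLf, hint']
  refine integral_nonneg_of_ae ?_
  rw [Filter.EventuallyLE, ae_iff]
  refine measure_eq_zero_of_density hK ν _ fun y hy => ?_
  by_cases hy0 : y.1 none = 0
  · exact hdens (X none) (by rwa [subst_X_none]) y (by rwa [eval_X])
  · obtain ⟨x, hx, hxy⟩ := exists_of_mem_closure_chart g hp1 y.2 hy0
    have hp := hp1 x hx
    have hfx : eval x f < 0 := by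
      by_contra hcon
      push Not at hcon
      apply hy
      change 0 ≤ eval y.1 (f' * X none ^ j)
      rw [← hxy, map_mul, hfe, map_pow, eval_X, chart_none]
      positivity
    obtain ⟨d, hdu, hd0⟩ := hf x hx hfx
    obtain ⟨i, w, hw, hwe⟩ := exists_lift (q := q) (p := p) ι d
    refine hdens w ?_ y ?_
    · change IsUnit (subst ι q w)
      rw [hw]
      exact hdu.mul (hqu.pow i)
    · rw [← hxy, hwe, hd0, zero_mul]

end Conclusion
end PosStell

/-- Every polynomial nonnegative on `K_S \ ⋃_{d ∈ D} Z(d)` lies in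
the closure of `T_S^E` in the finest locally convex topology. -/
theorem nonneg_off_zero_sets_mem_closure
    {n m : ℕ} (D : Submonoid (MvPolynomial (Fin n) ℝ))
    (hD0 : (0 : MvPolynomial (Fin n) ℝ) ∉ D)
    (g : Fin m → MvPolynomial (Fin n) ℝ)
    (hKne : (KS g).Nonempty)
    (p : MvPolynomial (Fin n) ℝ) (hpD : p ∈ D)
    (k : ℕ) (hk : 1 ≤ k)
    (hp1 : ∀ x ∈ KS g, 1 ≤ eval x p)
    (hpgrow : ∀ x ∈ KS g, ∑ i, (x i) ^ 2 ≤ (k : ℝ) * eval x p)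
    (f : MvPolynomial (Fin n) ℝ)
    (hf : ∀ x ∈ KS g \ ⋃ d ∈ (D : Set (MvPolynomial (Fin n) ℝ)), Zset d, 0 ≤ eval x f) :
    algebraMap (MvPolynomial (Fin n) ℝ) (Localization D) f ∈
      dualClosure (genPreordering fun i =>
        algebraMap (MvPolynomial (Fin n) ℝ) (Localization D) (g i)) := by
  intro L hL
  let ι : MvPolynomial (Fin n) ℝ →ₐ[ℝ] Localization D :=
    IsScalarTower.toAlgHom ℝ (MvPolynomial (Fin n) ℝ) (Localization D)
  have hunit : ∀ d ∈ D, IsUnit (ι d) := fun d hd =>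
    IsLocalization.map_units (Localization D) (⟨d, hd⟩ : D)
  obtain ⟨q, hq⟩ := (hunit p hpD).exists_left_inv
  refine PosStell.nonneg_of_negative_on_units g ι L
    (PosStell.nonneg_on_preord (fun i => ι (g i)) L hL) p hk hp1 hpgrow q hq f ?_
  intro x hx hfx
  by_contra hcon
  push Not at hcon
  refine absurd (hf x ⟨hx, ?_⟩) (not_le.2 hfx)
  simp only [Set.mem_iUnion, not_exists]
  exact fun d hd => hcon d (hunit d hd)

end
end

section
/- (Rational Riesz's Theorem.) Let 𝒳 be a nonempty Hausdorff topological space such that: there is a continuous function q̂ : 𝒳 → ℝ with q̂ ≥ 0 and 𝒳_k = {x : q̂(x) ≤ k} compact for every integer k ≥ 1; and every open subset of 𝒳 is σ-compact. Let D̂ be a multiplicatively closed set of continuous functions on 𝒳 containing 1, each d̂ ∈ D̂ being nonnegative on 𝒳 with zero set Z(d̂) = {x : d̂(x)=0} of empty interior. Then for every linear functional L̄ on the set D̂⁻¹C_c(𝒳,ℝ) of fractions f/d̂ (f ∈ C_c(𝒳,ℝ), d̂ ∈ D̂, fractions taken inside the localization D̂⁻¹C(𝒳,ℝ)) satisfying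 L̄(f/d̂) ≥ 0 whenever f ∈ C_c(𝒳,ℝ) is nonnegative and d̂ ∈ D̂, there exists a unique regular Borel measure μ on 𝒳 such that μ(Z(d̂)) = 0 for every d̂ ∈ D̂ and L̄(f/d̂) = ∫_𝒳 f(x)/d̂(x) dμ(x) for every f ∈ C_c(𝒳,ℝ) and d̂ ∈ D̂. -/
/-!
For each denominator `d`, the map `f ↦ L (f / d)` is a positive linear functional on `C_c(X, ℝ)`,
so the Riesz–Markov–Kakutani theorem represents it by a regular measure `μ_d` (the space is locally
compact because `{q < k}` has compact closure). The identity `f / e = (f d) / (e d)` in the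
localization gives `∫ f dμ_e = ∫ f d dμ_{ed}`. Since every open set is `σ`-compact, every locally
finite Borel measure is regular (`regular_of_sigmaCompact_open`), and the uniqueness of regular
representing measures upgrades this to `μ_e = d • μ_{ed}` as measures
(`riesz_withDensity`).

Taking `e = d` yields `μ_d = d • μ_{d²}`, hence `μ_d (Z(d)) = 0`. Taking `e = 1` yields
`μ_1 = d • μ_d`, hence `μ_1 (Z(d)) = 0` and `∫ f/d dμ_1 = ∫_{d ≠ 0} f dμ_d = ∫ f dμ_d = L (f/d)`.
So `μ_1` is the required measure. A second one agrees with it on `C_c(X, ℝ)` (take `d = 1`), so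
uniqueness follows from the uniqueness of regular representing measures.
-/

open MeasureTheory

noncomputable section

/-- For a submonoid `D̂` of `C(𝒳,ℝ)`, the subset `D̂⁻¹C_c(𝒳,ℝ)` of the localization
`D̂⁻¹C(𝒳,ℝ)`: fractions `f/d̂` with `f` compactly supported. -/
def ccFracSet {X : Type*} [TopologicalSpace X] (Dh : Submonoid C(X, ℝ)) :
    Set (Localization Dh) :=
  {R | ∃ f : C(X, ℝ), HasCompactSupport (f : X → ℝ) ∧ ∃ d : Dh, R = Localization.mk f d}

open scoped CompactlySupported

/-- If every open set is `σ`-compact, then each locally finite Borel measure is regular. Compact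
inner regularity of open sets is continuity from below; in particular open sets are inner regular
with respect to closed sets, which forces outer regularity of finite measures, and outer regularity
is local along a countable open cover. -/
theorem regular_of_sigmaCompact_open {X : Type*} [TopologicalSpace X] [T2Space X]
    [MeasurableSpace X] [BorelSpace X]
    (hσ : ∀ O : Set X, IsOpen O →
      ∃ K : ℕ → Set X, (∀ i, IsCompact (K i)) ∧ O = ⋃ i, K i)
    (μ : Measure X) [IsLocallyFiniteMeasure μ] : μ.Regular := by
  have inner : ∀ ν : Measure X, ν.InnerRegularWRT IsCompact IsOpen := by
    intro ν U hU r hr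
    obtain ⟨K, hK, rfl⟩ := hσ U hU
    rw [measure_iUnion_eq_iSup_accumulate] at hr
    obtain ⟨n, hn⟩ := lt_iSup_iff.1 hr
    refine ⟨Set.accumulate K n, Set.accumulate_subset_iUnion n, ?_, hn⟩
    exact (Set.finite_Iic n).isCompact_biUnion fun i _ => hK i
  have : SigmaCompactSpace X := by
    obtain ⟨K, hK, h⟩ := hσ Set.univ isOpen_univ
    exact ⟨⟨K, hK, h.symm⟩⟩
  have : μ.OuterRegular := by
    refine (μ.finiteSpanningSetsInOpen.mono' fun U hU => ?_).outerRegular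
    have : Fact (μ U < ⊤) := ⟨hU.2⟩
    have := Measure.InnerRegularWRT.weaklyRegular_of_finite (μ.restrict U)
      ((inner _).mono (fun _ h => h) fun _ h => h.isClosed)
    exact ⟨hU.1, inferInstance⟩
  have : IsFiniteMeasureOnCompacts μ := inferInstance
  exact { innerRegular := inner μ }

/-- The positive linear functional `f ↦ L (f / d)` on `C_c(X, ℝ)`, for a fixed denominator `d`. -/
def fracFunctional {X : Type*} [TopologicalSpace X] {Dh : Submonoid C(X, ℝ)}
    (L : (Submodule.span ℝ (ccFracSet Dh)) →ₗ[ℝ] ℝ)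
    (hL : ∀ (f : C(X, ℝ)), (∀ x, 0 ≤ f x) → ∀ (hc : HasCompactSupport (f : X → ℝ))
      (d : Dh), 0 ≤ L ⟨Localization.mk f d, Submodule.subset_span ⟨f, hc, d, rfl⟩⟩)
    (d : Dh) : C_c(X, ℝ) →ₚ[ℝ] ℝ :=
  PositiveLinearMap.mk₀
    { toFun := fun f => L ⟨Localization.mk f.toContinuousMap d,
        Submodule.subset_span ⟨f.toContinuousMap, f.hasCompactSupport, d, rfl⟩⟩
      map_add' := fun f g => by
        rw [← map_add]
        congr 1
        exact Subtype.ext (Localization.add_mk_self _ _ _).symm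
      map_smul' := fun c f => by
        rw [← map_smul]
        congr 1
        exact Subtype.ext (Localization.smul_mk c _ _).symm }
    (fun f hf => hL f.toContinuousMap hf f.hasCompactSupport d)

/-- The relation `μ_e = d • μ_{ed}` between the representing measures, coming from
`f / e = (f d) / (e d)`. -/
theorem riesz_withDensity {X : Type*} [TopologicalSpace X] [T2Space X] [LocallyCompactSpace X]
    [MeasurableSpace X] [BorelSpace X]
    (hσ : ∀ O : Set X, IsOpen O →
      ∃ K : ℕ → Set X, (∀ i, IsCompact (K i)) ∧ O = ⋃ i, K i)
    {Dh : Submonoid C(X, ℝ)} (hDpos : ∀ d ∈ Dh, ∀ x, 0 ≤ d x)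
    (L : (Submodule.span ℝ (ccFracSet Dh)) →ₗ[ℝ] ℝ)
    (hL : ∀ (f : C(X, ℝ)), (∀ x, 0 ≤ f x) → ∀ (hc : HasCompactSupport (f : X → ℝ))
      (d : Dh), 0 ≤ L ⟨Localization.mk f d, Submodule.subset_span ⟨f, hc, d, rfl⟩⟩)
    (e d : Dh) :
    RealRMK.rieszMeasure (fracFunctional L hL e) =
      (RealRMK.rieszMeasure (fracFunctional L hL (e * d))).withDensity
        (fun x => ((Real.toNNReal ((d : C(X, ℝ)) x) : NNReal) : ENNReal)) := by
  set ν := RealRMK.rieszMeasure (fracFunctional L hL (e * d))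
  have hloc : IsLocallyFiniteMeasure (ν.withDensity
      (fun x => ((Real.toNNReal ((d : C(X, ℝ)) x) : NNReal) : ENNReal))) :=
    IsLocallyFiniteMeasure.withDensity_ofReal (d : C(X, ℝ)).continuous
  have hreg := regular_of_sigmaCompact_open hσ (ν.withDensity
      (fun x => ((Real.toNNReal ((d : C(X, ℝ)) x) : NNReal) : ENNReal)))
  refine Measure.ext_of_integral_eq_on_compactlySupported fun f => ?_
  rw [integral_withDensity_eq_integral_smul (by fun_prop), RealRMK.integral_rieszMeasure]
  let g : C_c(X, ℝ) :=
    ⟨(d : C(X, ℝ)) * f.toContinuousMap, f.hasCompactSupport.mul_left⟩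
  have hg : fracFunctional L hL e f = fracFunctional L hL (e * d) g := by
    change L _ = L _
    congr 1
    refine Subtype.ext ?_
    change Localization.mk f.toContinuousMap e =
      Localization.mk ((d : C(X, ℝ)) * f.toContinuousMap) (e * d)
    rw [Localization.mk_eq_mk_iff, Localization.r_eq_r']
    refine ⟨1, ?_⟩
    simp only [Submonoid.coe_one, Submonoid.coe_mul]
    ring
  rw [hg, ← RealRMK.integral_rieszMeasure]
  refine integral_congr_ae (Filter.Eventually.of_forall fun x => ?_)
  change (d : C(X, ℝ)) x * f x = Real.toNNReal ((d : C(X, ℝ)) x) • f x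
  rw [NNReal.smul_def, Real.coe_toNNReal _ (hDpos d d.2 x), smul_eq_mul]

/-- The measure `d • ν` does not charge the zero set of `d`. -/
theorem withDensity_zeroSet {X : Type*} [TopologicalSpace X]
    [MeasurableSpace X] [BorelSpace X] (ν : Measure X) (d : C(X, ℝ)) :
    ν.withDensity (fun x => ((Real.toNNReal (d x) : NNReal) : ENNReal)) {x | d x = 0} = 0 := by
  have hm : MeasurableSet {x | d x = 0} := (isClosed_eq d.continuous continuous_const).measurableSet
  rw [withDensity_apply _ hm]
  refine (setLIntegral_congr_fun hm fun x hx => ?_).trans lintegral_zero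
  have hx0 : d x = 0 := hx
  simp [hx0]

/-- **Rational Riesz's Theorem.** -/
theorem rational_riesz
    {X : Type*} [TopologicalSpace X] [T2Space X] [Nonempty X]
    [MeasurableSpace X] [BorelSpace X]
    (q : C(X, ℝ)) (hq0 : ∀ x, 0 ≤ q x)
    (hqc : ∀ k : ℕ, 1 ≤ k → IsCompact {x : X | q x ≤ (k : ℝ)})
    (hσ : ∀ O : Set X, IsOpen O →
      ∃ K : ℕ → Set X, (∀ i, IsCompact (K i)) ∧ O = ⋃ i, K i)
    (Dh : Submonoid C(X, ℝ))
    (hDpos : ∀ d ∈ Dh, ∀ x, 0 ≤ d x)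
    (hDz : ∀ d ∈ Dh, interior {x : X | d x = 0} = ∅)
    (L : (Submodule.span ℝ (ccFracSet Dh)) →ₗ[ℝ] ℝ)
    (hL : ∀ (f : C(X, ℝ)), (∀ x, 0 ≤ f x) → ∀ (hc : HasCompactSupport (f : X → ℝ))
      (d : Dh), 0 ≤ L ⟨Localization.mk f d, Submodule.subset_span ⟨f, hc, d, rfl⟩⟩) :
    ∃! μ : Measure X, μ.Regular ∧
      (∀ d ∈ Dh, μ {x : X | d x = 0} = 0) ∧
      ∀ (f : C(X, ℝ)) (hc : HasCompactSupport (f : X → ℝ)) (d : Dh),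
        Integrable (fun x => f x / (d : C(X, ℝ)) x) μ ∧
        L ⟨Localization.mk f d, Submodule.subset_span ⟨f, hc, d, rfl⟩⟩
          = ∫ x, f x / (d : C(X, ℝ)) x ∂μ := by
  have : LocallyCompactSpace X := by
    have : WeaklyLocallyCompactSpace X := by
      refine ⟨fun x => ?_⟩
      obtain ⟨k, hk⟩ := exists_nat_gt (q x)
      have hk0 : (0 : ℝ) < k := (hq0 x).trans_lt hk
      refine ⟨_, hqc k (by exact_mod_cast hk0), ?_⟩
      exact Filter.mem_of_superset ((isOpen_lt q.continuous continuous_const).mem_nhds hk)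
        fun y (hy : q y < k) => hy.le
    infer_instance
  set μ : Dh → Measure X := fun d => RealRMK.rieszMeasure (fracFunctional L hL d) with hμ
  have hreg : ∀ d, (μ d).Regular := fun d => RealRMK.regular_rieszMeasure _
  have hrel : ∀ e d : Dh, μ e = (μ (e * d)).withDensity
      (fun x => ((Real.toNNReal ((d : C(X, ℝ)) x) : NNReal) : ENNReal)) :=
    riesz_withDensity hσ hDpos L hL
  have hnull : ∀ e d : Dh, μ e {x | (d : C(X, ℝ)) x = 0} = 0 := fun e d => by
    rw [hrel e d]; exact withDensity_zeroSet _ _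
  refine ⟨μ 1, ⟨hreg 1, fun d hd => hnull 1 ⟨d, hd⟩, fun f hc d => ?_⟩, ?_⟩
  · have h1 := hrel 1 d
    rw [one_mul] at h1
    -- `μ d` does not charge the zero set of `d`, so `d * (f / d) = f` almost everywhere.
    have hae : (fun x => Real.toNNReal ((d : C(X, ℝ)) x) • (f x / (d : C(X, ℝ)) x))
        =ᵐ[μ d] fun x => f x := by
      have hne : ∀ᵐ x ∂(μ d), (d : C(X, ℝ)) x ≠ 0 := by
        rw [ae_iff]; simpa using hnull d d
      filter_upwards [hne] with x hx
      rw [NNReal.smul_def, Real.coe_toNNReal _ (hDpos d d.2 x), smul_eq_mul, mul_div_cancel₀ _ hx]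
    have hint : Integrable (fun x => f x) (μ d) :=
      f.continuous.integrable_of_hasCompactSupport hc
    rw [h1]
    constructor
    · rw [integrable_withDensity_iff_integrable_smul (by fun_prop)]
      exact hint.congr hae.symm
    · rw [integral_withDensity_eq_integral_smul (by fun_prop), integral_congr_ae hae]
      exact (RealRMK.integral_rieszMeasure (fracFunctional L hL d) ⟨f, hc⟩).symm
  · rintro ν ⟨hν, -, hνL⟩
    refine Measure.ext_of_integral_eq_on_compactlySupported fun f => ?_
    have h := (hνL f.toContinuousMap f.hasCompactSupport 1).2
    rw [RealRMK.integral_rieszMeasure]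
    change _ = L _
    rw [h]
    simp


end
end

section
/- Let 𝒳 be a Hausdorff topological space, A a commutative unital ℝ-algebra, ^ : A → C(𝒳,ℝ) an ℝ-algebra homomorphism, and q ∈ A with q̂ ≥ 0 on 𝒳 such that 𝒳_k = {x ∈ 𝒳 : q̂(x) ≤ k} is compact for every integer k ≥ 1. Let C'(𝒳,ℝ) = {f ∈ C(𝒳,ℝ) : there exists a ∈ A with |f| ≤ â on 𝒳}. Then for every nonnegative function f ∈ C'(𝒳,ℝ) there exists a monotonically increasing sequence (f_i)_{i≥1} of nonnegative functions in C_c(𝒳,ℝ) such that (f + q̂)²/i ≥ f − f_i ≥ 0 on 𝒳 for every i. -/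
/-!
Truncate `f` by a cutoff in `q̂`: put `F i = f * g i`, where `g i = max 0 (min 1 (i + 1 - q̂))`
increases with `i`, equals `1` on `{q̂ ≤ i}` and vanishes off the compact set `{q̂ ≤ i + 1}`.
Thus `f - F i` vanishes where `q̂ ≤ i`, while where `q̂ ≥ i` it is at most
`f ≤ q̂ (f + q̂) / i ≤ (f + q̂)² / i`.
-/

/-- Approximation of dominated nonnegative continuous functions by an
increasing sequence of compactly supported nonnegative continuous functions. -/
theorem exists_increasing_compactly_supported_approximation
    {X : Type*} [TopologicalSpace X] [T2Space X]
    {A : Type*} [CommRing A] [Algebra ℝ A]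
    (φ : A →ₐ[ℝ] C(X, ℝ))
    (q : A) (hq0 : ∀ x, 0 ≤ φ q x)
    (hqc : ∀ k : ℕ, 1 ≤ k → IsCompact {x : X | φ q x ≤ (k : ℝ)})
    (f : C(X, ℝ)) (hf0 : ∀ x, 0 ≤ f x)
    (hfdom : ∃ a : A, ∀ x, |f x| ≤ φ a x) :
    ∃ F : ℕ → C(X, ℝ),
      (∀ i, ∀ x, 0 ≤ F i x) ∧
      (∀ i, HasCompactSupport ((F i : X → ℝ))) ∧
      (∀ i j, i ≤ j → ∀ x, F i x ≤ F j x) ∧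
      ∀ i : ℕ, 1 ≤ i → ∀ x,
        f x - F i x ≤ (f x + φ q x) ^ 2 / (i : ℝ) ∧ 0 ≤ f x - F i x := by
  refine ⟨fun i => ⟨fun x => f x * max 0 (min 1 ((i : ℝ) + 1 - φ q x)), by fun_prop⟩,
    ?_, ?_, ?_, ?_⟩
  · intro i x
    exact mul_nonneg (hf0 x) (le_max_left _ _)
  · intro i
    refine HasCompactSupport.intro (hqc (i + 1) (by omega)) fun x hx => ?_
    simp only [Set.mem_setOf_eq, not_le, Nat.cast_add, Nat.cast_one] at hx
    have h : min 1 ((i : ℝ) + 1 - φ q x) ≤ 0 := (min_le_right _ _).trans (by linarith)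
    simp [max_eq_left h]
  · intro i j hij x
    have hij' : (i : ℝ) ≤ j := by exact_mod_cast hij
    simp only [ContinuousMap.coe_mk]
    have := hf0 x
    gcongr
  · intro i hi x
    have hi' : (0 : ℝ) < i := by exact_mod_cast hi
    have hf := hf0 x
    have hq := hq0 x
    simp only [ContinuousMap.coe_mk]
    have hg0 : 0 ≤ max 0 (min 1 ((i : ℝ) + 1 - φ q x)) := le_max_left _ _
    have hg1 : max 0 (min 1 ((i : ℝ) + 1 - φ q x)) ≤ 1 :=
      max_le zero_le_one (min_le_left _ _)
    refine ⟨?_, by nlinarith⟩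
    rcases le_total (φ q x) i with h | h
    · rw [min_eq_left (by linarith), max_eq_right zero_le_one, mul_one, sub_self]
      positivity
    · have hfi : f x ≤ (f x + φ q x) ^ 2 / (i : ℝ) := by
        rw [le_div_iff₀ hi']
        nlinarith [mul_le_mul_of_nonneg_left h hf]
      linarith [mul_nonneg hf hg0]
end

section
/- For any preordering T on any commutative unital ℝ-algebra E, the closure of T in the topology of finitely open sets on E is again a preordering: it contains all squares of E and is closed under addition and multiplication. -/
/-!
Joint continuity of addition and multiplication can fail for the topology of finitely open sets
in uncountable dimension, but separate continuity suffices. For a linear map `g` and a vector `b`, the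
affine map `x ↦ g x + b` is continuous for `finTop` (`finTop_continuous_affine`): it maps each
finite-dimensional subspace `U` into the finite-dimensional subspace `g(U) + ℝ b`, and does so
continuously. If `T` is closed under a separately continuous operation, then so is its closure
(`closure_closed_of_separately_continuous`): extend first one argument from `T` to its closure,
then the other.
-/

open MvPolynomial MeasureTheory

noncomputable section

theorem weakTop_continuous_affine {V W : Type*} [AddCommGroup V] [Module ℝ V]
    [AddCommGroup W] [Module ℝ W] (g : V →ₗ[ℝ] W) (b : W) :
    @Continuous V W (weakTop V) (weakTop W) (fun x => g x + b) := by
  letI : TopologicalSpace V := weakTop V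
  refine continuous_iInf_rng.2 fun L => continuous_induced_rng.2 ?_
  have h : Continuous (L ∘ₗ g : V →ₗ[ℝ] ℝ) :=
    continuous_iInf_dom (i := L ∘ₗ g) continuous_induced_dom
  have h' : (L ∘ fun x => g x + b) = fun x => (L ∘ₗ g : V →ₗ[ℝ] ℝ) x + L b := by
    ext x
    simp
  rw [h']
  exact h.add continuous_const

theorem finTop_continuous_affine {E F : Type*} [AddCommGroup E] [Module ℝ E]
    [AddCommGroup F] [Module ℝ F] (g : E →ₗ[ℝ] F) (b : F) :
    @Continuous E F (finTop E) (finTop F) (fun x => g x + b) := by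
  letI : TopologicalSpace E := finTop E
  letI : TopologicalSpace F := finTop F
  refine continuous_def.2 fun O hO U hU => ?_
  let W : Submodule ℝ F := U.map g ⊔ Submodule.span ℝ {b}
  have hW : FiniteDimensional ℝ W := inferInstance
  let g' : U →ₗ[ℝ] W := (g ∘ₗ U.subtype).codRestrict W fun x =>
    Submodule.mem_sup_left (Submodule.mem_map_of_mem x.2)
  let b' : W := ⟨b, Submodule.mem_sup_right (Submodule.mem_span_singleton_self b)⟩
  letI : TopologicalSpace U := weakTop U
  letI : TopologicalSpace W := weakTop W
  exact (hO W hW).preimage (weakTop_continuous_affine g' b')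

theorem closure_closed_of_separately_continuous {X : Type*} [TopologicalSpace X] (T : Set X)
    (f : X → X → X) (hl : ∀ a, Continuous (f a)) (hr : ∀ b, Continuous fun a => f a b)
    (hT : ∀ a ∈ T, ∀ b ∈ T, f a b ∈ T) :
    ∀ a ∈ closure T, ∀ b ∈ closure T, f a b ∈ closure T := by
  have h : ∀ a ∈ T, ∀ b ∈ closure T, f a b ∈ closure T := fun a ha b hb =>
    map_mem_closure (hl a) hb (hT a ha)
  intro a ha b hb
  rw [← closure_closure]
  exact map_mem_closure (f := fun a => f a b) (hr b) ha fun a ha => h a ha b hb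

/-- The closure of a preordering in the topology of finitely open
sets is again a preordering. -/
theorem finTop_closure_preordering_is_preordering
    {E : Type*} [CommRing E] [Algebra ℝ E] (T : Set E)
    (hsq : ∀ a : E, a ^ 2 ∈ T)
    (hadd : ∀ a ∈ T, ∀ b ∈ T, a + b ∈ T)
    (hmul : ∀ a ∈ T, ∀ b ∈ T, a * b ∈ T) :
    (∀ a : E, a ^ 2 ∈ @closure _ (finTop E) T) ∧
    (∀ a ∈ @closure _ (finTop E) T, ∀ b ∈ @closure _ (finTop E) T,
      a + b ∈ @closure _ (finTop E) T) ∧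
    (∀ a ∈ @closure _ (finTop E) T, ∀ b ∈ @closure _ (finTop E) T,
      a * b ∈ @closure _ (finTop E) T) := by
  letI : TopologicalSpace E := finTop E
  have hal : ∀ a : E, Continuous fun x : E => a + x := fun a => by
    simpa [add_comm] using finTop_continuous_affine (LinearMap.id : E →ₗ[ℝ] E) a
  have hml : ∀ a : E, Continuous fun x : E => a * x := fun a => by
    simpa using finTop_continuous_affine (LinearMap.mulLeft ℝ a) 0
  refine ⟨fun a => subset_closure (hsq a), ?_, ?_⟩
  · exact closure_closed_of_separately_continuous T (· + ·) hal
      (fun b => by simpa only [add_comm] using hal b) hadd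
  · exact closure_closed_of_separately_continuous T (· * ·) hml
      (fun b => by simpa only [mul_comm] using hml b) hmul

end
end

section
/- Let D ⊆ ℝ[X₁,…,Xₙ]\{0} be a multiplicatively closed set with 1 ∈ D and E = D⁻¹ℝ[X₁,…,Xₙ], and identify ℝ[X₁,…,Xₙ] with its image in E under the (injective) canonical map. Then a preordering T of E is closed in the topology of finitely open sets on E if and only if T ∩ ℝ[X₁,…,Xₙ] is closed in the topology of finitely open sets on ℝ[X₁,…,Xₙ]. -/
/-!
Linear maps out of a finite-dimensional space are continuous into the topology of finitely open
sets (`isClosed_weakTop_preimage`), so the closedness of `T` passes to its preimage `T ∩ ℝ[X]`.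

Conversely, let `U ⊆ E` be a finite-dimensional subspace and let `d ∈ D` be a common denominator of
`U` (`exists_common_denominator`). Multiplication by `d²` is a linear map from `U` to `ℝ[X]`. Since
`d²` and `d⁻²` are both squares in `E`, they lie in `T`, and hence `u ∈ T ↔ d² u ∈ T`. So `T ∩ U` is
the preimage of `T ∩ ℝ[X]` under this linear map, and is closed in `U`.
-/

open MvPolynomial MeasureTheory

noncomputable section

theorem continuous_weakTop {V W : Type*} [AddCommGroup V] [Module ℝ V]
    [AddCommGroup W] [Module ℝ W] (f : V →ₗ[ℝ] W) :
    @Continuous _ _ (weakTop V) (weakTop W) f := by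
  refine continuous_iInf_rng.2 fun L => continuous_induced_rng.2 ?_
  exact continuous_iInf_dom (i := L.comp f) continuous_induced_dom

theorem isClosed_finTop_iff {E : Type*} [AddCommGroup E] [Module ℝ E] {S : Set E} :
    @IsClosed _ (finTop E) S ↔ ∀ U : Submodule ℝ E, FiniteDimensional ℝ U →
      @IsClosed _ (weakTop U) ((Subtype.val : U → E) ⁻¹' S) := by
  rw [← @isOpen_compl_iff _ _ (finTop E)]
  refine forall_congr' fun U => forall_congr' fun _ => ?_
  rw [← @isOpen_compl_iff _ _ (weakTop U)]
  rfl

/-- The range of `f` is finite-dimensional, so closedness of `S` can be tested on it and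
pulled back along the corestriction of `f`. -/
theorem isClosed_weakTop_preimage {U V : Type*} [AddCommGroup U] [Module ℝ U]
    [FiniteDimensional ℝ U] [AddCommGroup V] [Module ℝ V] (f : U →ₗ[ℝ] V) {S : Set V}
    (hS : @IsClosed _ (finTop V) S) : @IsClosed _ (weakTop U) (f ⁻¹' S) :=
  @IsClosed.preimage _ _ (weakTop U) (weakTop _) _ (continuous_weakTop f.rangeRestrict) _
    (isClosed_finTop_iff.1 hS (LinearMap.range f) inferInstance)

/-- A finite-dimensional subspace of the localization has a common denominator. -/
theorem exists_common_denominator {n : ℕ} (D : Submonoid (MvPolynomial (Fin n) ℝ))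
    (U : Submodule ℝ (Localization D)) [FiniteDimensional ℝ U] :
    ∃ d : D, ∀ u ∈ U, ∃ p : MvPolynomial (Fin n) ℝ,
      algebraMap _ (Localization D) p =
        algebraMap _ (Localization D) (d : MvPolynomial (Fin n) ℝ) * u := by
  obtain ⟨s, hs⟩ := (Submodule.fg_iff_finiteDimensional U).2 inferInstance
  obtain ⟨d, hd⟩ := IsLocalization.exist_integer_multiples_of_finset D s
  refine ⟨d, fun u hu => ?_⟩
  rw [← hs] at hu
  induction hu using Submodule.span_induction with
  | mem x hx =>
    obtain ⟨p, hp⟩ := hd x hx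
    exact ⟨p, by rw [hp, Algebra.smul_def]⟩
  | zero => exact ⟨0, by simp⟩
  | add x y _ _ hx hy =>
    obtain ⟨p, hp⟩ := hx
    obtain ⟨q, hq⟩ := hy
    exact ⟨p + q, by rw [map_add, hp, hq, mul_add]⟩
  | smul a x _ hx =>
    obtain ⟨p, hp⟩ := hx
    refine ⟨a • p, ?_⟩
    rw [mul_smul_comm, ← hp]
    exact map_smul (IsScalarTower.toAlgHom ℝ (MvPolynomial (Fin n) ℝ) (Localization D)) a p

/-- A preordering `T` of `E = D⁻¹ℝ[X]` is closed in the topology of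
finitely open sets iff `T ∩ ℝ[X]` (the preimage of `T` under the canonical injection)
is closed in the topology of finitely open sets of `ℝ[X]`. -/
theorem preordering_finTop_closed_iff
    {n : ℕ} (D : Submonoid (MvPolynomial (Fin n) ℝ))
    (hD0 : (0 : MvPolynomial (Fin n) ℝ) ∉ D)
    (T : Set (Localization D))
    (hsq : ∀ a : Localization D, a ^ 2 ∈ T)
    (hadd : ∀ a ∈ T, ∀ b ∈ T, a + b ∈ T)
    (hmul : ∀ a ∈ T, ∀ b ∈ T, a * b ∈ T) :
    @IsClosed _ (finTop (Localization D)) T ↔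
      @IsClosed _ (finTop (MvPolynomial (Fin n) ℝ))
        (algebraMap (MvPolynomial (Fin n) ℝ) (Localization D) ⁻¹' T) := by
  set φ : MvPolynomial (Fin n) ℝ →ₗ[ℝ] Localization D :=
    (IsScalarTower.toAlgHom ℝ (MvPolynomial (Fin n) ℝ) (Localization D)).toLinearMap with hφ
  have hφa : ∀ p, φ p = algebraMap _ (Localization D) p := fun p => rfl
  have hinj : Function.Injective φ := IsLocalization.injective (Localization D)
    (le_nonZeroDivisors_of_noZeroDivisors hD0)
  constructor
  · intro hT
    exact isClosed_finTop_iff.2 fun U _ => isClosed_weakTop_preimage (φ.comp U.subtype) hT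
  · intro hT
    refine isClosed_finTop_iff.2 fun U _ => ?_
    obtain ⟨d, hd⟩ := exists_common_denominator D U
    obtain ⟨e, he⟩ := (IsLocalization.map_units (Localization D) d).exists_right_inv
    set δ := algebraMap _ (Localization D) (d : MvPolynomial (Fin n) ℝ) with hδ
    have hrange : ∀ u : U, (LinearMap.mulLeft ℝ (δ ^ 2)).comp U.subtype u ∈ LinearMap.range φ := by
      intro u
      obtain ⟨p, hp⟩ := hd u u.2
      refine ⟨d * p, ?_⟩
      rw [hφa, map_mul, hp, ← hδ]
      simp [pow_two]
    let g : U →ₗ[ℝ] MvPolynomial (Fin n) ℝ :=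
      (LinearEquiv.ofInjective φ hinj).symm.toLinearMap.comp
        (((LinearMap.mulLeft ℝ (δ ^ 2)).comp U.subtype).codRestrict _ hrange)
    have hg : ∀ u : U, φ (g u) = δ ^ 2 * u := fun u =>
      congrArg Subtype.val ((LinearEquiv.ofInjective φ hinj).apply_symm_apply
        (((LinearMap.mulLeft ℝ (δ ^ 2)).comp U.subtype).codRestrict _ hrange u))
    have hgT := isClosed_weakTop_preimage (U := U) (V := MvPolynomial (Fin n) ℝ) g hT
    convert hgT using 1
    ext u
    change (u : Localization D) ∈ T ↔ φ (g u) ∈ T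
    rw [hg]
    refine ⟨fun h => hmul _ (hsq δ) _ h, fun h => ?_⟩
    have hu : (u : Localization D) = e ^ 2 * (δ ^ 2 * u) := by
      rw [← mul_assoc, ← mul_pow, mul_comm e, he, one_pow, one_mul]
    rw [hu]
    exact hmul _ (hsq e) _ h

end
end

section
/- Let K ⊆ ℝⁿ be a semialgebraic set and D ⊆ ℝ[X₁,…,Xₙ]\{0} a multiplicatively closed set with 1 ∈ D. Then there exists d_K ∈ D such that closure(K \ Z(d_K)) ⊆ closure(K \ Z(d)) for every d ∈ D, the closures being taken in the Euclidean topology of ℝⁿ. -/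
/-!
Closures commute with finite unions and `D` is multiplicative, so `K` may be taken basic: a
relatively open subset of a real algebraic set `V = Z(f)`. The claim is local, so it is enough to
find `b ∈ D` with `V \ Z(b) ⊆ closure (V \ Z(d))` for all `d ∈ D`. This goes by Noetherian
induction on the vanishing ideal `I` of `V` (`exists_minimal_algebraic`). If `I` is not prime, `V`
is a union of two smaller algebraic sets, and the product of their two polynomials works. If `I` is
prime and some `d ∈ D` lies in `I`, that `d` works, as `V \ Z(d)` is empty. Otherwise no `d ∈ D`
lies in `I`, and `exists_generic_density` yields one `w ∉ I` such that `V \ Z(w)` lies in the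
closure of `V \ Z(d)` for all `d ∉ I`; the polynomial belonging to `V ∩ Z(w)` then works for `V`.

The density statement replaces the theory of regular points and dimension. With `I` prime, choose a
transcendence basis of `ℝ[X] / I` among the coordinates and a primitive element `a` over it, with
minimal polynomial `q` (`exists_birational_model`). Near a point of `V` where `∂q/∂T` and some
denominators are nonzero, `q (u, ·)` changes sign, so by the intermediate value theorem it has a
zero for every value `u` of the basis coordinates near the given one, and this zero defines a point
of `V` near the given point. Since `d` divides, modulo `I`, a nonzero polynomial `r` in the basis
coordinates, and `r` cannot vanish on an open set, some such point lies outside `Z(d)`.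
-/

open MvPolynomial
noncomputable section

/-- A basic semialgebraic set: `{x | f x = 0 ∧ g₁ x > 0 ∧ ⋯ ∧ g_r x > 0}`. -/
def IsBasicSemialgebraic {n : ℕ} (s : Set (Fin n → ℝ)) : Prop :=
  ∃ (f : MvPolynomial (Fin n) ℝ) (r : ℕ) (g : Fin r → MvPolynomial (Fin n) ℝ),
    s = {x | eval x f = 0 ∧ ∀ i, 0 < eval x (g i)}

/-- A semialgebraic set: a finite union of basic semialgebraic sets. -/
def IsSemialgebraic {n : ℕ} (s : Set (Fin n → ℝ)) : Prop :=
  ∃ (k : ℕ) (c : Fin k → Set (Fin n → ℝ)),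
    (∀ i, IsBasicSemialgebraic (c i)) ∧ s = ⋃ i, c i

/-! ### Algebra: a birational model -/

open Polynomial in
/-- A polynomial over the fraction field becomes integral after multiplication by a nonzero
constant. -/
lemma exists_clear_denominators {P L : Type*} [CommRing P] [IsDomain P] [Field L] [Algebra P L]
    [IsFractionRing P L] (p : L[X]) :
    ∃ b : P, b ≠ 0 ∧ ∃ q : P[X], q.map (algebraMap P L) = Polynomial.C (algebraMap P L b) * p := by
  obtain ⟨b, hb, h⟩ := IsLocalization.integerNormalization_spec (nonZeroDivisors P) p
  refine ⟨b, nonZeroDivisors.ne_zero hb, _, h.trans ?_⟩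
  rw [← Polynomial.smul_eq_C_mul, algebraMap_smul]

attribute [local instance] FractionRing.liftAlgebra in
open Polynomial in
/-- A primitive element theorem without denominators. If the domain `A` is of finite type and
algebraic over its subdomain `P` of characteristic zero, then `Frac A` is generated over `Frac P`
by some `a ∈ A`, and `q` is a multiple of the minimal polynomial of `a` with coefficients in `P`.
Both facts are expressed inside `P` and `A`, at the cost of nonzero factors `s ∈ P`. -/
lemma exists_primitive_integral {P A : Type*} [CommRing P] [IsDomain P] [CharZero P]
    [CommRing A] [IsDomain A] [Algebra P A] [FaithfulSMul P A] [Algebra.IsAlgebraic P A]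
    [Algebra.FiniteType P A] :
    ∃ (a : A) (q : P[X]), aeval a q = 0 ∧ aeval a (derivative q) ≠ 0 ∧
      (∀ G : P[X], aeval a G = 0 → ∃ s : P, s ≠ 0 ∧ ∃ h, Polynomial.C s * G = q * h) ∧
      ∀ x : A, ∃ s : P, s ≠ 0 ∧ ∃ p : P[X], algebraMap P A s * x = aeval a p := by
  let L := FractionRing P
  let F := FractionRing A
  have hAF : Function.Injective (algebraMap A F) := IsFractionRing.injective A F
  have hPL : Function.Injective (algebraMap P L) := IsFractionRing.injective P L
  have hPF : Function.Injective (algebraMap P F) := FaithfulSMul.algebraMap_injective P F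
  have : Algebra.IsAlgebraic P F := (IsFractionRing.isAlgebraic_iff' P A F).1 inferInstance
  have : Algebra.IsAlgebraic L F :=
    (IsFractionRing.comap_isAlgebraic_iff (A := P) (K := L) (C := F)).1 inferInstance
  have : Algebra.EssFiniteType P F := .comp P A F
  have : Algebra.EssFiniteType L F := .of_comp P L F
  have : Module.Finite L F := Algebra.finite_of_essFiniteType_of_isAlgebraic
  have : CharZero L := charZero_of_injective_algebraMap hPL
  obtain ⟨θ, hθ⟩ := Field.exists_primitive_element L F
  obtain ⟨⟨a, ⟨_, r, hr, rfl⟩⟩, hra⟩ :=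
    IsLocalization.surj (Algebra.algebraMapSubmonoid A (nonZeroDivisors P)) θ
  have hr0 : r ≠ 0 := nonZeroDivisors.ne_zero hr
  simp only at hra
  rw [← IsScalarTower.algebraMap_apply P A F] at hra
  have htop : IntermediateField.adjoin L {algebraMap A F a} = ⊤ := by
    rw [eq_top_iff, ← hθ, IntermediateField.adjoin_simple_le_iff]
    have h1 : θ = algebraMap A F a * algebraMap L F (algebraMap P L r)⁻¹ := by
      rw [← hra, map_inv₀, ← IsScalarTower.algebraMap_apply P L F, mul_assoc, mul_inv_cancel₀,
        mul_one]
      exact (map_ne_zero_iff _ hPF).2 hr0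
    rw [h1]
    exact mul_mem (IntermediateField.mem_adjoin_simple_self L _) (algebraMap_mem _ _)
  set α : F := algebraMap A F a with hα
  have hint : IsIntegral L α := Algebra.IsIntegral.isIntegral α
  have key : ∀ p : P[X], algebraMap A F (aeval a p) = aeval α (p.map (algebraMap P L)) := by
    intro p
    rw [Polynomial.aeval_map_algebraMap, hα, Polynomial.aeval_algebraMap_apply]
  obtain ⟨b, hb, q, hq⟩ := exists_clear_denominators (P := P) (minpoly L α)
  have hbL : algebraMap P L b ≠ 0 := (map_ne_zero_iff _ hPL).2 hb
  refine ⟨a, q, ?_, ?_, ?_, ?_⟩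
  · apply hAF
    rw [key, hq]; simp
  · intro h
    have := congrArg (algebraMap A F) h
    rw [key, ← derivative_map, hq] at this
    simp only [derivative_C_mul, map_mul, map_zero, Polynomial.aeval_C, mul_eq_zero] at this
    rcases this with h | h
    · exact hbL ((map_eq_zero_iff _ (algebraMap L F).injective).1 h)
    · exact (Algebra.IsSeparable.isSeparable L α).aeval_derivative_ne_zero (minpoly.aeval L α) h
  · intro G hG
    have h0 : aeval α (G.map (algebraMap P L)) = 0 := by rw [← key, hG, map_zero]
    obtain ⟨h, hh⟩ := minpoly.dvd L α h0
    obtain ⟨c, hc, h', hh'⟩ := exists_clear_denominators (P := P) h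
    refine ⟨b * c, mul_ne_zero hb hc, h', ?_⟩
    apply Polynomial.map_injective _ hPL
    rw [Polynomial.map_mul, Polynomial.map_mul, hq, hh', hh, Polynomial.map_C, map_mul, map_mul]
    ring
  · intro x
    have : algebraMap A F x ∈ Algebra.adjoin L {α} := by
      rw [IntermediateField.adjoin_eq_top_iff] at htop
      rw [htop]; trivial
    rw [Algebra.adjoin_singleton_eq_range_aeval] at this
    obtain ⟨p, hp⟩ := this
    obtain ⟨c, hc, p', hp'⟩ := exists_clear_denominators (P := P) p
    refine ⟨c, hc, p', hAF ?_⟩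
    rw [key, hp', map_mul, map_mul, Polynomial.aeval_C, ← IsScalarTower.algebraMap_apply P L F,
      ← IsScalarTower.algebraMap_apply P A F]
    congr 1
    exact hp.symm

/-- Homogenization: `g (s, s x) = s ^ N f (x)`, where the variable `none` of `g` carries the
homogenizing parameter `s`. The identity holds in every commutative `ℝ`-algebra. -/
lemma exists_homog {σ : Type} (f : MvPolynomial σ ℝ) :
    ∃ (N : ℕ) (g : MvPolynomial (Option σ) ℝ), ∀ (L : Type) [CommRing L] [Algebra ℝ L]
      (x : σ → L) (s : L),
      aeval (fun o : Option σ => o.elim s fun i => s * x i) g = s ^ N * aeval x f := by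
  induction f using MvPolynomial.induction_on with
  | C c => exact ⟨0, C c, fun L _ _ x s => by simp⟩
  | add p q hp hq =>
    obtain ⟨N, g, hg⟩ := hp
    obtain ⟨M, h, hh⟩ := hq
    refine ⟨N + M, g * X none ^ M + h * X none ^ N, fun L _ _ x s => ?_⟩
    simp only [map_add, map_mul, map_pow, aeval_X, hg, hh, Option.elim_none]
    ring
  | mul_X p i hp =>
    obtain ⟨N, g, hg⟩ := hp
    refine ⟨N + 1, g * X (some i), fun L _ _ x s => ?_⟩
    simp only [map_mul, aeval_X, hg, Option.elim_some]
    ring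

lemma exists_ne_zero_of_open {ι : Type} [Finite ι] (p : MvPolynomial ι ℝ) (hp : p ≠ 0)
    (O : Set (ι → ℝ)) (hO : IsOpen O) (hne : O.Nonempty) : ∃ u ∈ O, eval u p ≠ 0 := by
  by_contra! h
  apply hp
  obtain ⟨u, hu⟩ := hne
  have := Fintype.ofFinite ι
  obtain ⟨ε, hε, hb⟩ := Metric.isOpen_iff.1 hO u hu
  refine funext_set (fun i => Metric.ball (u i) ε) (fun i => ?_) fun x hx => ?_
  · rw [Real.ball_eq_Ioo]; exact Set.Ioo_infinite (by linarith)
  · rw [map_zero]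
    refine h x (hb ?_)
    rw [ball_pi _ hε]; exact hx

/-- The irreducible variety of a prime ideal `I` is birational to a hypersurface. The coordinates
`X (c i)`, `i : ι`, form a transcendence basis of `ℝ[X] / I`, the polynomial `a` represents a
primitive element over them, `q` is its minimal polynomial up to a factor, and every coordinate is
the fraction `X j = p j (a) / s` modulo `I`. A polynomial in `T` over `ℝ[ι]` is read in `ℝ[X]` by
`T ↦ a` and `X i ↦ X (c i)`. The last clause says that modulo `I` every nonzero `d` divides a
nonzero polynomial in the transcendence basis. -/
lemma exists_birational_model {n : ℕ} (I : Ideal (MvPolynomial (Fin n) ℝ)) [I.IsPrime] :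
    ∃ (ι : Type) (c : ι → Fin n) (a : MvPolynomial (Fin n) ℝ)
      (q : Polynomial (MvPolynomial ι ℝ)) (s : MvPolynomial ι ℝ)
      (p : Fin n → Polynomial (MvPolynomial ι ℝ)),
      c.Injective ∧ (∀ r : MvPolynomial ι ℝ, r ≠ 0 → rename c r ∉ I) ∧ s ≠ 0 ∧
      q.eval₂ (rename c).toRingHom a ∈ I ∧
      q.derivative.eval₂ (rename c).toRingHom a ∉ I ∧
      (∀ G : Polynomial (MvPolynomial ι ℝ), G.eval₂ (rename c).toRingHom a ∈ I →
        ∃ t : MvPolynomial ι ℝ, t ≠ 0 ∧ ∃ h, Polynomial.C t * G = q * h) ∧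
      (∀ j, rename c s * X j - (p j).eval₂ (rename c).toRingHom a ∈ I) ∧
      (∀ i, p (c i) = Polynomial.C (s * X i)) ∧
      ∀ d ∉ I, ∃ e, ∃ r : MvPolynomial ι ℝ, r ≠ 0 ∧ e * d - rename c r ∈ I := by
  let A := MvPolynomial (Fin n) ℝ ⧸ I
  let mk : MvPolynomial (Fin n) ℝ →ₐ[ℝ] A := Ideal.Quotient.mkₐ ℝ I
  have : IsDomain A := Ideal.Quotient.isDomain I
  have : FaithfulSMul ℝ A :=
    (faithfulSMul_iff_algebraMap_injective _ _).2 (algebraMap ℝ A).injective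
  have hmk : ∀ f, mk f = 0 ↔ f ∈ I := fun f => Ideal.Quotient.eq_zero_iff_mem
  have hsurj : Function.Surjective mk := Ideal.Quotient.mkₐ_surjective ℝ I
  let x : Fin n → A := fun j => mk (X j)
  have hx : Algebra.adjoin ℝ (Set.range x) = ⊤ := by
    have : Set.range x = mk '' Set.range X := by rw [← Set.range_comp]; rfl
    rw [this, ← AlgHom.map_adjoin, MvPolynomial.adjoin_range_X, Algebra.map_top,
      AlgHom.range_eq_top]
    exact hsurj
  have : Algebra.IsAlgebraic (Algebra.adjoin ℝ (Set.range x)) A :=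
    ⟨fun y => isAlgebraic_algebraMap
      (⟨y, hx ▸ Algebra.mem_top⟩ : Algebra.adjoin ℝ (Set.range x))⟩
  obtain ⟨ι, hι, hB⟩ := exists_isTranscendenceBasis_subset (R := ℝ) (Set.range x)
  choose c hc using fun i : ι => hι i.2
  have hcinj : c.Injective := fun i j h => Subtype.ext (by rw [← hc i, ← hc j, h])
  let φ : MvPolynomial ι ℝ →ₐ[ℝ] A := aeval (Subtype.val : ι → A)
  let _ : Algebra (MvPolynomial ι ℝ) A := φ.toRingHom.toAlgebra
  have hmap : ∀ r, algebraMap (MvPolynomial ι ℝ) A r = mk (rename c r) := by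
    intro r
    change φ r = (mk.comp (rename c)) r
    congr 1
    ext i
    simp only [φ, aeval_X, AlgHom.comp_apply, rename_X]
    exact (hc i).symm
  have hinj : Function.Injective (algebraMap (MvPolynomial ι ℝ) A) := hB.1
  have : FaithfulSMul (MvPolynomial ι ℝ) A := (faithfulSMul_iff_algebraMap_injective _ _).2 hinj
  have : IsScalarTower ℝ (MvPolynomial ι ℝ) A := .of_algebraMap_eq fun r => by
    change _ = φ _
    rw [AlgHom.commutes]
  have : Algebra.FiniteType (MvPolynomial ι ℝ) A := .of_restrictScalars_finiteType ℝ _ _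
  have : Algebra.IsAlgebraic (MvPolynomial ι ℝ) A := by
    have := hB.isAlgebraic
    refine Algebra.IsAlgebraic.of_ringHom_of_comp_eq
      (S := Algebra.adjoin ℝ (Set.range (Subtype.val : ι → A))) (B := A)
      hB.1.aevalEquiv (RingHom.id A) hB.1.aevalEquiv.surjective Function.injective_id ?_
    refine RingHom.ext fun r => ?_
    exact (hB.1.algebraMap_aevalEquiv r).symm
  have hΛ : ∀ (G : Polynomial (MvPolynomial ι ℝ)) a,
      mk (G.eval₂ (rename c).toRingHom a) = Polynomial.aeval (mk a) G := by
    intro G a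
    have := Polynomial.hom_eval₂ G (rename c).toRingHom mk.toRingHom a
    refine this.trans ?_
    rw [Polynomial.aeval_def]
    congr 1
    refine RingHom.ext fun r => ?_
    exact (hmap r).symm
  obtain ⟨a', q, hq, hq', hG, hX⟩ :=
    exists_primitive_integral (P := MvPolynomial ι ℝ) (A := A)
  obtain ⟨a, rfl⟩ := hsurj a'
  choose σ hσ π hπ using fun j => hX (x j)
  classical
  let s := ∏ j, σ j
  let p : Fin n → Polynomial (MvPolynomial ι ℝ) := fun j =>
    if h : ∃ i, c i = j then Polynomial.C (s * X h.choose)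
    else Polynomial.C (∏ k ∈ Finset.univ.erase j, σ k) * π j
  refine ⟨ι, c, a, q, s, p, hcinj, ?_, ?_, ?_, ?_, ?_, ?_, ?_, ?_⟩
  · intro r hr h
    rw [← hmk, ← hmap] at h
    exact hr (hinj (h.trans (map_zero _).symm))
  · exact Finset.prod_ne_zero_iff.2 fun j _ => hσ j
  · rw [← hmk, hΛ, hq]
  · rw [← hmk, hΛ]; exact hq'
  · intro G h
    rw [← hmk, hΛ] at h
    exact hG G h
  · intro j
    rw [← hmk, map_sub, hΛ, map_mul, ← hmap, sub_eq_zero]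
    by_cases h : ∃ i, c i = j
    · simp only [p, dif_pos h, Polynomial.aeval_C, map_mul]
      congr 1
      rw [hmap, rename_X, h.choose_spec]
    · simp only [p, dif_neg h, Polynomial.aeval_C, map_mul]
      rw [← hπ j, ← mul_assoc, ← map_mul, mul_comm (∏ k ∈ _, σ k),
        Finset.mul_prod_erase _ _ (Finset.mem_univ j)]
  · intro i
    have h : ∃ i', c i' = c i := ⟨i, rfl⟩
    simp only [p, dif_pos h]
    rw [hcinj h.choose_spec]
  · intro d hd
    rw [← hmk] at hd
    obtain ⟨r, hr, e', he⟩ := (Algebra.IsAlgebraic.isAlgebraic (R := MvPolynomial ι ℝ)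
      (mk d)).exists_nonzero_dvd (mem_nonZeroDivisors_of_ne_zero hd)
    obtain ⟨e, rfl⟩ := hsurj e'
    refine ⟨e, r, hr, ?_⟩
    rw [← hmk, map_sub, ← hmap, he, map_mul, mul_comm, sub_self]

/-! ### Evaluation and sign changes -/

/-- Evaluation of a polynomial in `T` over `ℝ[ι]` at a point `u` and `T = t`. -/
def evalPair {ι : Type} (u : ι → ℝ) (t : ℝ) : Polynomial (MvPolynomial ι ℝ) →ₐ[ℝ] ℝ :=
  { Polynomial.eval₂RingHom (eval u) t with
    commutes' := fun r => by
      simp [Polynomial.algebraMap_apply, MvPolynomial.algebraMap_eq] }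

lemma evalPair_apply {ι : Type} (u : ι → ℝ) (t : ℝ) (G : Polynomial (MvPolynomial ι ℝ)) :
    evalPair u t G = G.eval₂ (eval u) t := rfl

lemma evalPair_C {ι : Type} (u : ι → ℝ) (t : ℝ) (r : MvPolynomial ι ℝ) :
    evalPair u t (Polynomial.C r) = eval u r := by
  rw [evalPair_apply, Polynomial.eval₂_C]

lemma eval_eval₂_rename {ι : Type} {n : ℕ} (c : ι → Fin n) (a : MvPolynomial (Fin n) ℝ)
    (x : Fin n → ℝ) (G : Polynomial (MvPolynomial ι ℝ)) :
    eval x (G.eval₂ (rename c).toRingHom a) = evalPair (x ∘ c) (eval x a) G := by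
  rw [evalPair_apply, Polynomial.hom_eval₂]
  congr 1
  exact RingHom.ext fun r => eval_rename c x r

lemma continuous_evalPair {ι : Type} (G : Polynomial (MvPolynomial ι ℝ)) :
    Continuous fun z : (ι → ℝ) × ℝ => evalPair z.1 z.2 G := by
  simp only [evalPair_apply, Polynomial.eval₂_eq_sum_range]
  exact continuous_finsetSum _ fun i _ =>
    ((MvPolynomial.continuous_eval _).comp continuous_fst).mul (continuous_snd.pow i)

lemma hasDerivAt_evalPair {ι : Type} (u : ι → ℝ) (t : ℝ) (G : Polynomial (MvPolynomial ι ℝ)) :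
    HasDerivAt (fun t => evalPair u t G) (evalPair u t G.derivative) t := by
  have := (G.map (eval u)).hasDerivAt t
  simpa only [evalPair_apply, Polynomial.derivative_map, Polynomial.eval_map] using this

/-- A function changes sign at a zero where its derivative does not vanish. -/
lemma exists_sign_change {g : ℝ → ℝ} {t₀ g' : ℝ} (hg : HasDerivAt g g' t₀) (h₀ : g t₀ = 0)
    (hg' : g' ≠ 0) {T : Set ℝ} (hT : T ∈ nhds t₀) :
    ∃ δ > 0, Set.Icc (t₀ - δ) (t₀ + δ) ⊆ T ∧ g (t₀ - δ) * g (t₀ + δ) < 0 := by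
  have h1 : ∀ᶠ t in nhdsWithin t₀ {t₀}ᶜ, 0 < slope g t₀ t * g' :=
    ((hasDerivAt_iff_tendsto_slope.1 hg).mul_const g').eventually
      (lt_mem_nhds (mul_self_pos.2 hg'))
  rw [eventually_nhdsWithin_iff] at h1
  obtain ⟨ε, hε, hb⟩ := Metric.mem_nhds_iff.1 (Filter.inter_mem hT h1)
  have hmem : ∀ t ∈ Set.Icc (t₀ - ε / 2) (t₀ + ε / 2), t ∈ Metric.ball t₀ ε := by
    intro t ht
    rw [Real.ball_eq_Ioo]
    exact ⟨by linarith [ht.1], by linarith [ht.2]⟩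
  refine ⟨ε / 2, half_pos hε, fun t ht => (hb (hmem t ht)).1, ?_⟩
  have hp := (hb (hmem (t₀ + ε / 2) ⟨by linarith, le_rfl⟩)).2 (by simp [hε.ne'])
  have hm := (hb (hmem (t₀ - ε / 2) ⟨le_rfl, by linarith⟩)).2 (by simp [hε.ne'])
  rw [slope_def_field, h₀, sub_zero, add_sub_cancel_left] at hp
  rw [slope_def_field, h₀, sub_zero, sub_sub_cancel_left] at hm
  have hp' : 0 < g (t₀ + ε / 2) * g' := by
    have := mul_pos hp (half_pos hε)
    have e : g (t₀ + ε / 2) / (ε / 2) * g' * (ε / 2) = g (t₀ + ε / 2) * g' := by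
      field_simp
    rwa [e] at this
  have hm' : g (t₀ - ε / 2) * g' < 0 := by
    have := mul_pos hm (half_pos hε)
    have e : g (t₀ - ε / 2) / (-(ε / 2)) * g' * (ε / 2) = - (g (t₀ - ε / 2) * g') := by
      field_simp
    rw [e] at this
    linarith
  have := mul_neg_of_neg_of_pos hm' hp'
  have h2 : 0 < g' * g' := mul_self_pos.2 hg'
  by_contra! h
  nlinarith [mul_nonneg h h2.le]

/-! ### Density on irreducible sets -/

/-- The ideal of polynomials vanishing on `V`. -/
def vanIdeal {n : ℕ} (V : Set (Fin n → ℝ)) : Ideal (MvPolynomial (Fin n) ℝ) where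
  carrier := {p | ∀ x ∈ V, eval x p = 0}
  add_mem' hp hq x hx := by rw [map_add, hp x hx, hq x hx, add_zero]
  zero_mem' x _ := map_zero _
  smul_mem' r p hp x hx := by rw [smul_eq_mul, map_mul, hp x hx, mul_zero]

/-- On an irreducible real algebraic set `V`, away from the proper subset `V ∩ Z(w)` (which contains
all lower-dimensional parts of `V`), the complement of every `Z(d)` not containing `V` is dense in
the Euclidean topology. The polynomial `w` does not depend on `d`. -/
lemma exists_generic_density {n : ℕ} (f : MvPolynomial (Fin n) ℝ)
    (hI : (vanIdeal (Zset f)).IsPrime) :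
    ∃ w ∉ vanIdeal (Zset f), ∀ d ∉ vanIdeal (Zset f),
      Zset f \ Zset w ⊆ closure (Zset f \ Zset d) := by
  obtain ⟨ι, c, a, q, s, p, hc, hinj, hs, hq, hq', hG, hp, hpc, hd⟩ :=
    exists_birational_model (vanIdeal (Zset f))
  have : Finite ι := Finite.of_injective c hc
  obtain ⟨N, fh, hfh⟩ := exists_homog f
  have hval : ∀ x ∈ Zset f, ∀ j,
      evalPair (x ∘ c) (eval x a) (p j) = eval (x ∘ c) s * x j := by
    intro x hx j
    have := hp j x hx
    rw [map_sub, map_mul, eval_X, eval_eval₂_rename, eval_rename] at this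
    linarith
  -- `G` is `s ^ N * f (p / s)`; it vanishes at the primitive element, so `q` divides it up to a
  -- factor `τ`, and hence zeros of `q` over points with `s τ ≠ 0` give points of `Z(f)`.
  let G : Polynomial (MvPolynomial ι ℝ) :=
    aeval (fun o : Option (Fin n) => o.elim (Polynomial.C s) p) fh
  have hGval : ∀ (u : ι → ℝ) (t : ℝ) (x : Fin n → ℝ),
      (∀ j, evalPair u t (p j) = eval u s * x j) →
      evalPair u t G = eval u s ^ N * eval x f := by
    intro u t x hx
    have h1 : evalPair u t G =
        aeval (fun o : Option (Fin n) => o.elim (eval u s) fun i => eval u s * x i) fh := by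
      simp only [G]
      rw [comp_aeval_apply]
      congr 2
      ext o
      cases o with
      | none => exact evalPair_C u t s
      | some j => exact hx j
    rw [h1, hfh, aeval_eq_eval]
  obtain ⟨τ, hτ, h, hh⟩ := hG G fun x hx => by
    rw [eval_eval₂_rename, hGval _ _ x (hval x hx), show eval x f = 0 from hx, mul_zero]
  refine ⟨rename c s * rename c τ * q.derivative.eval₂ (rename c).toRingHom a,
    ?_, ?_⟩
  · intro hw
    rcases hI.mem_or_mem hw with hw | hw
    · rcases hI.mem_or_mem hw with hw | hw
      · exact hinj s hs hw
      · exact hinj τ hτ hw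
    · exact hq' hw
  rintro d hdI x ⟨hxV, hxw⟩
  simp only [Zset, Set.mem_ofPred_eq, map_mul, mul_eq_zero, not_or, eval_rename,
    eval_eval₂_rename] at hxw
  obtain ⟨⟨hsx, hτx⟩, hqx'⟩ := hxw
  have hqx : evalPair (x ∘ c) (eval x a) q = 0 := by
    rw [← eval_eval₂_rename]; exact hq x hxV
  obtain ⟨e, r, hr, her⟩ := hd d hdI
  rw [mem_closure_iff]
  intro O hO hxO
  -- The inverse of the birational map `x ↦ (x ∘ c, a (x))`.
  let Φ : (ι → ℝ) × ℝ → Fin n → ℝ := fun z j => evalPair z.1 z.2 (p j) / eval z.1 s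
  have hΦx : Φ (x ∘ c, eval x a) = x := by
    funext j
    simp only [Φ]
    rw [hval x hxV j, mul_div_cancel_left₀ _ hsx]
  have hcs : ∀ r : MvPolynomial ι ℝ, Continuous fun z : (ι → ℝ) × ℝ => eval z.1 r :=
    fun r => (MvPolynomial.continuous_eval r).comp continuous_fst
  have hΦc : ContinuousAt Φ (x ∘ c, eval x a) :=
    continuousAt_pi.2 fun j =>
      (continuous_evalPair (p j)).continuousAt.div (hcs s).continuousAt hsx
  have hnhds : {z | Φ z ∈ O ∧ eval z.1 s ≠ 0 ∧ eval z.1 τ ≠ 0} ∈ nhds (x ∘ c, eval x a) := by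
    filter_upwards [hΦc.eventually_mem (hO.mem_nhds (by rwa [hΦx])),
      (hcs s).continuousAt.eventually_ne hsx, (hcs τ).continuousAt.eventually_ne hτx]
      with z h1 h2 h3
    exact ⟨h1, h2, h3⟩
  obtain ⟨U, hU, T, hT, hUT⟩ := mem_nhds_prod_iff.1 hnhds
  obtain ⟨δ, hδ, hIcc, hsign⟩ :=
    exists_sign_change (g := fun t => evalPair (x ∘ c) t q)
      (hasDerivAt_evalPair (x ∘ c) (eval x a) q) hqx hqx' hT
  have hcu : ∀ t, Continuous fun u : ι → ℝ => evalPair u t q := fun t =>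
    Continuous.comp (f := fun u : ι → ℝ => (u, t)) (continuous_evalPair q) (by fun_prop)
  -- The sign change of `q (u, ·)` persists for `u` in an open set, which therefore contains a point
  -- where `r`, the multiple of `d` in the transcendence basis, does not vanish.
  obtain ⟨u, ⟨huU, husign⟩, hru⟩ := exists_ne_zero_of_open r hr
    (interior U ∩ {u | evalPair u (eval x a - δ) q * evalPair u (eval x a + δ) q < 0})
    (isOpen_interior.inter (isOpen_lt ((hcu _).mul (hcu _)) continuous_const))
    ⟨x ∘ c, mem_interior_iff_mem_nhds.2 hU, hsign⟩
  have hct : ContinuousOn (fun t => evalPair u t q)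
      (Set.Icc (eval x a - δ) (eval x a + δ)) :=
    (Continuous.comp (f := fun t : ℝ => (u, t)) (continuous_evalPair q)
      (by fun_prop)).continuousOn
  obtain ⟨t, ht, htq⟩ : ∃ t ∈ Set.Icc (eval x a - δ) (eval x a + δ), evalPair u t q = 0 := by
    have hle : eval x a - δ ≤ eval x a + δ := by linarith
    change evalPair u (eval x a - δ) q * evalPair u (eval x a + δ) q < 0 at husign
    rcases mul_neg_iff.1 husign with ⟨h1, h2⟩ | ⟨h1, h2⟩
    · exact intermediate_value_Icc' hle hct ⟨h2.le, h1.le⟩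
    · exact intermediate_value_Icc hle hct ⟨h1.le, h2.le⟩
  obtain ⟨hΦO, hsu, hτu⟩ := hUT (Set.mk_mem_prod (interior_subset huU) (hIcc ht))
  simp only at hsu hτu
  have hΦV : Φ (u, t) ∈ Zset f := by
    have h1 := congrArg (evalPair u t) hh
    rw [map_mul, map_mul, htq, zero_mul, evalPair_C,
      hGval u t (Φ (u, t)) fun j => (mul_div_cancel₀ _ hsu).symm] at h1
    rw [mul_eq_zero, mul_eq_zero] at h1
    exact (h1.resolve_left hτu).resolve_left (pow_ne_zero N hsu)
  have hΦu : Φ (u, t) ∘ c = u := by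
    funext i
    simp only [Φ, Function.comp]
    rw [hpc, evalPair_C, map_mul, eval_X, mul_div_cancel_left₀ _ hsu]
  have hΦd : eval (Φ (u, t)) d ≠ 0 := by
    intro hd0
    have h1 := her _ hΦV
    rw [map_sub, map_mul, hd0, eval_rename, hΦu, mul_zero, zero_sub, neg_eq_zero] at h1
    exact hru h1
  exact ⟨Φ (u, t), hΦO, hΦV, hΦd⟩

/-! ### Noetherian induction -/

lemma Zset_inter {n : ℕ} (f g : MvPolynomial (Fin n) ℝ) :
    Zset (f ^ 2 + g ^ 2) = Zset f ∩ Zset g := by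
  ext x
  simp only [Zset, Set.mem_ofPred_eq, Set.mem_inter_iff, map_add, map_pow]
  constructor
  · intro h
    constructor <;> nlinarith [sq_nonneg (eval x f), sq_nonneg (eval x g)]
  · rintro ⟨h1, h2⟩
    simp [h1, h2]

lemma vanIdeal_lt {n : ℕ} {f g : MvPolynomial (Fin n) ℝ} (hg : g ∉ vanIdeal (Zset f)) :
    vanIdeal (Zset f) < vanIdeal (Zset (f ^ 2 + g ^ 2)) := by
  rw [Zset_inter]
  refine lt_of_le_of_ne (fun p hp x hx => hp x hx.1) fun h => hg ?_
  rw [h]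
  exact fun x hx => hx.2

/-- The case of a real algebraic set, by Noetherian induction on its vanishing ideal. -/
lemma exists_minimal_algebraic {n : ℕ} (D : Submonoid (MvPolynomial (Fin n) ℝ))
    (I : Ideal (MvPolynomial (Fin n) ℝ)) :
    ∀ f, vanIdeal (Zset f) = I →
      ∃ b ∈ D, ∀ d ∈ D, Zset f \ Zset b ⊆ closure (Zset f \ Zset d) := by
  induction I using WellFoundedGT.induction with
  | ind I ih =>
  rintro f rfl
  by_cases htop : vanIdeal (Zset f) = ⊤
  · refine ⟨1, D.one_mem, fun d _ x hx => ?_⟩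
    have h1 : (1 : MvPolynomial (Fin n) ℝ) ∈ vanIdeal (Zset f) := htop ▸ trivial
    simpa using h1 x hx.1
  by_cases hprime : (vanIdeal (Zset f)).IsPrime
  · by_cases hD : ∃ d ∈ D, d ∈ vanIdeal (Zset f)
    · obtain ⟨b, hb, hbI⟩ := hD
      exact ⟨b, hb, fun d _ x hx => absurd (hbI x hx.1) hx.2⟩
    push Not at hD
    obtain ⟨w, hw, hdense⟩ := exists_generic_density f hprime
    obtain ⟨b, hb, hmin⟩ := ih _ (vanIdeal_lt hw) _ rfl
    refine ⟨b, hb, fun d hd x hx => ?_⟩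
    by_cases hxw : x ∈ Zset w
    · rw [Zset_inter] at hmin
      exact closure_mono (Set.sdiff_subset_sdiff_left Set.inter_subset_left)
        (hmin d hd ⟨⟨hx.1, hxw⟩, hx.2⟩)
    · exact hdense d (hD d hd) ⟨hx.1, hxw⟩
  · obtain ⟨g, hg, h, hh, hgh⟩ : ∃ g ∉ vanIdeal (Zset f), ∃ h ∉ vanIdeal (Zset f),
        g * h ∈ vanIdeal (Zset f) := by
      by_contra! H
      exact hprime ⟨htop, fun {g h} hgh => by
        by_contra! hn
        exact H g hn.1 h hn.2 hgh⟩
    obtain ⟨b₁, hb₁, hmin₁⟩ := ih _ (vanIdeal_lt hg) _ rfl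
    obtain ⟨b₂, hb₂, hmin₂⟩ := ih _ (vanIdeal_lt hh) _ rfl
    rw [Zset_inter] at hmin₁ hmin₂
    refine ⟨b₁ * b₂, D.mul_mem hb₁ hb₂, fun d hd x ⟨hxV, hxb⟩ => ?_⟩
    simp only [Zset, Set.mem_ofPred_eq, map_mul, mul_eq_zero, not_or] at hxb
    have h0 := hgh x hxV
    rw [map_mul, mul_eq_zero] at h0
    rcases h0 with h0 | h0
    · exact closure_mono (Set.sdiff_subset_sdiff_left Set.inter_subset_left)
        (hmin₁ d hd ⟨⟨hxV, h0⟩, hxb.1⟩)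
    · exact closure_mono (Set.sdiff_subset_sdiff_left Set.inter_subset_left)
        (hmin₂ d hd ⟨⟨hxV, h0⟩, hxb.2⟩)

/-- A basic semialgebraic set is relatively open in a real algebraic set, and a relatively open
subset inherits the inclusion of closures. -/
lemma exists_minimal_basic {n : ℕ} (D : Submonoid (MvPolynomial (Fin n) ℝ))
    {K : Set (Fin n → ℝ)} (hK : IsBasicSemialgebraic K) :
    ∃ b ∈ D, ∀ d ∈ D, K \ Zset b ⊆ closure (K \ Zset d) := by
  obtain ⟨f, r, g, rfl⟩ := hK
  obtain ⟨b, hb, hmin⟩ := exists_minimal_algebraic D _ f rfl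
  refine ⟨b, hb, fun d hd x hx => ?_⟩
  have hO : IsOpen {x : Fin n → ℝ | ∀ i, 0 < eval x (g i)} := by
    simp only [Set.ofPred_forall]
    exact isOpen_iInter_of_finite fun i =>
      isOpen_lt continuous_const (MvPolynomial.continuous_eval (g i))
  refine closure_mono ?_ (hO.inter_closure ⟨hx.1.2, hmin d hd ⟨hx.1.1, hx.2⟩⟩)
  rintro y ⟨hy, hyf, hyd⟩
  exact ⟨⟨hyf, hy⟩, hyd⟩

/-- For a semialgebraic set `K` and a multiplicative set `D` there is
`d_K ∈ D` with `closure (K \ Z(d_K)) ⊆ closure (K \ Z(d))` for every `d ∈ D`. -/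
theorem exists_minimal_zero_set
    {n : ℕ} (D : Submonoid (MvPolynomial (Fin n) ℝ))
    (hD0 : (0 : MvPolynomial (Fin n) ℝ) ∉ D)
    (K : Set (Fin n → ℝ)) (hK : IsSemialgebraic K) :
    ∃ dK ∈ D, ∀ d ∈ D, closure (K \ Zset dK) ⊆ closure (K \ Zset d) := by
  obtain ⟨k, c, hc, rfl⟩ := hK
  choose b hb hmin using fun i => exists_minimal_basic D (hc i)
  refine ⟨∏ i, b i, D.prod_mem fun i _ => hb i,
    fun d hd => closure_minimal ?_ isClosed_closure⟩
  rintro x ⟨hx, hxb⟩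
  obtain ⟨i, hi⟩ := Set.mem_iUnion.1 hx
  have hxi : x ∉ Zset (b i) := fun h => hxb <| by
    change eval x (∏ i, b i) = 0
    rw [map_prod]
    exact Finset.prod_eq_zero (Finset.mem_univ i) h
  exact closure_mono (Set.sdiff_subset_sdiff_left (Set.subset_iUnion c i))
    (hmin i d hd ⟨hi, hxi⟩)

end
end
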